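/- arXiv:1811.04188 — 2 statements merged into one kernel-verified Lean document; each statement's English description precedes it below -/
import Mathlib

section
/- Fix a real number x with 1/2 < x < 1, and fix a nonnegative integer m. Define the curve γ : ℝ → ℂ^{m+1} by γ(y) = (ζ(x+iy), ζ'(x+iy), …, ζ^{(m)}(x+iy)). Then the image γ(ℝ) is everywhere dense in ℂ^{m+1}. -/
/-!
Three facts about the strip `1 / 2 < re s < 1` combine.

* Let `Q` be a finite set of primes and `deletedZeta Q` the zeta function without its Euler factors
  at `Q`. By Plancherel's theorem for the Mellin transform, the mean square of `deletedZeta Q - 1`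
  on a vertical line is small when `Q` contains all small primes. The same bound survives weighting
  by the square of a Dirichlet polynomial in the primes of `Q`, and that polynomial can be chosen to
  resonate at those `τ` for which each `p ^ (-iτ)` is near a prescribed point `z p` of the unit
  circle. Hence there is such a `τ` for which `deletedZeta Q (s + iτ)` is also near `1` in mean
  square over a circle in the strip, so that by Cauchy's estimate all its derivatives at the center
  are near those of `1`.
* Let `v p` be the vector of the first derivatives of `s ↦ p ^ (-s)` at `x`. The norms `‖v p‖` are
  square summable, while no nonzero functional is absolutely summable along `v`. In such a situation
  the sums `∑ z p • v p` with unimodular coefficients, over finite intervals of primes arbitrarily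
  far out, come close to every vector. The quadratic terms of the logarithms of the Euler factors
  contribute little there, so the jet at `x` of the twisted Euler product over `Q` can be steered to
  that of any nonvanishing function.
* Multiplying the two jets gives the jet of `s ↦ ζ (s + iτ)` at `x`, and the jets with nonzero
  value are dense.
-/

namespace Voronin

open MeasureTheory Set Filter Topology Asymptotics FourierTransform SchwartzMap

section ZetaMellin

/-- The fractional part cut off to `(1, ∞)`, whose Mellin transform continues `ζ` to the half-plane
`0 < re s`. -/
noncomputable def tailFract : ℝ → ℂ := (Ioi (1 : ℝ)).indicator fun v ↦ ((Int.fract v : ℝ) : ℂ)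

lemma norm_ofReal_fract_le_one (v : ℝ) : ‖((Int.fract v : ℝ) : ℂ)‖ ≤ 1 := by
  rw [Complex.norm_of_nonneg (Int.fract_nonneg v)]
  exact (Int.fract_lt_one v).le

lemma natCast_floor_eq_self_sub_fract {v : ℝ} (hv : 0 ≤ v) :
    (⌊v⌋₊ : ℂ) = v - (Int.fract v : ℝ) := by
  rw [← Complex.ofReal_natCast, natCast_floor_eq_intCast_floor hv, ← Int.self_sub_fract,
    Complex.ofReal_sub]

lemma norm_tailFract_le_one (v : ℝ) : ‖tailFract v‖ ≤ 1 :=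
  (norm_indicator_le_norm_self _ _).trans (norm_ofReal_fract_le_one v)

lemma locallyIntegrable_tailFract : LocallyIntegrable tailFract := by
  have hmeas : Measurable tailFract :=
    (Complex.measurable_ofReal.comp measurable_fract).indicator measurableSet_Ioi
  exact (locallyIntegrable_const (1 : ℝ)).mono hmeas.aestronglyMeasurable
    (.of_forall fun v ↦ by simpa using norm_tailFract_le_one v)

lemma tailFract_isBigO_atTop : tailFract =O[atTop] fun v : ℝ ↦ v ^ (-(0 : ℝ)) :=
  .of_bound 1 (.of_forall fun v ↦ by simpa using norm_tailFract_le_one v)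

lemma tailFract_isBigO_zero (b : ℝ) : tailFract =O[𝓝[>] 0] fun v : ℝ ↦ v ^ (-b) := by
  refine .of_bound 1 ?_
  filter_upwards [nhdsWithin_le_nhds (Iio_mem_nhds one_pos)] with v hv
  simp [tailFract, (show v < 1 from hv).le]

lemma mellinConvergent_tailFract {s : ℂ} (hs : s.re < 0) : MellinConvergent tailFract s :=
  mellinConvergent_of_isBigO_rpow (locallyIntegrable_tailFract.locallyIntegrableOn _)
    tailFract_isBigO_atTop hs (tailFract_isBigO_zero _) (sub_one_lt s.re)

lemma differentiableAt_mellin_tailFract {s : ℂ} (hs : s.re < 0) :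
    DifferentiableAt ℂ (mellin tailFract) s :=
  mellin_differentiableAt_of_isBigO_rpow (locallyIntegrable_tailFract.locallyIntegrableOn _)
    tailFract_isBigO_atTop hs (tailFract_isBigO_zero _) (sub_one_lt s.re)

lemma mellin_tailFract (s : ℂ) :
    mellin tailFract s = ∫ t in Ioi (1 : ℝ), (t : ℂ) ^ (s - 1) * (Int.fract t : ℝ) := by
  have hind (t : ℝ) : (t : ℂ) ^ (s - 1) • tailFract t =
      (Ioi (1 : ℝ)).indicator (fun t : ℝ ↦ (t : ℂ) ^ (s - 1) * (Int.fract t : ℝ)) t := by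
    by_cases ht : t ∈ Ioi (1 : ℝ) <;> simp [tailFract, ht]
  simp_rw [mellin, hind]
  rw [setIntegral_indicator measurableSet_Ioi, inter_eq_right.2 (Ioi_subset_Ioi zero_le_one)]

lemma integrableOn_cpow_mul_fract {s : ℂ} (hs : s.re < 0) :
    IntegrableOn (fun t : ℝ ↦ (t : ℂ) ^ (s - 1) * (Int.fract t : ℝ)) (Ioi 1) :=
  ((mellinConvergent_tailFract hs).mono_set (Ioi_subset_Ioi zero_le_one)).congr_fun
    (fun t ht ↦ by simp [tailFract, mem_Ioi.1 ht]) measurableSet_Ioi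

lemma ne_one_of_one_lt_re {s : ℂ} (hs : 1 < s.re) : s ≠ 1 := by
  rintro rfl
  simp at hs

lemma riemannZeta_eq_mellin_of_one_lt_re {s : ℂ} (hs : 1 < s.re) :
    riemannZeta s = s / (s - 1) - s * mellin tailFract (-s) := by
  have hpole : (1 : ℂ) / (s - 1) = ∫ t in Ioi (1 : ℝ), (t : ℂ) ^ (-s) := by
    rw [integral_Ioi_cpow_of_lt (by simpa using hs) one_pos, Complex.ofReal_one, Complex.one_cpow,
      show -s + 1 = -(s - 1) by ring, neg_div_neg_eq]
  rw [← LSeries_one_eq_riemannZeta hs, LSeries_eq_mul_integral' 1 zero_le_one hs,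
    mellin_tailFract, div_eq_mul_one_div, ← mul_sub, hpole,
    ← integral_sub (integrableOn_Ioi_cpow_of_lt (by simpa using hs) one_pos)
      (integrableOn_cpow_mul_fract (by rw [Complex.neg_re]; linarith))]
  · congr 1
    refine setIntegral_congr_fun measurableSet_Ioi fun t ht ↦ ?_
    have ht0 : 0 < t := one_pos.trans ht
    have htc : (t : ℂ) ≠ 0 := by exact_mod_cast ht0.ne'
    have hpow : (t : ℂ) ^ (-s) = t ^ (-s - 1) * t := by
      rw [Complex.cpow_sub _ _ htc, Complex.cpow_one, div_mul_cancel₀ _ htc]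
    simp only [Pi.one_apply, Finset.sum_const, Nat.card_Icc, nsmul_eq_mul, mul_one,
      add_tsub_cancel_right, hpow,
      natCast_floor_eq_self_sub_fract ht0.le, neg_add']
    ring
  · simpa using isBigO_refl (fun n : ℕ ↦ (n : ℝ)) atTop

lemma riemannZeta_eq_mellin {s : ℂ} (hs : 0 < s.re) (h1 : s ≠ 1) :
    riemannZeta s = s / (s - 1) - s * mellin tailFract (-s) := by
  have hU : IsOpen {s : ℂ | 0 < s.re} := isOpen_lt continuous_const Complex.continuous_re
  have hentire {z : ℂ} (hz : z ≠ 1) : riemannZeta₁ z = (z - 1) * riemannZeta z := by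
    rw [riemannZeta_eq_inv_sub_mul hz, mul_inv_cancel_left₀ (sub_ne_zero.2 hz)]
  have hmellin : AnalyticOnNhd ℂ (fun s ↦ s - (s - 1) * (s * mellin tailFract (-s)))
      {s : ℂ | 0 < s.re} := by
    refine DifferentiableOn.analyticOnNhd (fun z hz ↦ DifferentiableAt.differentiableWithinAt ?_) hU
    have : DifferentiableAt ℂ (fun s ↦ mellin tailFract (-s)) z :=
      (differentiableAt_mellin_tailFract (by simpa using hz)).comp z differentiableAt_id.neg
    fun_prop
  have heq : riemannZeta₁ s = s - (s - 1) * (s * mellin tailFract (-s)) := by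
    refine differentiable_riemannZeta₁.differentiableOn.analyticOnNhd hU
      |>.eqOn_of_preconnected_of_eventuallyEq hmellin (convex_halfSpace_re_gt 0).isPreconnected
        (z₀ := 2) (by simp) ?_ hs
    have hmem : {s : ℂ | 1 < s.re} ∈ 𝓝 (2 : ℂ) :=
      (isOpen_lt continuous_const Complex.continuous_re).mem_nhds (by simp)
    filter_upwards [hmem] with z hz
    have hz1 := ne_one_of_one_lt_re hz
    have := sub_ne_zero.2 hz1
    rw [hentire hz1, riemannZeta_eq_mellin_of_one_lt_re hz]
    field_simp
  have hsub := sub_ne_zero.2 h1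
  refine mul_left_cancel₀ hsub ?_
  rw [← hentire h1, heq]
  field_simp

lemma hasMellin_congr_ae {E : Type*} [NormedAddCommGroup E] [NormedSpace ℂ E] {f g : ℝ → E} {s : ℂ}
    {m : E} (hf : HasMellin f s m) (hfg : ∀ᵐ t, 0 < t → f t = g t) : HasMellin g s m := by
  have hae : (fun t : ℝ ↦ (t : ℂ) ^ (s - 1) • f t) =ᵐ[volume.restrict (Ioi 0)]
      fun t ↦ (t : ℂ) ^ (s - 1) • g t := by
    filter_upwards [ae_restrict_mem measurableSet_Ioi, ae_restrict_of_ae hfg] with t ht hfgt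
    rw [hfgt ht]
  exact ⟨Integrable.congr hf.1 hae, (integral_congr_ae hae).symm.trans hf.2⟩

lemma hasMellin_floor_sub_self {s : ℂ} (hs0 : 0 < s.re) (hs1 : s.re < 1) :
    HasMellin (fun t ↦ (⌊t⌋₊ : ℂ) - t) (-s) (riemannZeta s / s) := by
  have h1 : s ≠ 1 := by rintro rfl; simp at hs1
  have h0 : s ≠ 0 := by rintro rfl; simp at hs0
  have hpow := hasMellin_cpow_Ioc 1 (s := -s) (by simp; linarith)
  have htail : MellinConvergent tailFract (-s) := mellinConvergent_tailFract (by simpa using hs0)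
  have hsum := hasMellin_const_smul (hasMellin_add htail hpow.1).1 (-1 : ℂ)
  have hvalue : riemannZeta s / s = -1 • mellin (fun t ↦ tailFract t +
      (Ioc 0 1).indicator (fun t : ℝ ↦ (t : ℂ) ^ (1 : ℂ)) t) (-s) := by
    have := sub_ne_zero.2 h1
    rw [(hasMellin_add htail hpow.1).2, hpow.2, riemannZeta_eq_mellin hs0 h1,
      show -s + 1 = -(s - 1) by ring, neg_one_smul]
    field_simp
    ring
  rw [hvalue]
  refine hasMellin_congr_ae (by simpa using hsum) ?_
  filter_upwards [compl_mem_ae_iff.2 (measure_singleton (1 : ℝ))] with t ht1 ht0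
  rcases lt_or_gt_of_ne ht1 with h | h
  · simp [tailFract, h.le, ht0, Nat.floor_eq_zero.2 h]
  · simp [tailFract, h.not_ge, show 1 < t from h, natCast_floor_eq_self_sub_fract ht0.le]

end ZetaMellin

section Plancherel

variable {E F : Type*} [NormedAddCommGroup E] [InnerProductSpace ℝ E] [FiniteDimensional ℝ E]
  [MeasurableSpace E] [BorelSpace E] [NormedAddCommGroup F] [InnerProductSpace ℂ F]
  {f : E → F}

lemma continuous_fourier_of_integrable (hf : Integrable f) : Continuous (𝓕 f) :=
  VectorFourier.fourierIntegral_continuous Real.continuous_fourierChar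
    (by exact continuous_inner) hf

variable [CompleteSpace F]

lemma integral_fourier_schwartz_smul_eq (hf : Integrable f) (φ : 𝓢(E, ℂ)) :
    ∫ x, (𝓕 φ) x • f x = ∫ x, φ x • 𝓕 f x := by
  simpa [SchwartzMap.fourier_coe] using!
    VectorFourier.integral_fourierIntegral_smul_eq_flip (L := innerₗ E)
      Real.continuous_fourierChar (by exact continuous_inner) φ.integrable hf

lemma fourier_toLp_ae_eq (hf : Integrable f) (hf2 : MemLp f 2) :
    (𝓕 (hf2.toLp f) : Lp F 2 (volume : Measure E)) =ᵐ[volume] 𝓕 f := by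
  have htest (φ : 𝓢(E, ℂ)) :
      ∫ x, φ x • (𝓕 (hf2.toLp f) : Lp F 2 (volume : Measure E)) x = ∫ x, φ x • 𝓕 f x := by
    rw [← Lp.toTemperedDistribution_apply, ← Lp.fourier_toTemperedDistribution_eq,
      TemperedDistribution.fourier_apply, Lp.toTemperedDistribution_apply,
      ← integral_fourier_schwartz_smul_eq hf]
    refine integral_congr_ae ?_
    filter_upwards [hf2.coeFn_toLp] with x hx
    rw [hx]
  refine ae_eq_of_integral_contDiff_smul_eq
    ((Lp.memLp _).locallyIntegrable one_le_two)
    (continuous_fourier_of_integrable hf).locallyIntegrable fun g hg hgc ↦ ?_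
  have hgc' : HasCompactSupport (Complex.ofRealCLM ∘ g) := hgc.comp_left rfl
  simpa using! htest (hgc'.toSchwartzMap (Complex.ofRealCLM.contDiff.comp hg))

lemma memLp_fourier (hf : Integrable f) (hf2 : MemLp f 2) : MemLp (𝓕 f) 2 :=
  (Lp.memLp _).ae_eq (fourier_toLp_ae_eq hf hf2)

lemma eLpNorm_fourier (hf : Integrable f) (hf2 : MemLp f 2) :
    eLpNorm (𝓕 f) 2 volume = eLpNorm f 2 volume := by
  rw [← eLpNorm_congr_ae (fourier_toLp_ae_eq hf hf2), ← Lp.enorm_def, ← Lp.enorm_toLp hf2]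
  exact enorm_eq_iff_norm_eq.2 (Lp.norm_fourier_eq _)

theorem integral_norm_sq_fourier (hf : Integrable f) (hf2 : MemLp f 2) :
    ∫ ξ, ‖𝓕 f ξ‖ ^ 2 = ∫ x, ‖f x‖ ^ 2 := by
  have h := eLpNorm_fourier hf hf2
  rw [(memLp_fourier hf hf2).eLpNorm_eq_integral_rpow_norm two_ne_zero ENNReal.ofNat_ne_top,
    hf2.eLpNorm_eq_integral_rpow_norm two_ne_zero ENNReal.ofNat_ne_top,
    ENNReal.ofReal_eq_ofReal_iff (by positivity) (by positivity)] at h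
  rw [Real.rpow_left_inj (by positivity) (by positivity) (by norm_num)] at h
  simpa using h

end Plancherel

section ExpSubstitution

variable {F : Type*} [NormedAddCommGroup F] [NormedSpace ℝ F]

lemma image_exp_neg_univ : (fun u : ℝ ↦ Real.exp (-u)) '' univ = Ioi 0 := by
  rw [image_univ]
  exact (neg_surjective.range_comp Real.exp).trans Real.range_exp

lemma integrableOn_Ioi_iff_exp_neg {g : ℝ → F} :
    IntegrableOn g (Ioi 0) ↔ Integrable fun u : ℝ ↦ Real.exp (-u) • g (Real.exp (-u)) := by
  rw [← image_exp_neg_univ, integrableOn_image_iff_integrableOn_abs_deriv_smul MeasurableSet.univ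
    (fun u _ ↦ (hasDerivAt_neg u).exp.hasDerivWithinAt)
    (Real.exp_injective.comp neg_injective).injOn, integrableOn_univ]
  simp

lemma setIntegral_Ioi_eq_exp_neg (g : ℝ → F) :
    ∫ t in Ioi 0, g t = ∫ u : ℝ, Real.exp (-u) • g (Real.exp (-u)) := by
  rw [← image_exp_neg_univ, integral_image_eq_integral_abs_deriv_smul MeasurableSet.univ
    (fun u _ ↦ (hasDerivAt_neg u).exp.hasDerivWithinAt)
    (Real.exp_injective.comp neg_injective).injOn, setIntegral_univ]
  simp

end ExpSubstitution

section MellinPlancherel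

variable {F : Type*} [NormedAddCommGroup F] [InnerProductSpace ℂ F] {f : ℝ → F} {σ : ℝ}

/-- The function on `ℝ` whose Fourier transform is the Mellin transform of `f` on the line
`re s = σ`, see `mellin_eq_fourier`. -/
noncomputable def expPullback (f : ℝ → F) (σ u : ℝ) : F :=
  Real.exp (-σ * u) • f (Real.exp (-u))

lemma integrable_expPullback (hf : MellinConvergent f σ) : Integrable (expPullback f σ) := by
  refine (integrableOn_Ioi_iff_exp_neg.1 hf).congr (.of_forall fun u ↦ ?_)
  have hpow : (Real.exp (-u) : ℂ) ^ ((σ : ℂ) - 1) = (Real.exp (-u * (σ - 1)) : ℝ) := by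
    rw [Real.exp_mul, Complex.ofReal_cpow (Real.exp_pos _).le]
    push_cast
    rfl
  simp only [expPullback, hpow, Complex.coe_smul, smul_smul, ← Real.exp_add]
  ring_nf

lemma norm_sq_expPullback (u : ℝ) :
    ‖expPullback f σ u‖ ^ 2 =
      Real.exp (-u) • (‖f (Real.exp (-u))‖ ^ 2 * Real.exp (-u) ^ (2 * σ - 1)) := by
  have hexp : Real.exp (-σ * u) ^ 2 = Real.exp (-u) * Real.exp (-u) ^ (2 * σ - 1) := by
    rw [← Real.exp_nat_mul, ← Real.exp_mul, ← Real.exp_add]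
    push_cast
    ring_nf
  rw [expPullback, norm_smul, Real.norm_of_nonneg (Real.exp_pos _).le, mul_pow, hexp, smul_eq_mul]
  ring

lemma memLp_two_expPullback (hf : MellinConvergent f σ)
    (hf2 : IntegrableOn (fun t ↦ ‖f t‖ ^ 2 * t ^ (2 * σ - 1)) (Ioi 0)) :
    MemLp (expPullback f σ) 2 := by
  rw [memLp_two_iff_integrable_sq_norm (integrable_expPullback hf).aestronglyMeasurable]
  simpa only [norm_sq_expPullback] using integrableOn_Ioi_iff_exp_neg.1 hf2

lemma mellin_vertical_eq_fourier (f : ℝ → F) (σ τ : ℝ) :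
    mellin f (σ + τ * Complex.I) = 𝓕 (expPullback f σ) ((2 * Real.pi)⁻¹ * τ) := by
  change _ = 𝓕 (fun u ↦ Real.exp (-σ * u) • f (Real.exp (-u))) _
  simp [mellin_eq_fourier, div_eq_inv_mul]

variable [CompleteSpace F]

lemma integrable_norm_sq_mellin (hf : MellinConvergent f σ)
    (hf2 : IntegrableOn (fun t ↦ ‖f t‖ ^ 2 * t ^ (2 * σ - 1)) (Ioi 0)) :
    Integrable fun τ : ℝ ↦ ‖mellin f (σ + τ * Complex.I)‖ ^ 2 := by
  have hfourier := memLp_fourier (integrable_expPullback hf) (memLp_two_expPullback hf hf2)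
  simp only [mellin_vertical_eq_fourier]
  exact ((memLp_two_iff_integrable_sq_norm hfourier.1).1 hfourier).comp_mul_left'
    (by positivity : (2 * Real.pi)⁻¹ ≠ 0)

theorem integral_norm_sq_mellin (hf : MellinConvergent f σ)
    (hf2 : IntegrableOn (fun t ↦ ‖f t‖ ^ 2 * t ^ (2 * σ - 1)) (Ioi 0)) :
    ∫ τ : ℝ, ‖mellin f (σ + τ * Complex.I)‖ ^ 2 =
      2 * Real.pi * ∫ t in Ioi 0, ‖f t‖ ^ 2 * t ^ (2 * σ - 1) := by
  simp only [mellin_vertical_eq_fourier]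
  rw [Measure.integral_comp_mul_left (fun ξ ↦ ‖𝓕 (expPullback f σ) ξ‖ ^ 2), inv_inv,
    abs_of_pos Real.two_pi_pos, smul_eq_mul,
    integral_norm_sq_fourier (integrable_expPullback hf) (memLp_two_expPullback hf hf2),
    setIntegral_Ioi_eq_exp_neg]
  simp only [norm_sq_expPullback]

end MellinPlancherel

section Remainder

/-- The summatory function `∑ n ≤ v, c n` of a sequence `c`, with `n` starting at `1`. -/
noncomputable def summatory (c : ℕ → ℂ) (v : ℝ) : ℂ := ∑ n ∈ Finset.Icc 1 ⌊v⌋₊, c n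

/-- The error in approximating the summatory function of `c` by `ρ * v`. -/
noncomputable def remainder (c : ℕ → ℂ) (ρ : ℂ) (v : ℝ) : ℂ := summatory c v - ρ * v

/-- The Dirichlet series `∑ c n * n ^ (-s)` has the analytic continuation `G` to the critical strip
`0 < re s < 1`, with at most a simple pole at `1`, of residue `ρ`. This is encoded by the summatory
function of `c` having a remainder bounded by `L` (kept explicit, as uniformity in `c` matters)
and by `s * ∫ (∑ n ≤ v, c n - ρ * v) * v ^ (-s - 1) = G s`, which is partial summation. -/
structure HasMellinRemainder (c : ℕ → ℂ) (ρ : ℂ) (L : ℝ) (G : ℂ → ℂ) : Prop where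
  norm_remainder_le : ∀ v : ℝ, 0 < v → ‖remainder c ρ v‖ ≤ L
  hasMellin : ∀ s : ℂ, 0 < s.re → s.re < 1 → HasMellin (remainder c ρ) (-s) (G s / s)

lemma measurable_summatory (c : ℕ → ℂ) : Measurable (summatory c) :=
  (measurable_from_nat (f := fun k ↦ ∑ n ∈ Finset.Icc 1 k, c n)).comp Nat.measurable_floor

lemma measurable_remainder (c : ℕ → ℂ) (ρ : ℂ) : Measurable (remainder c ρ) :=
  (measurable_summatory c).sub (Complex.measurable_ofReal.const_mul _)

/-- Spaces the terms of `c` by the factor `d`, which multiplies the Dirichlet series of `c` by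
`d ^ (-s)`. -/
def dilate (d : ℕ) (c : ℕ → ℂ) (n : ℕ) : ℂ := if d ∣ n then c (n / d) else 0

lemma dilate_mul {d : ℕ} (hd : 0 < d) (c : ℕ → ℂ) (k : ℕ) : dilate d c (d * k) = c k := by
  simp [dilate, Nat.mul_div_cancel_left k hd]

lemma sum_Icc_filter_dvd {M : Type*} [AddCommMonoid M] {d : ℕ} (hd : 0 < d) (N : ℕ) (f : ℕ → M) :
    ∑ n ∈ Finset.Icc 1 N with d ∣ n, f n = ∑ k ∈ Finset.Icc 1 (N / d), f (d * k) := by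
  refine Finset.sum_nbij' (· / d) (d * ·) (fun n hn ↦ ?_) (fun k hk ↦ ?_) (fun n hn ↦ ?_)
    (fun k _ ↦ Nat.mul_div_cancel_left k hd) (fun n hn ↦ ?_)
  · rw [Finset.mem_filter, Finset.mem_Icc] at hn
    exact Finset.mem_Icc.2
      ⟨Nat.div_pos (Nat.le_of_dvd hn.1.1 hn.2) hd, Nat.div_le_div_right hn.1.2⟩
  · rw [Finset.mem_Icc] at hk
    rw [Finset.mem_filter, Finset.mem_Icc]
    exact ⟨⟨Nat.mul_pos hd hk.1, (Nat.mul_le_mul_left d hk.2).trans (Nat.mul_div_le _ _)⟩,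
      dvd_mul_right _ _⟩
  · exact Nat.mul_div_cancel' (Finset.mem_filter.1 hn).2
  · rw [Nat.mul_div_cancel' (Finset.mem_filter.1 hn).2]

lemma summatory_dilate {d : ℕ} (hd : 0 < d) (c : ℕ → ℂ) (v : ℝ) :
    summatory (dilate d c) v = summatory c (v / d) := by
  simp only [summatory, dilate, Nat.floor_div_natCast, ← Finset.sum_filter,
    sum_Icc_filter_dvd hd, Nat.mul_div_cancel_left _ hd]

lemma remainder_dilate {d : ℕ} (hd : 0 < d) (c : ℕ → ℂ) (ρ : ℂ) (v : ℝ) :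
    remainder (dilate d c) (ρ / d) v = remainder c ρ ((d : ℝ)⁻¹ * v) := by
  simp only [remainder, summatory_dilate hd, div_eq_inv_mul, Complex.ofReal_mul, Complex.ofReal_inv,
    Complex.ofReal_natCast]
  ring

namespace HasMellinRemainder

variable {c c' : ℕ → ℂ} {ρ ρ' : ℂ} {L L' : ℝ} {G G' : ℂ → ℂ}

lemma nonneg (h : HasMellinRemainder c ρ L G) : 0 ≤ L :=
  (norm_nonneg _).trans (h.norm_remainder_le 1 one_pos)

lemma norm_residue_le (h : HasMellinRemainder c ρ L G) : ‖ρ‖ ≤ L := by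
  have hlim : Tendsto (fun v : ℝ ↦ ‖ρ‖ * v) (𝓝[<] 1) (𝓝 (‖ρ‖ * 1)) :=
    ((continuous_const_mul ‖ρ‖).tendsto 1).mono_left nhdsWithin_le_nhds
  rw [← mul_one ‖ρ‖]
  refine le_of_tendsto hlim ?_
  filter_upwards [Ioo_mem_nhdsLT one_pos] with v hv
  simpa [remainder, summatory, Nat.floor_eq_zero.2 hv.2, abs_of_pos hv.1]
    using h.norm_remainder_le v hv.1

lemma mono (h : HasMellinRemainder c ρ L G) (hL : L ≤ L') : HasMellinRemainder c ρ L' G :=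
  ⟨fun v hv ↦ (h.norm_remainder_le v hv).trans hL, h.hasMellin⟩

lemma congr (h : HasMellinRemainder c ρ L G) (hc : ∀ n, c n = c' n) (hG : ∀ s, G s = G' s) :
    HasMellinRemainder c' ρ L G' :=
  funext hc ▸ funext hG ▸ h

lemma zeta : HasMellinRemainder (fun _ ↦ 1) 1 1 riemannZeta := by
  have hrem (v : ℝ) : remainder (fun _ ↦ 1) 1 v = ⌊v⌋₊ - v := by simp [remainder, summatory]
  constructor
  · intro v hv
    rw [hrem, natCast_floor_eq_self_sub_fract hv.le, sub_sub_cancel_left, norm_neg]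
    exact norm_ofReal_fract_le_one v
  · intro s h0 h1
    exact funext hrem ▸ hasMellin_floor_sub_self h0 h1

lemma one : HasMellinRemainder (Pi.single 1 1) 0 1 fun _ ↦ 1 := by
  have hrem (v : ℝ) : remainder (Pi.single 1 1) 0 v = if 1 ≤ v then 1 else 0 := by
    simp [remainder, summatory, Pi.single_apply, Nat.one_le_floor_iff]
  constructor
  · intro v _
    rw [hrem]
    split_ifs <;> simp
  · intro s h0 _
    have hmellin := hasMellin_one_Ioc h0
    have hconv := (MellinConvergent.comp_rpow (f := (Ioc (0 : ℝ) 1).indicator fun _ ↦ (1 : ℂ))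
      (s := -s) (a := -1) (by norm_num)).2 (by simpa using hmellin.1)
    refine hasMellin_congr_ae (f := fun t ↦ (Ioc (0 : ℝ) 1).indicator (fun _ ↦ (1 : ℂ)) t⁻¹)
      ⟨by simpa [Real.rpow_neg_one] using hconv, ?_⟩ (.of_forall fun t ht ↦ ?_)
    · rw [mellin_comp_inv, neg_neg, hmellin.2]
    · simp [hrem, indicator_apply, ht, inv_le_one_iff₀, ht.not_ge]

lemma dilate (h : HasMellinRemainder c ρ L G) {d : ℕ} (hd : 0 < d) :
    HasMellinRemainder (dilate d c) (ρ / d) L fun s ↦ (d : ℂ) ^ (-s) * G s := by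
  have hd' : (0 : ℝ) < (d : ℝ)⁻¹ := by positivity
  constructor
  · intro v hv
    rw [remainder_dilate hd]
    exact h.norm_remainder_le _ (mul_pos hd' hv)
  · intro s h0 h1
    rw [funext (remainder_dilate hd c ρ)]
    refine ⟨(MellinConvergent.comp_mul_left hd').2 (h.hasMellin s h0 h1).1, ?_⟩
    rw [mellin_comp_mul_left _ _ hd', (h.hasMellin s h0 h1).2, neg_neg, Complex.ofReal_inv,
      Complex.ofReal_natCast, Complex.inv_cpow _ _ (by simp [Real.pi_pos.ne]), ← Complex.cpow_neg,
      smul_eq_mul, mul_div_assoc]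

lemma add (h : HasMellinRemainder c ρ L G) (h' : HasMellinRemainder c' ρ' L' G') :
    HasMellinRemainder (fun n ↦ c n + c' n) (ρ + ρ') (L + L') fun s ↦ G s + G' s := by
  have hrem (v : ℝ) :
      remainder (fun n ↦ c n + c' n) (ρ + ρ') v = remainder c ρ v + remainder c' ρ' v := by
    simp only [remainder, summatory, Finset.sum_add_distrib]
    ring
  constructor
  · intro v hv
    rw [hrem]
    exact norm_add_le_of_le (h.norm_remainder_le v hv) (h'.norm_remainder_le v hv)
  · intro s h0 h1
    rw [funext hrem, add_div, ← (h.hasMellin s h0 h1).2, ← (h'.hasMellin s h0 h1).2]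
    exact hasMellin_add (h.hasMellin s h0 h1).1 (h'.hasMellin s h0 h1).1

lemma const_mul (h : HasMellinRemainder c ρ L G) (a : ℂ) :
    HasMellinRemainder (fun n ↦ a * c n) (a * ρ) (‖a‖ * L) fun s ↦ a * G s := by
  have hrem (v : ℝ) : remainder (fun n ↦ a * c n) (a * ρ) v = a • remainder c ρ v := by
    simp only [remainder, summatory, ← Finset.mul_sum, smul_eq_mul]
    ring
  constructor
  · intro v hv
    rw [hrem, norm_smul]
    exact mul_le_mul_of_nonneg_left (h.norm_remainder_le v hv) (norm_nonneg a)
  · intro s h0 h1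
    rw [funext hrem, mul_div_assoc, ← smul_eq_mul, ← (h.hasMellin s h0 h1).2]
    exact hasMellin_const_smul (h.hasMellin s h0 h1).1 a

lemma zero : HasMellinRemainder (fun _ ↦ 0) 0 0 fun _ ↦ 0 := by
  simpa using one.const_mul 0

lemma sum {ι : Type*} (F : Finset ι) {c : ι → ℕ → ℂ} {ρ : ι → ℂ} {L : ι → ℝ} {G : ι → ℂ → ℂ}
    (h : ∀ i ∈ F, HasMellinRemainder (c i) (ρ i) (L i) (G i)) :
    HasMellinRemainder (fun n ↦ ∑ i ∈ F, c i n) (∑ i ∈ F, ρ i) (∑ i ∈ F, L i)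
      fun s ↦ ∑ i ∈ F, G i s := by
  classical
  induction F using Finset.induction_on with
  | empty => simpa using zero
  | insert i F hi ih =>
    simp only [Finset.sum_insert hi]
    exact (h i (F.mem_insert_self i)).add (ih fun j hj ↦ h j (Finset.mem_insert_of_mem hj))

end HasMellinRemainder

end Remainder

section MeanSquare

/-- The multiplicative difference `f (a * t) - f t`. -/
def mulDiff (f : ℝ → ℂ) (a t : ℝ) : ℂ := f (a * t) - f t

lemma hasMellin_mulDiff {f : ℝ → ℂ} {s m : ℂ} {a : ℝ} (ha : 0 < a) (hf : HasMellin f s m) :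
    HasMellin (mulDiff f a) s (((a : ℂ) ^ (-s) - 1) * m) := by
  have hdiff := hasMellin_sub ((MellinConvergent.comp_mul_left ha).2 hf.1) hf.1
  rwa [mellin_comp_mul_left _ _ ha, hf.2, smul_eq_mul, ← sub_one_mul] at hdiff

lemma measurable_mulDiff {f : ℝ → ℂ} (hf : Measurable f) (a : ℝ) : Measurable (mulDiff f a) :=
  (hf.comp (measurable_const_mul a)).sub hf

lemma mulDiff_summatory_eq_zero_or (c : ℕ → ℂ) {δ t : ℝ} (hδ : 0 ≤ δ) (ht : 0 ≤ t)
    (hδt : δ * t ≤ 1) : mulDiff (summatory c) (1 + δ) t = 0 ∨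
      ∃ n : ℕ, 0 < n ∧ t ∈ Ico ((n : ℝ) / (1 + δ)) n ∧ mulDiff (summatory c) (1 + δ) t = c n := by
  have hle : ⌊t⌋₊ ≤ ⌊(1 + δ) * t⌋₊ := Nat.floor_mono (by nlinarith)
  have hle' : ⌊(1 + δ) * t⌋₊ ≤ ⌊t⌋₊ + 1 := by
    rw [← Nat.floor_add_one ht]
    exact Nat.floor_mono (by linarith)
  rcases hle.eq_or_lt with heq | hlt
  · simp [mulDiff, summatory, heq]
  · have heq : ⌊(1 + δ) * t⌋₊ = ⌊t⌋₊ + 1 := by lia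
    refine .inr ⟨⌊t⌋₊ + 1, by lia, ⟨?_, by exact_mod_cast Nat.lt_floor_add_one t⟩, ?_⟩
    · rw [div_le_iff₀' (by linarith), ← heq]
      exact Nat.floor_le (by positivity)
    · rw [mulDiff, summatory, summatory, heq, Finset.sum_Icc_succ_top (by lia)]
      ring

lemma rpow_le_two_mul_rpow {δ t x σ : ℝ} (hδ : 0 ≤ δ) (hδ' : δ ≤ 1 / 4) (hx : 0 < x) (hσ : 0 ≤ σ)
    (hσ' : σ ≤ 1) (ht : x / (1 + δ) ≤ t) : t ^ (-2 * σ - 1) ≤ 2 * x ^ (-2 * σ - 1) := by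
  have hpow : (1 + δ) ^ (2 * σ + 1) ≤ 2 := calc
    (1 + δ) ^ (2 * σ + 1) ≤ (1 + δ) ^ (3 : ℝ) :=
      Real.rpow_le_rpow_of_exponent_le (by linarith) (by linarith)
    _ ≤ (5 / 4) ^ (3 : ℝ) := by gcongr; linarith
    _ ≤ 2 := by norm_num
  calc t ^ (-2 * σ - 1) ≤ (x / (1 + δ)) ^ (-2 * σ - 1) :=
      Real.rpow_le_rpow_of_nonpos (by positivity) ht (by linarith)
    _ = (1 + δ) ^ (2 * σ + 1) * x ^ (-2 * σ - 1) := by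
      rw [Real.div_rpow hx.le (by positivity), div_eq_inv_mul, ← Real.rpow_neg (by positivity)]
      ring_nf
    _ ≤ 2 * x ^ (-2 * σ - 1) := by gcongr

/-- Majorant of the mean square of `mulDiff (summatory c) (1 + δ)`: the term `c n` of the sum
contributes to the difference at `t` precisely when `t < n ≤ (1 + δ) * t`. -/
noncomputable def shortIntervalMajorant (c : ℕ → ℂ) (δ σ : ℝ) (N : ℕ) (t : ℝ) : ℝ :=
  ∑ n ∈ Finset.Icc 1 N, (Ico ((n : ℝ) / (1 + δ)) n).indicator
    (fun _ ↦ 2 * (‖c n‖ ^ 2 * (n : ℝ) ^ (-2 * σ - 1))) t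

lemma norm_sq_mulDiff_summatory_le (c : ℕ → ℂ) {δ t σ : ℝ} {N : ℕ} (hδ : 0 ≤ δ) (hδ' : δ ≤ 1 / 4)
    (hσ : 0 ≤ σ) (hσ' : σ ≤ 1) (ht : 0 ≤ t) (hδt : δ * t ≤ 1) (hN : (1 + δ) * t ≤ N) :
    ‖mulDiff (summatory c) (1 + δ) t‖ ^ 2 * t ^ (-2 * σ - 1) ≤
      shortIntervalMajorant c δ σ N t := by
  have hnonneg : ∀ n ∈ Finset.Icc 1 N, 0 ≤ (Ico ((n : ℝ) / (1 + δ)) n).indicator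
      (fun _ ↦ 2 * (‖c n‖ ^ 2 * (n : ℝ) ^ (-2 * σ - 1))) t :=
    fun n _ ↦ indicator_nonneg (fun _ _ ↦ by positivity) t
  rcases mulDiff_summatory_eq_zero_or c hδ ht hδt with h | ⟨n, hn, htn, h⟩
  · rw [h, norm_zero, zero_pow two_ne_zero, zero_mul]
    exact Finset.sum_nonneg hnonneg
  · have hnN : n ≤ N := by
      exact_mod_cast ((div_le_iff₀' (by linarith)).1 htn.1).trans hN
    refine le_trans ?_ (Finset.single_le_sum hnonneg (Finset.mem_Icc.2 ⟨hn, hnN⟩))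
    rw [indicator_of_mem htn, h, mul_left_comm]
    gcongr
    exact rpow_le_two_mul_rpow hδ hδ' (by exact_mod_cast hn) hσ hσ' htn.1

lemma integrable_shortIntervalMajorant (c : ℕ → ℂ) (δ σ : ℝ) (N : ℕ) :
    Integrable (shortIntervalMajorant c δ σ N) :=
  integrable_finsetSum _ fun _ _ ↦
    (integrable_indicator_iff measurableSet_Ico).2 (integrableOn_const (by simp))

lemma integral_shortIntervalMajorant_le (c : ℕ → ℂ) {δ : ℝ} (hδ : 0 ≤ δ) (σ : ℝ) (N : ℕ) :
    ∫ t, shortIntervalMajorant c δ σ N t ≤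
      2 * δ * ∑ n ∈ Finset.Icc 1 N, ‖c n‖ ^ 2 * (n : ℝ) ^ (-2 * σ) := by
  unfold shortIntervalMajorant
  rw [integral_finsetSum _ fun _ _ ↦
    (integrable_indicator_iff measurableSet_Ico).2 (integrableOn_const (by simp)), Finset.mul_sum]
  refine Finset.sum_le_sum fun n hn ↦ ?_
  have hn0 : (0 : ℝ) < n := by exact_mod_cast (Finset.mem_Icc.1 hn).1
  have hlength : (n : ℝ) - n / (1 + δ) ≤ n * δ := by
    rw [sub_le_iff_le_add, ← sub_le_iff_le_add', le_div_iff₀ (by linarith)]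
    nlinarith [mul_nonneg hn0.le (sq_nonneg δ)]
  have hlength' : 0 ≤ (n : ℝ) - n / (1 + δ) := sub_nonneg.2 (div_le_self hn0.le (by linarith))
  rw [integral_indicator_const _ measurableSet_Ico, Real.volume_real_Ico, smul_eq_mul,
    max_eq_left hlength', Real.rpow_sub_one hn0.ne']
  calc _ ≤ n * δ * (2 * (‖c n‖ ^ 2 * ((n : ℝ) ^ (-2 * σ) / n))) := by gcongr
    _ = _ := by field_simp

lemma integrableOn_and_setIntegral_le_of_le {α : Type*} [MeasurableSpace α] {μ : Measure α}
    {f g : α → ℝ} {s : Set α} (hs : MeasurableSet s) (hf : Measurable f) (hg : IntegrableOn g s μ)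
    (hf0 : ∀ t ∈ s, 0 ≤ f t) (hfg : ∀ t ∈ s, f t ≤ g t) :
    IntegrableOn f s μ ∧ ∫ t in s, f t ∂μ ≤ ∫ t in s, g t ∂μ := by
  have hf_int : IntegrableOn f s μ :=
    hg.mono' hf.aestronglyMeasurable ((ae_restrict_mem hs).mono fun t ht ↦
      (Real.norm_of_nonneg (hf0 t ht)).trans_le (hfg t ht))
  exact ⟨hf_int, setIntegral_mono_on hf_int hg hs hfg⟩

lemma integral_Ioi_norm_sq_mul_rpow_le {g : ℝ → ℂ} {B V σ : ℝ} (hg : Measurable g) (hV : 0 < V)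
    (hσ : 1 / 2 ≤ σ) (hB : ∀ t ∈ Ioi V, ‖g t‖ ≤ B) :
    IntegrableOn (fun t ↦ ‖g t‖ ^ 2 * t ^ (-2 * σ - 1)) (Ioi V) ∧
      ∫ t in Ioi V, ‖g t‖ ^ 2 * t ^ (-2 * σ - 1) ≤ B ^ 2 * V ^ (-2 * σ) := by
  have hint : IntegrableOn (fun t : ℝ ↦ B ^ 2 * t ^ (-2 * σ - 1)) (Ioi V) :=
    (integrableOn_Ioi_rpow_of_lt (by linarith) hV).const_mul _
  have hle : ∀ t ∈ Ioi V, ‖g t‖ ^ 2 * t ^ (-2 * σ - 1) ≤ B ^ 2 * t ^ (-2 * σ - 1) := by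
    intro t ht
    have := hV.trans ht
    gcongr
    exact hB t ht
  refine (integrableOn_and_setIntegral_le_of_le measurableSet_Ioi (by fun_prop) hint
    (fun t ht ↦ mul_nonneg (sq_nonneg _) (Real.rpow_nonneg (hV.trans ht).le _)) hle).imp_right
    fun h ↦ h.trans ?_
  rw [integral_const_mul, integral_Ioi_rpow_of_lt (by linarith) hV, sub_add_cancel, neg_div,
    ← div_neg]
  gcongr
  exact div_le_self (by positivity) (by linarith)

lemma integral_Ioc_zero_rpow {a V : ℝ} (ha : 0 < a) (hV : 0 ≤ V) :
    IntegrableOn (fun t : ℝ ↦ t ^ (a - 1)) (Ioc 0 V) ∧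
      ∫ t in Ioc 0 V, t ^ (a - 1) = V ^ a / a := by
  refine ⟨(intervalIntegrable_iff_integrableOn_Ioc_of_le hV).1
    (intervalIntegral.intervalIntegrable_rpow' (by linarith)), ?_⟩
  rw [← intervalIntegral.integral_of_le hV, integral_rpow (.inl (by linarith)), sub_add_cancel,
    Real.zero_rpow ha.ne', sub_zero]

variable {c : ℕ → ℂ} {ρ : ℂ} {L : ℝ} {G : ℂ → ℂ}

lemma mulDiff_remainder (c : ℕ → ℂ) (ρ : ℂ) (δ t : ℝ) :
    mulDiff (remainder c ρ) (1 + δ) t = mulDiff (summatory c) (1 + δ) t - ρ * (δ * t) := by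
  simp only [mulDiff, remainder]
  push_cast
  ring

lemma norm_sq_mulDiff_remainder_le (hG : HasMellinRemainder c ρ L G) {δ t σ : ℝ} {N : ℕ}
    (hδ : 0 ≤ δ) (hδ' : δ ≤ 1 / 4) (hσ : 0 ≤ σ) (hσ' : σ ≤ 1) (ht : 0 < t) (hδt : δ * t ≤ 1)
    (hN : (1 + δ) * t ≤ N) :
    ‖mulDiff (remainder c ρ) (1 + δ) t‖ ^ 2 * t ^ (-2 * σ - 1) ≤
      2 * shortIntervalMajorant c δ σ N t + 2 * (L * δ) ^ 2 * t ^ (2 - 2 * σ - 1) := by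
  have hmain : ‖ρ * (δ * t)‖ ≤ L * δ * t := by
    rw [norm_mul, ← Complex.ofReal_mul, Complex.norm_of_nonneg (by positivity), mul_assoc]
    gcongr
    exact hG.norm_residue_le
  have hsq : ‖mulDiff (remainder c ρ) (1 + δ) t‖ ^ 2 ≤
      2 * ‖mulDiff (summatory c) (1 + δ) t‖ ^ 2 + 2 * (L * δ * t) ^ 2 := by
    rw [mulDiff_remainder, ← mul_add]
    exact (pow_le_pow_left₀ (norm_nonneg _) (norm_sub_le_of_le le_rfl hmain) 2).trans
      add_sq_le
  have hpow : t ^ (2 - 2 * σ - 1) = t ^ 2 * t ^ (-2 * σ - 1) := by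
    rw [← Real.rpow_natCast, ← Real.rpow_add ht]
    ring_nf
  calc _ ≤ (2 * ‖mulDiff (summatory c) (1 + δ) t‖ ^ 2 + 2 * (L * δ * t) ^ 2) *
        t ^ (-2 * σ - 1) := by gcongr
    _ = 2 * (‖mulDiff (summatory c) (1 + δ) t‖ ^ 2 * t ^ (-2 * σ - 1)) +
        2 * (L * δ) ^ 2 * t ^ (2 - 2 * σ - 1) := by rw [hpow]; ring
    _ ≤ _ := by
      gcongr
      exact norm_sq_mulDiff_summatory_le c hδ hδ' hσ hσ' ht.le hδt hN

lemma integral_Ioc_norm_sq_mulDiff_remainder_le (hG : HasMellinRemainder c ρ L G) {δ σ S : ℝ}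
    (hδ : 0 < δ) (hδ' : δ ≤ 1 / 4) (hσ : 0 ≤ σ) (hσ' : σ < 1)
    (hS : ∀ N : ℕ, ∑ n ∈ Finset.Icc 1 N, ‖c n‖ ^ 2 * (n : ℝ) ^ (-2 * σ) ≤ S) :
    IntegrableOn (fun t ↦ ‖mulDiff (remainder c ρ) (1 + δ) t‖ ^ 2 * t ^ (-2 * σ - 1))
        (Ioc 0 δ⁻¹) ∧
      ∫ t in Ioc 0 δ⁻¹, ‖mulDiff (remainder c ρ) (1 + δ) t‖ ^ 2 * t ^ (-2 * σ - 1) ≤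
        4 * δ * S + L ^ 2 * δ ^ (2 * σ) / (1 - σ) := by
  obtain ⟨hrpow, hrpow'⟩ := integral_Ioc_zero_rpow (a := 2 - 2 * σ) (by linarith)
    (inv_nonneg.2 hδ.le)
  set N := ⌈(1 + δ) * δ⁻¹⌉₊
  have hmajorant := (integrable_shortIntervalMajorant c δ σ N).const_mul 2
  have hint := hmajorant.integrableOn.add (hrpow.const_mul (2 * (L * δ) ^ 2))
  have hle : ∀ t ∈ Ioc 0 δ⁻¹, ‖mulDiff (remainder c ρ) (1 + δ) t‖ ^ 2 * t ^ (-2 * σ - 1) ≤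
      2 * shortIntervalMajorant c δ σ N t + 2 * (L * δ) ^ 2 * t ^ (2 - 2 * σ - 1) := by
    intro t ht
    refine norm_sq_mulDiff_remainder_le hG hδ.le hδ' hσ hσ'.le ht.1 ?_ ?_
    · exact (le_inv_mul_iff₀ hδ).1 (by simpa using ht.2)
    · exact (mul_le_mul_of_nonneg_left ht.2 (by linarith)).trans (Nat.le_ceil _)
  have hmeas := measurable_mulDiff (measurable_remainder c ρ) (1 + δ)
  refine (integrableOn_and_setIntegral_le_of_le measurableSet_Ioc (by fun_prop) hint
    (fun t ht ↦ mul_nonneg (sq_nonneg _) (Real.rpow_nonneg ht.1.le _)) hle).imp_right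
    fun h ↦ h.trans ?_
  have hmajorant_le : ∫ t in Ioc 0 δ⁻¹, 2 * shortIntervalMajorant c δ σ N t ≤ 4 * δ * S := calc
    _ ≤ ∫ t, 2 * shortIntervalMajorant c δ σ N t :=
      setIntegral_le_integral hmajorant (.of_forall fun t ↦ mul_nonneg zero_le_two
        (Finset.sum_nonneg fun n _ ↦ indicator_nonneg (fun _ _ ↦ by positivity) t))
    _ ≤ 2 * (2 * δ * S) := by
      rw [integral_const_mul]
      gcongr
      exact (integral_shortIntervalMajorant_le c hδ.le σ N).trans (by gcongr; exact hS N)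
    _ = 4 * δ * S := by ring
  refine (integral_add hmajorant.integrableOn (hrpow.const_mul _)).trans_le
    (add_le_add hmajorant_le (le_of_eq ?_))
  have : 1 - σ ≠ 0 := by linarith
  rw [integral_const_mul, hrpow', Real.inv_rpow hδ.le, Real.rpow_sub hδ, Real.rpow_two]
  have : δ ^ (2 * σ) ≠ 0 := by positivity
  field_simp

lemma integral_Ioi_norm_sq_mulDiff_remainder_le (hG : HasMellinRemainder c ρ L G) {δ σ S : ℝ}
    (hδ : 0 < δ) (hδ' : δ ≤ 1 / 4) (hσ : 1 / 2 ≤ σ) (hσ' : σ < 1)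
    (hS : ∀ N : ℕ, ∑ n ∈ Finset.Icc 1 N, ‖c n‖ ^ 2 * (n : ℝ) ^ (-2 * σ) ≤ S) :
    IntegrableOn (fun t ↦ ‖mulDiff (remainder c ρ) (1 + δ) t‖ ^ 2 * t ^ (-2 * σ - 1)) (Ioi 0) ∧
      ∫ t in Ioi 0, ‖mulDiff (remainder c ρ) (1 + δ) t‖ ^ 2 * t ^ (-2 * σ - 1) ≤
        4 * δ * S + (4 + 1 / (1 - σ)) * L ^ 2 * δ ^ (2 * σ) := by
  have hbound : ∀ t ∈ Ioi δ⁻¹, ‖mulDiff (remainder c ρ) (1 + δ) t‖ ≤ 2 * L := by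
    intro t ht
    have ht0 : 0 < t := (inv_pos.2 hδ).trans ht
    rw [two_mul]
    exact norm_sub_le_of_le (hG.norm_remainder_le _ (by positivity)) (hG.norm_remainder_le t ht0)
  obtain ⟨hint, hle⟩ := integral_Ioc_norm_sq_mulDiff_remainder_le hG hδ hδ' (by linarith) hσ' hS
  obtain ⟨hint', hle'⟩ := integral_Ioi_norm_sq_mul_rpow_le
    (measurable_mulDiff (measurable_remainder c ρ) (1 + δ)) (inv_pos.2 hδ) hσ hbound
  rw [← Ioc_union_Ioi_eq_Ioi (inv_pos.2 hδ).le]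
  refine ⟨hint.union hint', ?_⟩
  rw [setIntegral_union Ioc_disjoint_Ioi_same measurableSet_Ioi hint hint']
  refine (add_le_add hle hle').trans_eq ?_
  rw [Real.inv_rpow hδ.le, ← Real.rpow_neg hδ.le, neg_mul, neg_neg]
  ring

lemma mul_norm_le_norm_one_add_cpow_sub_one {δ : ℝ} {s : ℂ} (hδ : 0 ≤ δ) (hδ' : δ ≤ 1)
    (hs : δ * ‖s‖ ≤ 1 / 2) : δ / 4 * ‖s‖ ≤ ‖((1 + δ : ℝ) : ℂ) ^ s - 1‖ := by
  have hlog : δ / 2 ≤ Real.log (1 + δ) := by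
    refine le_trans ?_ (Real.one_sub_inv_le_log_of_pos (by linarith))
    have : 0 < 1 + δ := by linarith
    rw [show 1 - (1 + δ)⁻¹ = δ / (1 + δ) by field_simp; ring]
    gcongr
    linarith
  have hlog' : Real.log (1 + δ) ≤ δ := by
    simpa using Real.log_le_sub_one_of_pos (x := 1 + δ) (by linarith)
  set z : ℂ := Real.log (1 + δ) * s
  have hz : ‖z‖ = Real.log (1 + δ) * ‖s‖ := by
    rw [norm_mul, Complex.norm_of_nonneg (by linarith)]
  have hz' : ‖z‖ ≤ 1 / 2 := by
    rw [hz]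
    exact (mul_le_mul_of_nonneg_right hlog' (norm_nonneg s)).trans hs
  have hexp := Complex.norm_exp_sub_one_sub_id_le (x := z) (by linarith)
  have htri : ‖z‖ ≤ ‖Complex.exp z - 1‖ + ‖Complex.exp z - 1 - z‖ := by
    simpa using norm_sub_le (Complex.exp z - 1) (Complex.exp z - 1 - z)
  rw [Complex.cpow_def_of_ne_zero (by exact_mod_cast (by linarith : 1 + δ ≠ 0)),
    ← Complex.ofReal_log (by linarith)]
  calc δ / 4 * ‖s‖ = δ / 2 * ‖s‖ / 2 := by ring
    _ ≤ ‖z‖ / 2 := by rw [hz]; gcongr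
    _ ≤ _ := by nlinarith [norm_nonneg z]

lemma mul_norm_le_norm_mellin_mulDiff (hG : HasMellinRemainder c ρ L G) {δ : ℝ} {s : ℂ}
    (hδ : 0 ≤ δ) (hδ' : δ ≤ 1) (hs : δ * ‖s‖ ≤ 1 / 2) (hs0 : 0 < s.re) (hs1 : s.re < 1) :
    δ / 4 * ‖G s‖ ≤ ‖mellin (mulDiff (remainder c ρ) (1 + δ)) (-s)‖ := by
  have hs' : 0 < ‖s‖ := norm_pos_iff.2 fun h ↦ by simp [h] at hs0
  rw [(hasMellin_mulDiff (by linarith) (hG.hasMellin s hs0 hs1)).2, neg_neg, norm_mul, norm_div]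
  calc δ / 4 * ‖G s‖ = δ / 4 * ‖s‖ * (‖G s‖ / ‖s‖) := by field_simp
    _ ≤ _ := by
      gcongr
      exact mul_norm_le_norm_one_add_cpow_sub_one hδ hδ' hs

lemma integral_norm_sq_mul_le_integral_mellin (hG : HasMellinRemainder c ρ L G) {s : ℂ} {δ T : ℝ}
    (hs : 0 < s.re) (hs' : s.re < 1) (hδ : 0 ≤ δ) (hδ' : δ ≤ 1) (hT : δ * (‖s‖ + T) ≤ 1 / 2)
    (hint : IntegrableOn
      (fun t ↦ ‖mulDiff (remainder c ρ) (1 + δ) t‖ ^ 2 * t ^ (-2 * s.re - 1)) (Ioi 0)) :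
    (δ / 4) ^ 2 * ∫ τ in Icc (-T) T, ‖G (s + τ * Complex.I)‖ ^ 2 ≤
      2 * Real.pi *
        ∫ t in Ioi 0, ‖mulDiff (remainder c ρ) (1 + δ) t‖ ^ 2 * t ^ (-2 * s.re - 1) := by
  set D := mulDiff (remainder c ρ) (1 + δ)
  have hconv : MellinConvergent D ((-s.re : ℝ) : ℂ) := by
    rw [Complex.ofReal_neg]
    exact (hasMellin_mulDiff (by linarith) (hG.hasMellin s.re (by simpa) (by simpa))).1
  have hexp : -2 * s.re - 1 = 2 * -s.re - 1 := by ring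
  rw [hexp] at hint ⊢
  have hline (τ : ℝ) : -(s + τ * Complex.I) =
      ((-s.re : ℝ) : ℂ) + ((-s.im - τ : ℝ) : ℂ) * Complex.I := by
    apply Complex.ext <;> simp; ring
  have hmellin := (integrable_norm_sq_mellin hconv hint).comp_sub_left (-s.im)
  rw [← integral_norm_sq_mellin hconv hint,
    ← integral_sub_left_eq_self (fun τ : ℝ ↦ ‖mellin D ((-s.re : ℝ) + τ * Complex.I)‖ ^ 2) volume
      (-s.im), ← integral_const_mul]
  refine le_trans (integral_mono_of_nonneg (.of_forall fun τ ↦ by positivity)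
    hmellin.integrableOn ?_) (setIntegral_le_integral hmellin (.of_forall fun τ ↦ by positivity))
  filter_upwards [ae_restrict_mem measurableSet_Icc] with τ hτ
  have hnorm : ‖s + τ * Complex.I‖ ≤ ‖s‖ + T :=
    norm_add_le_of_le le_rfl (by simpa using abs_le.2 hτ)
  have hle := mul_norm_le_norm_mellin_mulDiff hG hδ hδ' (s := s + τ * Complex.I)
    ((mul_le_mul_of_nonneg_left hnorm hδ).trans hT) (by simpa) (by simpa)
  rw [hline] at hle
  rw [← mul_pow]
  gcongr

theorem integral_norm_sq_le (hG : HasMellinRemainder c ρ L G) {s : ℂ} {S T : ℝ}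
    (hs : 1 / 2 < s.re) (hs' : s.re < 1) (hs2 : ‖s‖ ≤ 2) (hT : 2 ≤ T)
    (hS : ∀ N : ℕ, ∑ n ∈ Finset.Icc 1 N, ‖c n‖ ^ 2 * (n : ℝ) ^ (-2 * s.re) ≤ S) :
    ∫ τ in Icc (-T) T, ‖G (s + τ * Complex.I)‖ ^ 2 ≤
      512 * Real.pi * (T * S + (4 + 1 / (1 - s.re)) * L ^ 2 * T ^ (2 - 2 * s.re)) := by
  have hT0 : 0 < T := by linarith
  set δ : ℝ := (4 * T)⁻¹ with hδ
  have hδT : δ * T = 1 / 4 := by rw [hδ]; field_simp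
  have hδ0 : 0 < δ := by positivity
  obtain ⟨hint, hle⟩ := integral_Ioi_norm_sq_mulDiff_remainder_le hG hδ0 (by nlinarith) hs.le hs' hS
  have hmain := (integral_norm_sq_mul_le_integral_mellin hG (T := T) (by linarith) hs' hδ0.le
    (by nlinarith) (by nlinarith) hint).trans (mul_le_mul_of_nonneg_left hle Real.two_pi_pos.le)
  have hδpow : δ ^ (2 * s.re) ≤ T ^ (-(2 * s.re)) := by
    rw [Real.rpow_neg hT0.le, ← Real.inv_rpow hT0.le]
    gcongr
    exact inv_anti₀ hT0 (by linarith)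
  have hTpow : T ^ (2 - 2 * s.re) = T ^ 2 * T ^ (-(2 * s.re)) := by
    rw [sub_eq_add_neg, Real.rpow_add hT0, Real.rpow_two]
  have hconst : 0 ≤ 1 / (1 - s.re) := by
    have : 0 < 1 - s.re := by linarith
    positivity
  calc _ = 256 * T ^ 2 * ((δ / 4) ^ 2 * ∫ τ in Icc (-T) T, ‖G (s + τ * Complex.I)‖ ^ 2) := by
        rw [hδ, ← mul_assoc]
        convert (one_mul _).symm using 2
        field_simp
        norm_num
    _ ≤ 256 * T ^ 2 * (2 * Real.pi *
        (4 * δ * S + (4 + 1 / (1 - s.re)) * L ^ 2 * T ^ (-(2 * s.re)))) := by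
        grw [hmain, hδpow]
    _ = _ := by rw [hTpow, hδ]; field_simp; ring

end MeanSquare

section RoughNumbers

variable {Q : Finset ℕ}

/-- The indicator of the integers free of prime factors in `Q`. -/
def roughIndicator (Q : Finset ℕ) (n : ℕ) : ℂ := if ∀ p ∈ Q, ¬ p ∣ n then 1 else 0

/-- The indicator of the integers other than `1` free of prime factors in `Q`. -/
def roughTail (Q : Finset ℕ) (n : ℕ) : ℂ := if n ≠ 1 ∧ ∀ p ∈ Q, ¬ p ∣ n then 1 else 0

/-- The zeta function with the Euler factors at the primes in `Q` removed. -/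
noncomputable def deletedZeta (Q : Finset ℕ) (s : ℂ) : ℂ :=
  (∏ p ∈ Q, (1 - (p : ℂ) ^ (-s))) * riemannZeta s

lemma roughIndicator_insert (hQ : ∀ q ∈ Q, q.Prime) {p : ℕ} (hp : p.Prime) (hpQ : p ∉ Q) (n : ℕ) :
    roughIndicator (insert p Q) n
      = roughIndicator Q n + -1 * dilate p (roughIndicator Q) n := by
  by_cases hpn : p ∣ n
  · obtain ⟨k, rfl⟩ := hpn
    have hdvd : (∀ q ∈ Q, ¬ q ∣ p * k) ↔ ∀ q ∈ Q, ¬ q ∣ k := forall₂_congr fun q hq ↦ by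
      rw [((Nat.coprime_primes (hQ q hq) hp).2 fun h ↦ hpQ (h ▸ hq)).dvd_mul_left]
    have hzero : roughIndicator (insert p Q) (p * k) = 0 := by simp [roughIndicator]
    have hmul : roughIndicator Q (p * k) = roughIndicator Q k := by simp only [roughIndicator, hdvd]
    rw [hzero, hmul, dilate_mul hp.pos]
    ring
  · simp [roughIndicator, dilate, hpn]

lemma roughTail_eq_sub (hQ : ∀ p ∈ Q, p.Prime) (n : ℕ) :
    roughTail Q n = roughIndicator Q n + -1 * Pi.single (M := fun _ ↦ ℂ) 1 1 n := by
  rcases eq_or_ne n 1 with rfl | hn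
  · have hone : roughIndicator Q 1 = 1 := if_pos fun p hp ↦ (hQ p hp).not_dvd_one
    simp [roughTail, hone]
  · simp [roughTail, roughIndicator, hn]

lemma exists_hasMellinRemainder_deletedZeta (hQ : ∀ p ∈ Q, p.Prime) :
    ∃ ρ L, HasMellinRemainder (roughIndicator Q) ρ L (deletedZeta Q) := by
  induction Q using Finset.induction_on with
  | empty =>
    exact ⟨1, 1, HasMellinRemainder.zeta.congr (fun n ↦ by simp [roughIndicator])
      fun s ↦ by simp [deletedZeta]⟩
  | insert p Q hpQ ih =>
    have hQ' : ∀ q ∈ Q, q.Prime := fun q hq ↦ hQ q (Finset.mem_insert_of_mem hq)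
    have hp := hQ p (Finset.mem_insert_self p Q)
    obtain ⟨ρ, L, h⟩ := ih hQ'
    refine ⟨_, _, (h.add ((h.dilate hp.pos).const_mul (-1))).congr
      (fun n ↦ (roughIndicator_insert hQ' hp hpQ n).symm) fun s ↦ ?_⟩
    simp only [deletedZeta, Finset.prod_insert hpQ]
    ring

lemma exists_hasMellinRemainder_deletedZeta_sub_one (hQ : ∀ p ∈ Q, p.Prime) :
    ∃ ρ L, HasMellinRemainder (roughTail Q) ρ L fun s ↦ deletedZeta Q s - 1 := by
  obtain ⟨ρ, L, h⟩ := exists_hasMellinRemainder_deletedZeta hQ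
  exact ⟨_, _, (h.add (HasMellinRemainder.one.const_mul (-1))).congr
    (fun n ↦ (roughTail_eq_sub hQ n).symm) fun s ↦ by ring⟩

lemma norm_roughTail_le_one (Q : Finset ℕ) (n : ℕ) : ‖roughTail Q n‖ ≤ 1 := by
  unfold roughTail
  split_ifs <;> simp

lemma not_dvd_of_roughTail_ne_zero {n p : ℕ} (h : roughTail Q n ≠ 0) (hp : p ∈ Q) : ¬ p ∣ n :=
  (of_not_not fun hn ↦ h (if_neg hn) : n ≠ 1 ∧ ∀ p ∈ Q, ¬ p ∣ n).2 p hp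

lemma roughTail_primesBelow_eq_zero {M n : ℕ} (hn : n ≠ 0) (hM : n < M) :
    roughTail M.primesBelow n = 0 := by
  refine if_neg fun ⟨hn1, h⟩ ↦ ?_
  obtain ⟨p, hp, hpn⟩ := Nat.exists_prime_and_dvd hn1
  exact h p (Nat.mem_primesBelow.2 ⟨(Nat.le_of_dvd (Nat.pos_of_ne_zero hn) hpn).trans_lt hM, hp⟩)
    hpn

lemma sum_norm_sq_roughTail_primesBelow_le {M : ℕ} {a S : ℝ}
    (hS : ∀ N : ℕ, ∑ n ∈ Finset.Icc M N, (n : ℝ) ^ a ≤ S) (N : ℕ) :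
    ∑ n ∈ Finset.Icc 1 N, ‖roughTail M.primesBelow n‖ ^ 2 * (n : ℝ) ^ a ≤ S := by
  rw [← Finset.sum_filter_of_ne (p := (M ≤ ·))]
  · refine (Finset.sum_le_sum fun n _ ↦ ?_).trans
      ((Finset.sum_le_sum_of_subset_of_nonneg (fun n hn ↦ ?_) fun n _ _ ↦ by positivity).trans
        (hS N))
    · exact mul_le_of_le_one_left (by positivity)
        (pow_le_one₀ (norm_nonneg _) (norm_roughTail_le_one _ n))
    · rw [Finset.mem_filter, Finset.mem_Icc] at hn
      exact Finset.mem_Icc.2 ⟨hn.2, hn.1.2⟩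
  · intro n hn hne
    by_contra! hM
    rw [roughTail_primesBelow_eq_zero (Nat.one_le_iff_ne_zero.1 (Finset.mem_Icc.1 hn).1) hM] at hne
    simp at hne

lemma dvd_of_mem_factoredNumbers {d d' n : ℕ} (hd : d ∈ Nat.factoredNumbers Q) (hdn : d ∣ n)
    (hdn' : d' ∣ n) (hn : ∀ p ∈ Q, ¬ p ∣ n / d') : d ∣ d' := by
  have hcop : d.Coprime (n / d') := Nat.coprime_of_dvd fun p hp hpd ↦
    hn p (Nat.mem_factoredNumbers'.1 hd p hp hpd)
  exact hcop.dvd_of_dvd_mul_right (by rwa [Nat.mul_div_cancel' hdn'])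

lemma eq_of_dilate_roughTail_ne_zero {d d' n : ℕ} (hd : d ∈ Nat.factoredNumbers Q)
    (hd' : d' ∈ Nat.factoredNumbers Q) (h : dilate d (roughTail Q) n ≠ 0)
    (h' : dilate d' (roughTail Q) n ≠ 0) : d = d' := by
  simp only [dilate, ne_eq, ite_eq_right_iff, Classical.not_imp] at h h'
  exact Nat.dvd_antisymm
    (dvd_of_mem_factoredNumbers hd h.1 h'.1 fun _ hp ↦ not_dvd_of_roughTail_ne_zero h'.2 hp)
    (dvd_of_mem_factoredNumbers hd' h'.1 h.1 fun _ hp ↦ not_dvd_of_roughTail_ne_zero h.2 hp)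

end RoughNumbers

section ExponentialSums

lemma integral_Icc_exp_mul_I {α T : ℝ} (hT : 0 ≤ T) :
    ∫ τ in Icc (-T) T, Complex.exp (α * τ * Complex.I) = 2 * T * Real.sinc (α * T) := by
  rw [integral_Icc_eq_integral_Ioc, ← intervalIntegral.integral_of_le (by linarith)]
  rcases eq_or_ne α 0 with rfl | hα
  · simp
    ring
  · have hcomp := intervalIntegral.integral_comp_mul_left (a := -T) (b := T)
      (fun t : ℝ ↦ Complex.exp (t * Complex.I)) hα
    simp only [Complex.ofReal_mul, mul_neg] at hcomp
    rw [hcomp, integral_exp_mul_I_eq_sinc, Complex.real_smul]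
    push_cast
    field_simp [Complex.ofReal_ne_zero.2 hα]

lemma tendsto_mean_exp_mul_I (α : ℝ) :
    Tendsto (fun T : ℝ ↦ ((2 * T : ℝ) : ℂ)⁻¹ * ∫ τ in Icc (-T) T, Complex.exp (α * τ * Complex.I))
      atTop (𝓝 (if α = 0 then 1 else 0)) := by
  have hsinc : (fun T : ℝ ↦ (Real.sinc (α * T) : ℂ)) =ᶠ[atTop] fun T : ℝ ↦
      ((2 * T : ℝ) : ℂ)⁻¹ * ∫ τ in Icc (-T) T, Complex.exp (α * τ * Complex.I) := by
    filter_upwards [eventually_gt_atTop 0] with T hT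
    have hT' : (T : ℂ) ≠ 0 := Complex.ofReal_ne_zero.2 hT.ne'
    rw [integral_Icc_exp_mul_I hT.le]
    push_cast
    field_simp
  refine Tendsto.congr' hsinc ?_
  split_ifs with hα
  · simp [hα]
  · rw [← Complex.ofReal_zero]
    refine (Complex.continuous_ofReal.tendsto 0).comp ?_
    refine squeeze_zero_norm' (a := fun T : ℝ ↦ |α|⁻¹ * T⁻¹) ?_
      (by simpa using tendsto_inv_atTop_zero.const_mul |α|⁻¹)
    filter_upwards [eventually_gt_atTop 0] with T hT
    rw [Real.sinc_of_ne_zero (mul_ne_zero hα hT.ne'), Real.norm_eq_abs, abs_div, abs_mul,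
      abs_of_pos hT, ← mul_inv, ← one_div]
    gcongr
    exact Real.abs_sin_le_one _

lemma norm_sq_sum_mul_exp {ι : Type*} (F : Finset ι) (b : ι → ℂ) (ω : ι → ℝ) (τ : ℝ) :
    ((‖∑ i ∈ F, b i * Complex.exp (ω i * τ * Complex.I)‖ ^ 2 : ℝ) : ℂ) =
      ∑ i ∈ F, ∑ j ∈ F, b i * (starRingEnd ℂ) (b j) *
        Complex.exp ((ω i - ω j : ℝ) * τ * Complex.I) := by
  push_cast
  rw [← Complex.mul_conj', map_sum, Finset.sum_mul_sum]
  refine Finset.sum_congr rfl fun i _ ↦ Finset.sum_congr rfl fun j _ ↦ ?_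
  rw [map_mul, ← Complex.exp_conj, mul_mul_mul_comm, ← Complex.exp_add]
  simp only [map_mul, Complex.conj_ofReal, Complex.conj_I]
  ring_nf

theorem tendsto_mean_norm_sq_sum_exp {ι : Type*} (F : Finset ι) (b : ι → ℂ) {ω : ι → ℝ}
    (hω : InjOn ω F) :
    Tendsto (fun T : ℝ ↦ (2 * T)⁻¹ *
        ∫ τ in Icc (-T) T, ‖∑ i ∈ F, b i * Complex.exp (ω i * τ * Complex.I)‖ ^ 2)
      atTop (𝓝 (∑ i ∈ F, ‖b i‖ ^ 2)) := by
  set e : ι → ι → ℝ → ℂ := fun i j τ ↦ Complex.exp ((ω i - ω j : ℝ) * τ * Complex.I)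
  have hint (i j : ι) (T : ℝ) :
      IntegrableOn (fun τ ↦ b i * (starRingEnd ℂ) (b j) * e i j τ) (Icc (-T) T) :=
    Continuous.integrableOn_Icc (by fun_prop)
  have hmean (T : ℝ) : (((2 * T)⁻¹ *
        ∫ τ in Icc (-T) T, ‖∑ i ∈ F, b i * Complex.exp (ω i * τ * Complex.I)‖ ^ 2 : ℝ) : ℂ)
      = ∑ i ∈ F, ∑ j ∈ F, b i * (starRingEnd ℂ) (b j) *
          (((2 * T : ℝ) : ℂ)⁻¹ * ∫ τ in Icc (-T) T, e i j τ) := by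
    rw [Complex.ofReal_mul, Complex.ofReal_inv, ← integral_complex_ofReal]
    simp only [norm_sq_sum_mul_exp]
    rw [integral_finsetSum _ fun i _ ↦ integrable_finsetSum _ fun j _ ↦ hint i j T]
    simp only [integral_finsetSum F fun j _ ↦ hint _ j T, Finset.mul_sum, integral_const_mul,
      mul_left_comm]
  have hdiag : ((∑ i ∈ F, ‖b i‖ ^ 2 : ℝ) : ℂ) = ∑ i ∈ F, ∑ j ∈ F,
      b i * (starRingEnd ℂ) (b j) * if ω i - ω j = 0 then 1 else 0 := by
    push_cast
    refine Finset.sum_congr rfl fun i hi ↦ ?_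
    rw [Finset.sum_eq_single_of_mem i hi fun j hj hji ↦ ?_]
    · simp [Complex.mul_conj']
    · simp [sub_eq_zero, hω.ne hi hj hji.symm]
  rw [← tendsto_ofReal_iff]
  simp only [hmean, hdiag]
  exact tendsto_finsetSum _ fun i _ ↦ tendsto_finsetSum _ fun j _ ↦
    (tendsto_mean_exp_mul_I _).const_mul _

end ExponentialSums

section DirichletPolynomials

/-- The completely multiplicative function `n ↦ n ^ (-iτ)`, for `n > 0` a point of the unit circle
rotating with `τ`. -/
noncomputable def phase (τ : ℝ) : ℕ →* ℂ where
  toFun n := (n : ℂ) ^ (-(τ * Complex.I))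
  map_one' := by simp
  map_mul' m n := by simpa using Complex.natCast_mul_natCast_cpow m n _

lemma phase_eq_exp {n : ℕ} (hn : n ≠ 0) (τ : ℝ) :
    phase τ n = Complex.exp ((-Real.log n : ℝ) * τ * Complex.I) := by
  rw [phase, MonoidHom.coe_mk, OneHom.coe_mk,
    Complex.cpow_def_of_ne_zero (Nat.cast_ne_zero.2 hn), ← Complex.natCast_log]
  push_cast
  ring_nf

lemma norm_phase {n : ℕ} (hn : n ≠ 0) (τ : ℝ) : ‖phase τ n‖ = 1 := by
  rw [phase_eq_exp hn, ← Complex.ofReal_mul, Complex.norm_exp_ofReal_mul_I]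

lemma continuous_phase {n : ℕ} (hn : n ≠ 0) : Continuous fun τ ↦ phase τ n := by
  simp only [phase_eq_exp hn]
  fun_prop

lemma natCast_cpow_neg_add_mul_I {n : ℕ} (hn : n ≠ 0) (s : ℂ) (τ : ℝ) :
    (n : ℂ) ^ (-(s + τ * Complex.I)) = (n : ℂ) ^ (-s) * phase τ n := by
  rw [neg_add, Complex.cpow_add _ _ (Nat.cast_ne_zero.2 hn)]
  rfl

theorem tendsto_mean_norm_sq_sum_phase {ι : Type*} (F : Finset ι) (b : ι → ℂ) {d : ι → ℕ}
    (hd0 : ∀ i ∈ F, d i ≠ 0) (hd : InjOn d F) :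
    Tendsto (fun T : ℝ ↦ (2 * T)⁻¹ * ∫ τ in Icc (-T) T, ‖∑ i ∈ F, b i * phase τ (d i)‖ ^ 2)
      atTop (𝓝 (∑ i ∈ F, ‖b i‖ ^ 2)) := by
  have hpos (i : ι) (hi : i ∈ F) : (0 : ℝ) < d i := Nat.cast_pos.2 (Nat.pos_of_ne_zero (hd0 i hi))
  have hlog : InjOn (fun i ↦ -Real.log (d i)) F := fun i hi j hj hij ↦
    hd hi hj (Nat.cast_injective (Real.log_injOn_pos (hpos i hi) (hpos j hj) (neg_injective hij)))
  convert tendsto_mean_norm_sq_sum_exp F b hlog using 7 with T τ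
  exact Finset.sum_congr rfl fun i hi ↦ by rw [phase_eq_exp (hd0 i hi)]

lemma norm_sq_sum_of_forall_eq {ι E : Type*} [SeminormedAddCommGroup E] (F : Finset ι) (f : ι → E)
    (h : ∀ i ∈ F, ∀ j ∈ F, f i ≠ 0 → f j ≠ 0 → i = j) :
    ‖∑ i ∈ F, f i‖ ^ 2 = ∑ i ∈ F, ‖f i‖ ^ 2 := by
  by_cases hF : ∃ i ∈ F, f i ≠ 0
  · obtain ⟨i, hi, hfi⟩ := hF
    have hzero : ∀ j ∈ F, j ≠ i → f j = 0 := fun j hj hji ↦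
      of_not_not fun hfj ↦ hji (h j hj i hi hfj hfi)
    rw [Finset.sum_eq_single_of_mem i hi hzero, Finset.sum_eq_single_of_mem i hi]
    exact fun j hj hji ↦ by simp [hzero j hj hji]
  · push Not at hF
    rw [Finset.sum_eq_zero hF, Finset.sum_eq_zero fun i hi ↦ by simp [hF i hi], norm_zero,
      zero_pow two_ne_zero]

lemma sum_norm_sq_dilate_mul_rpow {d : ℕ} (hd : 0 < d) (c : ℕ → ℂ) (a : ℝ) (N : ℕ) :
    ∑ n ∈ Finset.Icc 1 N, ‖dilate d c n‖ ^ 2 * (n : ℝ) ^ a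
      = (d : ℝ) ^ a * ∑ n ∈ Finset.Icc 1 (N / d), ‖c n‖ ^ 2 * (n : ℝ) ^ a := by
  rw [← Finset.sum_filter_of_ne (p := (d ∣ ·)), sum_Icc_filter_dvd hd, Finset.mul_sum]
  swap
  · intro n _ hn
    by_contra h
    simp [dilate, h] at hn
  refine Finset.sum_congr rfl fun n _ ↦ ?_
  rw [dilate_mul hd, Nat.cast_mul, Real.mul_rpow d.cast_nonneg n.cast_nonneg]
  ring

variable {c : ℕ → ℂ} {ρ : ℂ} {L : ℝ} {G : ℂ → ℂ} {ι : Type*} {F : Finset ι} {d : ι → ℕ}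

lemma HasMellinRemainder.sum_mul_dilate (hG : HasMellinRemainder c ρ L G) (b : ι → ℂ)
    (hd0 : ∀ i ∈ F, 0 < d i) {s : ℂ} (hs : s.re ≤ 1) :
    ∃ ρ', HasMellinRemainder (fun n ↦ ∑ i ∈ F, b i * (d i : ℂ) ^ s * Voronin.dilate (d i) c n) ρ'
      (∑ i ∈ F, ‖b i‖ * d i * L)
      fun w ↦ ∑ i ∈ F, b i * (d i : ℂ) ^ s * ((d i : ℂ) ^ (-w) * G w) := by
  refine ⟨_, HasMellinRemainder.sum F fun i hi ↦ ((hG.dilate (hd0 i hi)).const_mul _).mono ?_⟩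
  rw [norm_mul, Complex.norm_natCast_cpow_of_pos (hd0 i hi)]
  have hpow : (d i : ℝ) ^ s.re ≤ d i := by
    simpa using Real.rpow_le_rpow_of_exponent_le (Nat.one_le_cast.2 (hd0 i hi)) hs
  gcongr
  exact hG.nonneg

/-- Twisting by `∑ b i * (d i) ^ (-iτ)` replaces the coefficients `c` by a combination of its
dilates by the `d i`; these are orthogonal when their supports are disjoint. -/
theorem integral_norm_sq_sum_phase_mul_le (hG : HasMellinRemainder c ρ L G) (b : ι → ℂ)
    (hd0 : ∀ i ∈ F, 0 < d i)
    (hd : ∀ n, ∀ i ∈ F, ∀ j ∈ F, dilate (d i) c n ≠ 0 → dilate (d j) c n ≠ 0 → i = j)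
    {s : ℂ} {S T : ℝ} (hs : 1 / 2 < s.re) (hs' : s.re < 1) (hs2 : ‖s‖ ≤ 2) (hT : 2 ≤ T)
    (hS : ∀ N : ℕ, ∑ n ∈ Finset.Icc 1 N, ‖c n‖ ^ 2 * (n : ℝ) ^ (-2 * s.re) ≤ S) :
    ∫ τ in Icc (-T) T, ‖(∑ i ∈ F, b i * phase τ (d i)) * G (s + τ * Complex.I)‖ ^ 2
      ≤ 512 * Real.pi * (T * ((∑ i ∈ F, ‖b i‖ ^ 2) * S)
        + (4 + 1 / (1 - s.re)) * (∑ i ∈ F, ‖b i‖ * d i * L) ^ 2 * T ^ (2 - 2 * s.re)) := by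
  obtain ⟨ρ', hsum⟩ := hG.sum_mul_dilate b hd0 hs'.le
  refine (integral_congr_ae (.of_forall fun τ ↦ ?_)).trans_le
    (integral_norm_sq_le hsum hs hs' hs2 hT fun N ↦ ?_)
  · simp only [Finset.sum_mul]
    congr 2
    refine Finset.sum_congr rfl fun i hi ↦ ?_
    have hi0 : (d i : ℂ) ^ s ≠ 0 := by simp [Complex.cpow_eq_zero_iff, (hd0 i hi).ne']
    rw [natCast_cpow_neg_add_mul_I (hd0 i hi).ne', Complex.cpow_neg]
    field_simp
  · have hexpand (n : ℕ) : ‖∑ i ∈ F, b i * (d i : ℂ) ^ s * dilate (d i) c n‖ ^ 2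
        = ∑ i ∈ F, ‖b i‖ ^ 2 * (d i : ℝ) ^ (2 * s.re) * ‖dilate (d i) c n‖ ^ 2 := by
      rw [norm_sq_sum_of_forall_eq F _ fun i hi j hj h h' ↦
        hd n i hi j hj (right_ne_zero_of_mul h) (right_ne_zero_of_mul h')]
      refine Finset.sum_congr rfl fun i hi ↦ ?_
      rw [norm_mul, norm_mul, Complex.norm_natCast_cpow_of_pos (hd0 i hi), mul_pow, mul_pow,
        mul_comm 2 s.re, Real.rpow_mul (Nat.cast_nonneg _), Real.rpow_two]
    simp only [hexpand, Finset.sum_mul]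
    rw [Finset.sum_comm]
    refine Finset.sum_le_sum fun i hi ↦ ?_
    have hi0 : (0 : ℝ) < d i := Nat.cast_pos.2 (hd0 i hi)
    simp only [mul_assoc, ← Finset.mul_sum]
    rw [sum_norm_sq_dilate_mul_rpow (hd0 i hi), ← mul_assoc (_ ^ (2 * s.re)), ← Real.rpow_add hi0]
    simpa using mul_le_mul_of_nonneg_left (hS (N / d i)) (sq_nonneg ‖b i‖)

end DirichletPolynomials

section Resonator

variable {Q : Finset ℕ} {u : ℕ → ℂ}

/-- The product of the members of `Q` with exponents `e`. -/
def monomial (e : Q → ℕ) : ℕ := ∏ p : Q, (p : ℕ) ^ e p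

lemma factorization_monomial (hQ : ∀ p ∈ Q, p.Prime) (e : Q → ℕ) (p : Q) :
    (monomial e).factorization p = e p := by
  rw [monomial, Nat.factorization_prod_apply fun (q : Q) _ ↦ pow_ne_zero _ (hQ q q.2).ne_zero,
    Finset.sum_eq_single_of_mem p (Finset.mem_univ p)]
  · simp [(hQ p p.2).factorization_self]
  · intro q _ hqp
    simp [(hQ q q.2).factorization, Subtype.coe_injective.ne hqp]

lemma injective_monomial (hQ : ∀ p ∈ Q, p.Prime) : Function.Injective (monomial (Q := Q)) :=
  fun e e' h ↦ funext fun p ↦ by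
    rw [← factorization_monomial hQ e, h, factorization_monomial hQ]

lemma monomial_ne_zero (hQ : ∀ p ∈ Q, p.Prime) (e : Q → ℕ) : monomial e ≠ 0 :=
  Finset.prod_ne_zero_iff.2 fun p _ ↦ pow_ne_zero _ (hQ p p.2).ne_zero

lemma monomial_mem_factoredNumbers (hQ : ∀ p ∈ Q, p.Prime) (e : Q → ℕ) :
    monomial e ∈ Nat.factoredNumbers Q := by
  refine Nat.mem_factoredNumbers'.2 fun q hq hdvd ↦ ?_
  obtain ⟨p, -, hqp⟩ := (hq.prime.dvd_finsetProd_iff _).1 hdvd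
  exact (Nat.prime_dvd_prime_iff_eq hq (hQ p p.2)).1 (hq.dvd_of_dvd_pow hqp) ▸ p.2

/-- A Dirichlet polynomial of constant mean square, which is large only at those `τ` for which
every `phase τ p` with `p ∈ Q` is close to `(u p)⁻¹`. -/
noncomputable def resonator (k : ℕ) (u : ℕ → ℂ) (Q : Finset ℕ) (τ : ℝ) : ℂ :=
  ∏ p ∈ Q, ∑ j ∈ Finset.range k, (u p * phase τ p) ^ j

lemma resonator_eq_sum (k : ℕ) (u : ℕ → ℂ) (Q : Finset ℕ) (τ : ℝ) :
    resonator k u Q τ = ∑ e ∈ Fintype.piFinset fun _ : Q ↦ Finset.range k,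
      (∏ p : Q, u p ^ e p) * phase τ (monomial e) := by
  rw [resonator, ← Finset.prod_coe_sort, Finset.prod_univ_sum]
  simp only [mul_pow, Finset.prod_mul_distrib, monomial, map_prod, map_pow]

lemma continuous_resonator (k : ℕ) (u : ℕ → ℂ) (hQ : ∀ p ∈ Q, p.Prime) :
    Continuous (resonator k u Q) :=
  continuous_finsetProd _ fun p hp ↦ continuous_finsetSum _ fun j _ ↦
    ((continuous_phase (hQ p hp).ne_zero).const_mul _).pow j

lemma norm_prod_pow_eq_one (hu : ∀ p ∈ Q, ‖u p‖ = 1) (e : Q → ℕ) : ‖∏ p : Q, u p ^ e p‖ = 1 := by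
  rw [norm_prod]
  exact Finset.prod_eq_one fun p _ ↦ by rw [norm_pow, hu p p.2, one_pow]

lemma sum_norm_sq_prod_pow (hu : ∀ p ∈ Q, ‖u p‖ = 1) (k : ℕ) :
    ∑ e ∈ Fintype.piFinset fun _ : Q ↦ Finset.range k, ‖∏ p : Q, u p ^ e p‖ ^ 2
      = (k : ℝ) ^ Q.card := by
  simp only [norm_prod_pow_eq_one hu]
  simp

lemma tendsto_mean_norm_sq_resonator (hQ : ∀ p ∈ Q, p.Prime) (hu : ∀ p ∈ Q, ‖u p‖ = 1) (k : ℕ) :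
    Tendsto (fun T : ℝ ↦ (2 * T)⁻¹ * ∫ τ in Icc (-T) T, ‖resonator k u Q τ‖ ^ 2) atTop
      (𝓝 ((k : ℝ) ^ Q.card)) := by
  simp only [resonator_eq_sum, ← sum_norm_sq_prod_pow hu]
  exact tendsto_mean_norm_sq_sum_phase _ _ (fun e _ ↦ monomial_ne_zero hQ e)
    (injective_monomial hQ).injOn

theorem exists_integral_norm_sq_resonator_mul_le (hQ : ∀ p ∈ Q, p.Prime)
    (hu : ∀ p ∈ Q, ‖u p‖ = 1) (k : ℕ) :
    ∃ K, 0 ≤ K ∧ ∀ (s : ℂ) (S T : ℝ), 1 / 2 < s.re → s.re < 1 → ‖s‖ ≤ 2 → 2 ≤ T →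
      (∀ N : ℕ, ∑ n ∈ Finset.Icc 1 N, ‖roughTail Q n‖ ^ 2 * (n : ℝ) ^ (-2 * s.re) ≤ S) →
      ∫ τ in Icc (-T) T, ‖resonator k u Q τ * (deletedZeta Q (s + τ * Complex.I) - 1)‖ ^ 2
        ≤ 512 * Real.pi * (T * ((k : ℝ) ^ Q.card * S)
          + (4 + 1 / (1 - s.re)) * K * T ^ (2 - 2 * s.re)) := by
  obtain ⟨ρ, L, hG⟩ := exists_hasMellinRemainder_deletedZeta_sub_one hQ
  refine ⟨(∑ e ∈ Fintype.piFinset fun _ : Q ↦ Finset.range k, ‖∏ p : Q, u p ^ e p‖ * monomial e * L)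
    ^ 2, sq_nonneg _, fun s S T hs hs' hs2 hT hS ↦ ?_⟩
  simp only [resonator_eq_sum, ← sum_norm_sq_prod_pow hu]
  exact integral_norm_sq_sum_phase_mul_le hG _
    (fun e _ ↦ Nat.pos_of_ne_zero (monomial_ne_zero hQ e))
    (fun n e _ e' _ h h' ↦ injective_monomial hQ (eq_of_dilate_roughTail_ne_zero
      (monomial_mem_factoredNumbers hQ e) (monomial_mem_factoredNumbers hQ e') h h'))
    hs hs' hs2 hT hS

/-- The squared distance from the phases `phase τ p` with `p ∈ Q` to their targets `(u p)⁻¹`. -/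
noncomputable def phaseError (u : ℕ → ℂ) (Q : Finset ℕ) (τ : ℝ) : ℝ :=
  ∑ p ∈ Q, ‖u p * phase τ p - 1‖ ^ 2

lemma continuous_phaseError (u : ℕ → ℂ) (hQ : ∀ p ∈ Q, p.Prime) : Continuous (phaseError u Q) :=
  continuous_finsetSum _ fun p hp ↦
    (((continuous_phase (hQ p hp).ne_zero).const_mul _).sub continuous_const).norm.pow 2

lemma norm_resonator_mul_norm_sub_one_le (hQ : ∀ p ∈ Q, p.Prime) (hu : ∀ p ∈ Q, ‖u p‖ = 1) (k : ℕ)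
    {p : ℕ} (hp : p ∈ Q) (τ : ℝ) :
    ‖resonator k u Q τ‖ * ‖u p * phase τ p - 1‖ ≤ 2 * ‖resonator k u (Q.erase p) τ‖ := by
  have hnorm : ‖u p * phase τ p‖ = 1 := by
    rw [norm_mul, hu p hp, norm_phase (hQ p hp).ne_zero, one_mul]
  rw [resonator, ← Finset.mul_prod_erase _ _ hp, ← norm_mul, mul_right_comm, geom_sum_mul, norm_mul]
  refine mul_le_mul_of_nonneg_right ((norm_sub_le _ _).trans ?_) (norm_nonneg _)
  rw [norm_pow, hnorm, one_pow, norm_one]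
  norm_num

lemma integral_norm_sq_resonator_mul_phaseError_le (hQ : ∀ p ∈ Q, p.Prime)
    (hu : ∀ p ∈ Q, ‖u p‖ = 1) (k : ℕ) (T : ℝ) :
    ∫ τ in Icc (-T) T, ‖resonator k u Q τ‖ ^ 2 * phaseError u Q τ
      ≤ ∑ p ∈ Q, 4 * ∫ τ in Icc (-T) T, ‖resonator k u (Q.erase p) τ‖ ^ 2 := by
  have hint (p : ℕ) :
      IntegrableOn (fun τ ↦ 4 * ‖resonator k u (Q.erase p) τ‖ ^ 2) (Icc (-T) T) :=
    (((continuous_resonator k u fun q hq ↦ hQ q (Finset.mem_of_mem_erase hq)).norm.pow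
      2).const_mul 4).integrableOn_Icc
  simp only [← integral_const_mul]
  rw [← integral_finsetSum Q fun p _ ↦ hint p]
  refine integral_mono (((continuous_resonator k u hQ).norm.pow 2).mul
    (continuous_phaseError u hQ)).integrableOn_Icc (integrable_finsetSum Q fun p _ ↦ hint p)
    fun τ ↦ ?_
  simp only [phaseError, Finset.mul_sum]
  refine Finset.sum_le_sum fun p hp ↦ ?_
  calc ‖resonator k u Q τ‖ ^ 2 * ‖u p * phase τ p - 1‖ ^ 2
      = (‖resonator k u Q τ‖ * ‖u p * phase τ p - 1‖) ^ 2 := by ring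
    _ ≤ (2 * ‖resonator k u (Q.erase p) τ‖) ^ 2 := by
      exact pow_le_pow_left₀ (by positivity) (norm_resonator_mul_norm_sub_one_le hQ hu k hp τ) 2
    _ = 4 * ‖resonator k u (Q.erase p) τ‖ ^ 2 := by ring

lemma eventually_mean_resonator_mul_phaseError_lt (hQ : ∀ p ∈ Q, p.Prime)
    (hu : ∀ p ∈ Q, ‖u p‖ = 1) (k : ℕ) {A : ℝ} (hA : 4 * Q.card * (k : ℝ) ^ (Q.card - 1) < A) :
    ∀ᶠ T : ℝ in atTop,
      (2 * T)⁻¹ * ∫ τ in Icc (-T) T, ‖resonator k u Q τ‖ ^ 2 * phaseError u Q τ < A := by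
  have hlim : Tendsto (fun T : ℝ ↦ ∑ p ∈ Q, 4 *
      ((2 * T)⁻¹ * ∫ τ in Icc (-T) T, ‖resonator k u (Q.erase p) τ‖ ^ 2)) atTop
      (𝓝 (∑ p ∈ Q, 4 * (k : ℝ) ^ (Q.erase p).card)) :=
    tendsto_finsetSum _ fun p _ ↦ (tendsto_mean_norm_sq_resonator
      (fun q hq ↦ hQ q (Finset.mem_of_mem_erase hq))
      (fun q hq ↦ hu q (Finset.mem_of_mem_erase hq)) k).const_mul 4
  have hval : ∑ p ∈ Q, 4 * (k : ℝ) ^ (Q.erase p).card = 4 * Q.card * (k : ℝ) ^ (Q.card - 1) := by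
    rw [Finset.sum_congr rfl fun p hp ↦ by rw [Finset.card_erase_of_mem hp], Finset.sum_const,
      nsmul_eq_mul]
    ring
  filter_upwards [hlim.eventually_lt_const (hval ▸ hA), eventually_gt_atTop 0] with T hT hT0
  refine lt_of_le_of_lt ?_ hT
  simp only [mul_left_comm (4 : ℝ)]
  rw [← Finset.mul_sum]
  exact mul_le_mul_of_nonneg_left (integral_norm_sq_resonator_mul_phaseError_le hQ hu k T)
    (by positivity)

end Resonator

section CircleEnergy

/-- The squared `L²` norm of `f` on the circle with center `z` and radius `r`, with respect to the
angle. -/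
noncomputable def circleEnergy (f : ℂ → ℂ) (z : ℂ) (r : ℝ) : ℝ :=
  ∫ φ in Icc 0 (2 * Real.pi), ‖f (circleMap z r φ)‖ ^ 2

lemma circleEnergy_nonneg (f : ℂ → ℂ) (z : ℂ) (r : ℝ) : 0 ≤ circleEnergy f z r :=
  integral_nonneg fun _ ↦ sq_nonneg _

lemma abs_re_circleMap_sub_re_le (z : ℂ) (r φ : ℝ) : |(circleMap z r φ).re - z.re| ≤ |r| := by
  rw [← Complex.sub_re, ← norm_circleMap_zero r φ, ← circleMap_sub_center z]
  exact Complex.abs_re_le_norm _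

lemma differentiableAt_deletedZeta {Q : Finset ℕ} (hQ : ∀ p ∈ Q, p.Prime) {s : ℂ} (hs : s ≠ 1) :
    DifferentiableAt ℂ (deletedZeta Q) s :=
  (DifferentiableAt.fun_finsetProd fun p hp ↦ (DifferentiableAt.const_cpow differentiableAt_id.neg
    (Or.inl (Nat.cast_ne_zero.2 (hQ p hp).ne_zero))).const_sub 1).mul
    (differentiableAt_riemannZeta hs)

variable {Q : Finset ℕ} {u : ℕ → ℂ} {x r : ℝ}

lemma continuous_deletedZeta_circleMap (hQ : ∀ p ∈ Q, p.Prime) (hr : 0 ≤ r) (h1 : x + r < 1) :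
    Continuous fun q : ℝ × ℝ ↦ deletedZeta Q (circleMap x r q.2 + q.1 * Complex.I) := by
  refine continuous_iff_continuousAt.2 fun q ↦ ?_
  have hne : circleMap x r q.2 + q.1 * Complex.I ≠ 1 := fun h ↦ by
    have hre := congrArg Complex.re h
    have habs := abs_le.1 (abs_re_circleMap_sub_re_le x r q.2)
    simp [abs_of_nonneg hr] at hre habs
    linarith
  have hcont : Continuous fun q : ℝ × ℝ ↦ circleMap x r q.2 + q.1 * Complex.I :=
    ((continuous_circleMap _ r).comp continuous_snd).add (by fun_prop)
  exact (differentiableAt_deletedZeta hQ hne).continuousAt.comp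
    (f := fun q : ℝ × ℝ ↦ circleMap x r q.2 + q.1 * Complex.I) hcont.continuousAt

lemma circleEnergy_add_mul_I (f : ℂ → ℂ) (z : ℂ) (r τ : ℝ) :
    circleEnergy f (z + τ * Complex.I) r
      = ∫ φ in Icc 0 (2 * Real.pi), ‖f (circleMap z r φ + τ * Complex.I)‖ ^ 2 := by
  simp only [circleEnergy, circleMap, add_right_comm]

lemma continuous_circleEnergy_deletedZeta (hQ : ∀ p ∈ Q, p.Prime) (hr : 0 ≤ r) (h1 : x + r < 1) :
    Continuous fun τ : ℝ ↦
      circleEnergy (fun s ↦ deletedZeta Q s - 1) (x + τ * Complex.I) r := by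
  simp only [circleEnergy_add_mul_I]
  exact continuous_parametric_integral_of_continuous
    (((continuous_deletedZeta_circleMap hQ hr h1).sub continuous_const).norm.pow 2) isCompact_Icc

lemma integral_norm_sq_mul_circleEnergy (hQ : ∀ p ∈ Q, p.Prime) (hr : 0 ≤ r) (h1 : x + r < 1)
    {w : ℝ → ℂ} (hw : Continuous w) (T : ℝ) :
    ∫ τ in Icc (-T) T,
        ‖w τ‖ ^ 2 * circleEnergy (fun s ↦ deletedZeta Q s - 1) (x + τ * Complex.I) r
      = ∫ φ in Icc 0 (2 * Real.pi), ∫ τ in Icc (-T) T,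
          ‖w τ * (deletedZeta Q (circleMap x r φ + τ * Complex.I) - 1)‖ ^ 2 := by
  simp only [circleEnergy_add_mul_I, ← integral_const_mul, ← mul_pow, ← norm_mul]
  refine integral_integral_swap ?_
  rw [Measure.prod_restrict]
  exact (((hw.comp continuous_fst).mul ((continuous_deletedZeta_circleMap hQ hr h1).sub
    continuous_const)).norm.pow 2).continuousOn.integrableOn_compact
    (isCompact_Icc.prod isCompact_Icc)

lemma exists_integral_resonator_mul_circleEnergy_le (hQ : ∀ p ∈ Q, p.Prime)
    (hu : ∀ p ∈ Q, ‖u p‖ = 1) (k : ℕ) (hr : 0 ≤ r) (h0 : 1 / 2 < x - r) (h1 : x + r < 1) :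
    ∃ K, ∀ S T : ℝ, 2 ≤ T →
      (∀ N : ℕ, ∑ n ∈ Finset.Icc 1 N, ‖roughTail Q n‖ ^ 2 * (n : ℝ) ^ (-2 * (x - r)) ≤ S) →
      ∫ τ in Icc (-T) T, ‖resonator k u Q τ‖ ^ 2 *
          circleEnergy (fun s ↦ deletedZeta Q s - 1) (x + τ * Complex.I) r
        ≤ 2 * Real.pi *
          (512 * Real.pi * (T * ((k : ℝ) ^ Q.card * S) + K * T ^ (2 - 2 * (x - r)))) := by
  obtain ⟨K, hK, hbound⟩ := exists_integral_norm_sq_resonator_mul_le hQ hu k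
  refine ⟨(4 + 1 / (1 - (x + r))) * K, fun S T hT hS ↦ ?_⟩
  have hcircle (φ : ℝ) : ∫ τ in Icc (-T) T,
      ‖resonator k u Q τ * (deletedZeta Q (circleMap x r φ + τ * Complex.I) - 1)‖ ^ 2
        ≤ 512 * Real.pi * (T * ((k : ℝ) ^ Q.card * S)
          + (4 + 1 / (1 - (x + r))) * K * T ^ (2 - 2 * (x - r))) := by
    obtain ⟨hlow, hup⟩ : x - r ≤ (circleMap x r φ).re ∧ (circleMap x r φ).re ≤ x + r := by
      have habs := abs_le.1 (abs_re_circleMap_sub_re_le x r φ)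
      rw [abs_of_nonneg hr, Complex.ofReal_re] at habs
      constructor <;> linarith
    have hnorm : ‖circleMap x r φ‖ ≤ 2 := by
      have hdist := norm_sub_norm_le (circleMap x r φ) x
      rw [circleMap_sub_center, norm_circleMap_zero, abs_of_nonneg hr, Complex.norm_real,
        Real.norm_of_nonneg (by linarith)] at hdist
      linarith
    refine (hbound _ S T (h0.trans_le hlow) (hup.trans_lt h1) hnorm hT fun N ↦
      (Finset.sum_le_sum fun n hn ↦ ?_).trans (hS N)).trans ?_
    · gcongr 1
      exact Real.rpow_le_rpow_of_exponent_le (Nat.one_le_cast.2 (Finset.mem_Icc.1 hn).1)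
        (by linarith)
    · have : 0 < 1 - (x + r) := by linarith
      gcongr
      linarith
  rw [integral_norm_sq_mul_circleEnergy hQ hr h1 (continuous_resonator k u hQ)]
  refine (integral_mono_of_nonneg (.of_forall fun φ ↦ integral_nonneg fun τ ↦ by positivity)
    (integrable_const _) (.of_forall hcircle)).trans_eq ?_
  simp [Real.pi_pos.le]

lemma eventually_mean_resonator_mul_circleEnergy_lt (hQ : ∀ p ∈ Q, p.Prime)
    (hu : ∀ p ∈ Q, ‖u p‖ = 1) (k : ℕ) (hr : 0 ≤ r) (h0 : 1 / 2 < x - r) (h1 : x + r < 1) {S A : ℝ}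
    (hS : ∀ N : ℕ, ∑ n ∈ Finset.Icc 1 N, ‖roughTail Q n‖ ^ 2 * (n : ℝ) ^ (-2 * (x - r)) ≤ S)
    (hA : 512 * Real.pi ^ 2 * (k : ℝ) ^ Q.card * S < A) :
    ∀ᶠ T : ℝ in atTop, (2 * T)⁻¹ * ∫ τ in Icc (-T) T, ‖resonator k u Q τ‖ ^ 2 *
      circleEnergy (fun s ↦ deletedZeta Q s - 1) (x + τ * Complex.I) r < A := by
  obtain ⟨K, hK⟩ := exists_integral_resonator_mul_circleEnergy_le hQ hu k hr h0 h1
  have hlim : Tendsto (fun T : ℝ ↦ 512 * Real.pi ^ 2 * (k : ℝ) ^ Q.card * S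
      + 512 * Real.pi ^ 2 * K * T ^ (-(2 * (x - r) - 1))) atTop
      (𝓝 (512 * Real.pi ^ 2 * (k : ℝ) ^ Q.card * S)) := by
    simpa using ((tendsto_rpow_neg_atTop (by linarith : 0 < 2 * (x - r) - 1)).const_mul
      (512 * Real.pi ^ 2 * K)).const_add (512 * Real.pi ^ 2 * (k : ℝ) ^ Q.card * S)
  filter_upwards [hlim.eventually_lt_const hA, eventually_ge_atTop 2] with T hT hT2
  refine lt_of_le_of_lt ?_ hT
  have hT0 : 0 < T := by linarith
  calc _ ≤ (2 * T)⁻¹ * (2 * Real.pi *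
        (512 * Real.pi * (T * ((k : ℝ) ^ Q.card * S) + K * T ^ (2 - 2 * (x - r))))) := by
        gcongr
        exact hK S T hT2 hS
    _ = _ := by
        rw [show 2 - 2 * (x - r) = 1 + -(2 * (x - r) - 1) by ring, Real.rpow_add hT0,
          Real.rpow_one]
        field_simp

end CircleEnergy

section PhaseSelection

lemma exists_forall_sum_lt {f : ℕ → ℝ} (hf : Summable f) {ε : ℝ} (hε : 0 < ε) :
    ∃ M, ∀ F : Finset ℕ, (∀ n ∈ F, M ≤ n) → ∑ n ∈ F, f n < ε := by
  obtain ⟨s, hs⟩ := summable_iff_vanishing_norm.1 hf ε hε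
  refine ⟨s.sup id + 1, fun F hF ↦ (Real.le_norm_self _).trans_lt (hs F ?_)⟩
  exact Finset.disjoint_left.2 fun n hn hns ↦
    absurd (hF n hn) (Nat.not_le.2 (Nat.lt_succ_of_le (Finset.le_sup (f := id) hns)))

variable {Q : Finset ℕ} {u : ℕ → ℂ} {x r : ℝ}

lemma sq_le_phaseError {δ τ : ℝ} (hδ : 0 ≤ δ) {p : ℕ} (hp : p ∈ Q)
    (h : δ ≤ ‖u p * phase τ p - 1‖) : δ ^ 2 ≤ phaseError u Q τ :=
  (pow_le_pow_left₀ hδ h 2).trans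
    (Finset.single_le_sum (f := fun p ↦ ‖u p * phase τ p - 1‖ ^ 2) (fun _ _ ↦ sq_nonneg _) hp)

lemma phaseError_nonneg (u : ℕ → ℂ) (Q : Finset ℕ) (τ : ℝ) : 0 ≤ phaseError u Q τ :=
  Finset.sum_nonneg fun _ _ ↦ sq_nonneg _

lemma exists_pow_card_bound (Q : Finset ℕ) {δ : ℝ} (hδ : 0 < δ) :
    ∃ k : ℕ, 0 < k ∧ 4 * Q.card * (k : ℝ) ^ (Q.card - 1) < δ * k ^ Q.card := by
  obtain ⟨k, hk⟩ := exists_nat_gt (4 * Q.card / δ)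
  have hk0 : (0 : ℝ) < k := lt_of_le_of_lt (by positivity) hk
  refine ⟨k, Nat.cast_pos.1 hk0, ?_⟩
  rw [div_lt_iff₀' hδ] at hk
  rcases hcard : Q.card with _ | c
  · simpa
  · rw [hcard] at hk
    rw [Nat.add_sub_cancel, pow_succ', ← mul_assoc]
    gcongr

lemma exists_lt_and_lt_of_integral_lt {α : Type*} [MeasurableSpace α] {μ : Measure α}
    {w f g : α → ℝ} (hw0 : ∀ a, 0 ≤ w a) (hf0 : ∀ a, 0 ≤ f a) (hg0 : ∀ a, 0 ≤ g a)
    (hw : Integrable w μ) (hf : Integrable (fun a ↦ w a * f a) μ)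
    (hg : Integrable (fun a ↦ w a * g a) μ) {ε δ : ℝ} (hε : 0 < ε) (hδ : 0 < δ)
    (h : ε⁻¹ * ∫ a, w a * f a ∂μ + δ⁻¹ * ∫ a, w a * g a ∂μ < ∫ a, w a ∂μ) :
    ∃ a, f a < ε ∧ g a < δ := by
  by_contra! hcon
  have hone (a : α) : 1 ≤ ε⁻¹ * f a + δ⁻¹ * g a := by
    rcases lt_or_ge (f a) ε with hfa | hfa
    · exact le_add_of_nonneg_of_le (mul_nonneg (by positivity) (hf0 a))
        ((one_le_inv_mul₀ hδ).2 (hcon a hfa))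
    · exact le_add_of_le_of_nonneg ((one_le_inv_mul₀ hε).2 hfa)
        (mul_nonneg (by positivity) (hg0 a))
  refine h.not_ge ?_
  rw [← integral_const_mul, ← integral_const_mul, ← integral_add (hf.const_mul _) (hg.const_mul _)]
  refine integral_mono hw ((hf.const_mul _).add (hg.const_mul _)) fun a ↦ ?_
  calc w a ≤ w a * (ε⁻¹ * f a + δ⁻¹ * g a) := le_mul_of_one_le_right (hw0 a) (hone a)
    _ = ε⁻¹ * (w a * f a) + δ⁻¹ * (w a * g a) := by ring

lemma exists_circleEnergy_lt_and_phaseError_lt (hQ : ∀ p ∈ Q, p.Prime)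
    (hu : ∀ p ∈ Q, ‖u p‖ = 1) (hr : 0 ≤ r) (h0 : 1 / 2 < x - r) (h1 : x + r < 1) {ε δ S : ℝ}
    (hε : 0 < ε) (hδ : 0 < δ)
    (hS : ∀ N : ℕ, ∑ n ∈ Finset.Icc 1 N, ‖roughTail Q n‖ ^ 2 * (n : ℝ) ^ (-2 * (x - r)) ≤ S)
    (hSε : 512 * Real.pi ^ 2 * S < ε / 3) :
    ∃ τ : ℝ, circleEnergy (fun s ↦ deletedZeta Q s - 1) (x + τ * Complex.I) r < ε ∧
      phaseError u Q τ < δ := by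
  obtain ⟨k, hk0, hk⟩ := exists_pow_card_bound Q (div_pos hδ three_pos)
  set X : ℝ := (k : ℝ) ^ Q.card
  have hX : 0 < X := by positivity
  obtain ⟨T, hE, hP, hW, hT⟩ := ((eventually_mean_resonator_mul_circleEnergy_lt hQ hu k hr h0 h1
    (A := ε * (X / 3)) hS (by nlinarith)).and
    ((eventually_mean_resonator_mul_phaseError_lt hQ hu k (A := δ * (X / 3)) (by linarith)).and
    (((tendsto_mean_norm_sq_resonator hQ hu k).eventually_const_lt
      (by linarith : X / 3 + X / 3 < X)).and (eventually_gt_atTop 0)))).exists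
  have hWc : Continuous fun τ ↦ ‖resonator k u Q τ‖ ^ 2 :=
    (continuous_resonator k u hQ).norm.pow 2
  refine exists_lt_and_lt_of_integral_lt (μ := volume.restrict (Icc (-T) T)) (fun _ ↦ sq_nonneg _)
    (fun _ ↦ circleEnergy_nonneg _ _ _) (fun _ ↦ phaseError_nonneg _ _ _) hWc.integrableOn_Icc
    (hWc.mul (continuous_circleEnergy_deletedZeta hQ hr h1)).integrableOn_Icc
    (hWc.mul (continuous_phaseError u hQ)).integrableOn_Icc hε hδ
    (lt_of_mul_lt_mul_left (a := (2 * T)⁻¹) ?_ (by positivity))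
  rw [mul_add, mul_left_comm, mul_left_comm _ δ⁻¹]
  exact (add_lt_add ((inv_mul_lt_iff₀ hε).2 hE) ((inv_mul_lt_iff₀ hδ).2 hP)).trans hW

theorem exists_phase_near_and_circleEnergy_lt (hr : 0 ≤ r) (h0 : 1 / 2 < x - r) (h1 : x + r < 1)
    {ε : ℝ} (hε : 0 < ε) :
    ∃ M₀ : ℕ, ∀ M ≥ M₀, ∀ z : ℕ → ℂ, (∀ p, ‖z p‖ = 1) → ∀ δ > 0, ∃ τ : ℝ,
      (∀ p ∈ M.primesBelow, ‖phase τ p - z p‖ < δ) ∧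
      circleEnergy (fun s ↦ deletedZeta M.primesBelow s - 1) (x + τ * Complex.I) r < ε := by
  obtain ⟨M₀, hM₀⟩ := exists_forall_sum_lt
    (Real.summable_nat_rpow.2 (by linarith : -2 * (x - r) < -1))
    (by positivity : 0 < ε / (2048 * Real.pi ^ 2))
  refine ⟨M₀, fun M hM z hz δ hδ ↦ ?_⟩
  have hQ : ∀ p ∈ M.primesBelow, p.Prime := fun p ↦ Nat.prime_of_mem_primesBelow
  have hS := sum_norm_sq_roughTail_primesBelow_le (M := M) (a := -2 * (x - r)) fun N ↦
    (hM₀ (Finset.Icc M N) fun n hn ↦ hM.trans (Finset.mem_Icc.1 hn).1).le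
  obtain ⟨τ, hE, hphase⟩ := exists_circleEnergy_lt_and_phaseError_lt hQ
    (u := fun p ↦ (starRingEnd ℂ) (z p)) (fun p _ ↦ by simp [hz]) hr h0 h1 hε (pow_pos hδ 2) hS
    (by field_simp; norm_num)
  refine ⟨τ, fun p hp ↦ ?_, hE⟩
  by_contra! h
  have hconj : (starRingEnd ℂ) (z p) * z p = 1 := by simp [Complex.conj_mul', hz]
  refine hphase.not_ge (sq_le_phaseError hδ.le hp (h.trans_eq ?_))
  rw [← hconj, ← mul_sub, norm_mul, RCLike.norm_conj, hz, one_mul]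

end PhaseSelection

section UnimodularSums

variable {ι V : Type*} [NormedAddCommGroup V]

lemma exists_norm_eq_one_and_norm_add_smul_sq_le [InnerProductSpace ℂ V] (e v : V) {a : ℂ}
    (ha : ‖a‖ ≤ 1) : ∃ z : ℂ, ‖z‖ = 1 ∧ ‖e + (z - a) • v‖ ^ 2 ≤ ‖e‖ ^ 2 + 4 * ‖v‖ ^ 2 := by
  obtain ⟨z, hz, hzw⟩ := RCLike.exists_norm_eq_mul_self (inner ℂ e v)
  refine ⟨-z, by simpa using hz, ?_⟩
  have hcross : (inner ℂ e ((-z - a) • v)).re ≤ 0 := by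
    have hle : -(a * inner ℂ e v).re ≤ ‖inner ℂ e v‖ :=
      calc -(a * inner ℂ e v).re ≤ ‖a * inner ℂ e v‖ :=
            (neg_le_abs _).trans (Complex.abs_re_le_norm _)
        _ ≤ ‖inner ℂ e v‖ := by
            rw [norm_mul]
            exact mul_le_of_le_one_left (norm_nonneg _) ha
    rw [inner_smul_right, sub_mul, neg_mul, ← hzw]
    simp only [Complex.sub_re, Complex.neg_re, Complex.coe_algebraMap, Complex.ofReal_re]
    linarith
  have hsq : ‖(-z - a) • v‖ ^ 2 ≤ 4 * ‖v‖ ^ 2 := by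
    have hle : ‖-z - a‖ ≤ 2 := (norm_sub_le _ _).trans (by rw [norm_neg]; linarith)
    calc ‖(-z - a) • v‖ ^ 2 = ‖-z - a‖ ^ 2 * ‖v‖ ^ 2 := by rw [norm_smul, mul_pow]
      _ ≤ 2 ^ 2 * ‖v‖ ^ 2 := by gcongr
      _ = 4 * ‖v‖ ^ 2 := by norm_num
  rw [norm_add_sq (𝕜 := ℂ)]
  simp only [RCLike.re_eq_complex_re]
  linarith

lemma exists_norm_eq_one_and_norm_sum_sub_smul_sq_le [InnerProductSpace ℂ V] (v : ι → V)
    {a : ι → ℂ} (ha : ∀ n, ‖a n‖ ≤ 1) (s : Finset ι) :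
    ∃ z : ι → ℂ, (∀ n, ‖z n‖ = 1) ∧
      ‖∑ n ∈ s, (z n - a n) • v n‖ ^ 2 ≤ 4 * ∑ n ∈ s, ‖v n‖ ^ 2 := by
  classical
  induction s using Finset.induction_on with
  | empty => exact ⟨fun _ ↦ 1, by simp, by simp⟩
  | insert p s hp ih =>
    obtain ⟨z, hz, hbound⟩ := ih
    obtain ⟨w, hw, hstep⟩ :=
      exists_norm_eq_one_and_norm_add_smul_sq_le (∑ n ∈ s, (z n - a n) • v n) (v p) (ha p)
    refine ⟨Function.update z p w, fun n ↦ ?_, ?_⟩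
    · obtain rfl | hn := eq_or_ne n p <;> simp [*]
    · have hrest : ∑ n ∈ s, (Function.update z p w n - a n) • v n =
          ∑ n ∈ s, (z n - a n) • v n :=
        Finset.sum_congr rfl fun n hn ↦ by
          rw [Function.update_of_ne (ne_of_mem_of_not_mem hn hp)]
      rw [Finset.sum_insert hp, Finset.sum_insert hp, hrest, Function.update_self, add_comm]
      linarith

/-- The finite linear combinations of the vectors `v n` whose coefficients lie in the closed unit
disc, the convex relaxation of the sums with unimodular coefficients. -/
def discSums [NormedSpace ℂ V] (v : ι → V) : Set V :=
  Finsupp.linearCombination ℂ v '' {a | ∀ n, ‖a n‖ ≤ 1}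

lemma sum_smul_mem_discSums [NormedSpace ℂ V] (v : ι → V) {a : ι → ℂ} (ha : ∀ n, ‖a n‖ ≤ 1)
    (s : Finset ι) : ∑ n ∈ s, a n • v n ∈ discSums v := by
  classical
  refine ⟨Finsupp.indicator s fun n _ ↦ a n, fun n ↦ ?_, ?_⟩
  · rw [Finsupp.indicator_apply]
    split_ifs
    · exact ha n
    · simp
  · rw [Finsupp.linearCombination_apply_of_mem_supported ℂ
      (Finsupp.mem_supported _ _ |>.2 (Finset.coe_subset.2 (Finsupp.support_indicator_subset s _)))]
    exact Finset.sum_congr rfl fun n hn ↦ by rw [Finsupp.indicator_of_mem hn]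

lemma convex_discSums [NormedSpace ℂ V] (v : ι → V) : Convex ℝ (discSums v) := by
  refine Convex.linear_image (f := (Finsupp.linearCombination ℂ v).restrictScalars ℝ) ?_
  intro a ha b hb s t hs ht hst n
  simpa using convex_closedBall (0 : ℂ) 1 (by simpa using ha n) (by simpa using hb n) hs ht hst

theorem dense_discSums [NormedSpace ℂ V] {v : ι → V}
    (hv : ∀ f : V →L[ℂ] ℂ, f ≠ 0 → ¬ Summable fun n ↦ ‖f (v n)‖) : Dense (discSums v) := by
  by_contra hdense
  obtain ⟨c, hc⟩ : ∃ c, c ∉ closure (discSums v) := by simpa [Dense] using hdense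
  obtain ⟨f, u, hlt, hgt⟩ := RCLike.geometric_hahn_banach_closed_point (𝕜 := ℂ)
    (convex_discSums v).closure isClosed_closure hc
  have hf : f ≠ 0 := by
    rintro rfl
    have := hlt 0 (subset_closure ⟨0, by simp, by simp⟩)
    simp only [zero_apply, map_zero] at this hgt
    exact lt_asymm this hgt
  choose z hz hzf using fun n ↦ RCLike.exists_norm_eq_mul_self (f (v n))
  refine hv f hf (summable_of_sum_le (c := u) (fun n ↦ norm_nonneg _) fun s ↦ ?_)
  have hre := hlt _ (subset_closure (sum_smul_mem_discSums v (fun n ↦ (hz n).le) s))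
  rw [map_sum, map_sum] at hre
  refine le_of_eq_of_le (Finset.sum_congr rfl fun n _ ↦ ?_) hre.le
  rw [map_smul, smul_eq_mul, ← hzf, RCLike.ofReal_re]

lemma exists_norm_sum_Ico_smul_sub_lt [NormedSpace ℂ V] {v : ℕ → V}
    (hv : ∀ f : V →L[ℂ] ℂ, f ≠ 0 → ¬ Summable fun n ↦ ‖f (v n)‖) (N : ℕ) (c : V) {ε : ℝ}
    (hε : 0 < ε) : ∃ M ≥ N, ∃ a : ℕ → ℂ, (∀ n, ‖a n‖ ≤ 1) ∧
      ‖∑ n ∈ Finset.Ico N M, a n • v n - c‖ < ε := by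
  have hshift : Dense (discSums fun n ↦ v (n + N)) := dense_discSums fun f hf hs ↦
    hv f hf ((summable_nat_add_iff (f := fun n ↦ ‖f (v n)‖) N).1 hs)
  obtain ⟨_, hac, a, ha, rfl⟩ := Metric.dense_iff.1 hshift c ε hε
  obtain ⟨K, hK⟩ := a.support.exists_nat_subset_range
  refine ⟨N + K, Nat.le_add_right N K, fun n ↦ a (n - N), fun n ↦ ha _, ?_⟩
  rw [Finsupp.linearCombination_apply_of_mem_supported ℂ
    ((Finsupp.mem_supported _ _).2 (Finset.coe_subset.2 hK)), mem_ball_iff_norm] at hac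
  simpa [Finset.sum_Ico_eq_sum_range, add_comm] using hac

theorem exists_norm_eq_one_and_norm_sum_Ico_smul_sub_lt [InnerProductSpace ℂ V] {v : ℕ → V}
    (hv : ∀ f : V →L[ℂ] ℂ, f ≠ 0 → ¬ Summable fun n ↦ ‖f (v n)‖)
    (hsq : Summable fun n ↦ ‖v n‖ ^ 2) {ε : ℝ} (hε : 0 < ε) :
    ∃ N₀, ∀ N ≥ N₀, ∀ c : V, ∃ M ≥ N, ∃ z : ℕ → ℂ, (∀ n, ‖z n‖ = 1) ∧
      ‖∑ n ∈ Finset.Ico N M, z n • v n - c‖ < ε := by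
  obtain ⟨N₀, htail⟩ := exists_forall_sum_lt hsq (ε := (ε / 4) ^ 2) (by positivity)
  refine ⟨N₀, fun N hN c ↦ ?_⟩
  obtain ⟨M, hM, a, ha, hac⟩ := exists_norm_sum_Ico_smul_sub_lt hv N c (half_pos hε)
  obtain ⟨z, hz, hza⟩ := exists_norm_eq_one_and_norm_sum_sub_smul_sq_le v ha (Finset.Ico N M)
  refine ⟨M, hM, z, hz, ?_⟩
  have hround : ‖∑ n ∈ Finset.Ico N M, (z n - a n) • v n‖ < ε / 2 := by
    have hsmall := htail (Finset.Ico N M) fun n hn ↦ hN.trans (Finset.mem_Ico.1 hn).1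
    exact lt_of_pow_lt_pow_left₀ 2 (by positivity) (by linarith)
  calc ‖∑ n ∈ Finset.Ico N M, z n • v n - c‖
      = ‖∑ n ∈ Finset.Ico N M, (z n - a n) • v n
          + (∑ n ∈ Finset.Ico N M, a n • v n - c)‖ := by
        simp only [sub_smul, Finset.sum_sub_distrib]
        abel_nf
    _ ≤ ‖∑ n ∈ Finset.Ico N M, (z n - a n) • v n‖ + ‖∑ n ∈ Finset.Ico N M, a n • v n - c‖ :=
        norm_add_le _ _
    _ < ε := by linarith

end UnimodularSums

section CauchyEstimate

variable {f : ℂ → ℂ} {c : ℂ} {r : ℝ}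

lemma norm_iteratedDeriv_le_integral_circleMap (hr : 0 < r)
    (hf : DifferentiableOn ℂ f (Metric.closedBall c r)) (n : ℕ) :
    ‖iteratedDeriv n f c‖ ≤
      n.factorial / (2 * Real.pi * r ^ n) *
        ∫ φ in Icc 0 (2 * Real.pi), ‖f (circleMap c r φ)‖ := by
  have hpi := Real.pi_pos
  have hcauchy : ‖∮ z in C(c, r), (1 / (z - c) ^ (n + 1)) • f z‖ ≤
      (r ^ n)⁻¹ * ∫ φ in Icc 0 (2 * Real.pi), ‖f (circleMap c r φ)‖ := by
    rw [circleIntegral, intervalIntegral.integral_of_le (by positivity),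
      ← integral_Icc_eq_integral_Ioc, ← integral_const_mul]
    refine (norm_integral_le_integral_norm _).trans_eq (integral_congr_ae (.of_forall fun φ ↦ ?_))
    simp only [norm_smul, deriv_circleMap, norm_mul, Complex.norm_I, mul_one, norm_circleMap_zero,
      norm_div, norm_pow, circleMap_sub_center, abs_of_pos hr, norm_one]
    field_simp
    ring
  rw [hf.circleIntegral_one_div_sub_center_pow_smul hr n, norm_smul] at hcauchy
  have hfac : ‖(2 * Real.pi * Complex.I / n.factorial : ℂ)‖ = 2 * Real.pi / n.factorial := by
    simp [abs_of_pos hpi]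
  rw [hfac] at hcauchy
  calc ‖iteratedDeriv n f c‖
      = n.factorial / (2 * Real.pi) *
          (2 * Real.pi / n.factorial * ‖iteratedDeriv n f c‖) := by field_simp
    _ ≤ n.factorial / (2 * Real.pi) *
          ((r ^ n)⁻¹ * ∫ φ in Icc 0 (2 * Real.pi), ‖f (circleMap c r φ)‖) := by gcongr
    _ = _ := by field_simp

lemma integral_norm_circleMap_le_of_circleEnergy_le
    (hf : Continuous fun φ ↦ f (circleMap c r φ)) {a : ℝ} (ha : 0 < a)
    (h : circleEnergy f c r ≤ a ^ 2) :
    ∫ φ in Icc 0 (2 * Real.pi), ‖f (circleMap c r φ)‖ ≤ 2 * Real.pi * a := by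
  have hsq : IntegrableOn (fun φ ↦ (2 * a)⁻¹ * ‖f (circleMap c r φ)‖ ^ 2)
      (Icc 0 (2 * Real.pi)) := (continuous_const.mul (hf.norm.pow 2)).integrableOn_Icc
  calc ∫ φ in Icc 0 (2 * Real.pi), ‖f (circleMap c r φ)‖
      ≤ ∫ φ in Icc 0 (2 * Real.pi), (a / 2 + (2 * a)⁻¹ * ‖f (circleMap c r φ)‖ ^ 2) := by
        refine integral_mono hf.norm.integrableOn_Icc
          (continuous_const.integrableOn_Icc.add hsq) fun φ ↦ ?_
        have hamgm : 0 ≤ (2 * a)⁻¹ * (a - ‖f (circleMap c r φ)‖) ^ 2 := by positivity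
        have hexpand : (2 * a)⁻¹ * (a - ‖f (circleMap c r φ)‖) ^ 2 =
            a / 2 + (2 * a)⁻¹ * ‖f (circleMap c r φ)‖ ^ 2 - ‖f (circleMap c r φ)‖ := by
          field_simp
          ring
        linarith
    _ = 2 * Real.pi * (a / 2) + (2 * a)⁻¹ * circleEnergy f c r := by
        rw [integral_add continuous_const.integrableOn_Icc hsq, integral_const_mul, circleEnergy]
        simp [Real.pi_pos.le]
    _ ≤ 2 * Real.pi * (a / 2) + (2 * a)⁻¹ * a ^ 2 := by gcongr
    _ = (Real.pi + 1 / 2) * a := by field_simp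
    _ ≤ 2 * Real.pi * a := by
        have := Real.pi_gt_three
        gcongr
        linarith

lemma norm_iteratedDeriv_le_of_circleEnergy_le (hr : 0 < r)
    (hf : DifferentiableOn ℂ f (Metric.closedBall c r)) (n : ℕ) {a : ℝ} (ha : 0 < a)
    (h : circleEnergy f c r ≤ a ^ 2) : ‖iteratedDeriv n f c‖ ≤ n.factorial / r ^ n * a := by
  have hcont : Continuous fun φ ↦ f (circleMap c r φ) :=
    hf.continuousOn.comp_continuous (continuous_circleMap c r)
      (circleMap_mem_closedBall c hr.le)
  calc ‖iteratedDeriv n f c‖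
      ≤ n.factorial / (2 * Real.pi * r ^ n) *
          ∫ φ in Icc 0 (2 * Real.pi), ‖f (circleMap c r φ)‖ :=
        norm_iteratedDeriv_le_integral_circleMap hr hf n
    _ ≤ n.factorial / (2 * Real.pi * r ^ n) * (2 * Real.pi * a) := by
        gcongr
        exact integral_norm_circleMap_le_of_circleEnergy_le hcont ha h
    _ = n.factorial / r ^ n * a := by field_simp

lemma norm_iteratedDeriv_le_of_forall_mem_closedBall {C : ℝ} (hr : 0 < r)
    (hf : DifferentiableOn ℂ f (Metric.closedBall c r))
    (hC : ∀ s ∈ Metric.closedBall c r, ‖f s‖ ≤ C) (n : ℕ) :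
    ‖iteratedDeriv n f c‖ ≤ n.factorial / r ^ n * C := by
  rw [div_mul_eq_mul_div]
  exact Complex.norm_iteratedDeriv_le_of_forall_mem_sphere_norm_le n hr
    (hf.mono Metric.closure_ball_subset_closedBall).diffContOnCl
    fun s hs ↦ hC s (Metric.sphere_subset_closedBall hs)

end CauchyEstimate

section JetTendsto

variable {ι : Type*} {m : ℕ} {l : Filter ι} {F G : ι → ℂ → ℂ} {f g : ℂ → ℂ} {x : ℂ}

/-- Convergence at `x` of the `m`-jets of the analytic germs `F i` to the `m`-jet of `f`. -/
structure JetTendsto (m : ℕ) (l : Filter ι) (F : ι → ℂ → ℂ) (f : ℂ → ℂ) (x : ℂ) : Prop where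
  analyticAt (i : ι) : AnalyticAt ℂ (F i) x
  analyticAt_limit : AnalyticAt ℂ f x
  tendsto_iteratedDeriv (k : ℕ) (hk : k ≤ m) :
    Tendsto (fun i ↦ iteratedDeriv k (F i) x) l (𝓝 (iteratedDeriv k f x))

lemma JetTendsto.of_succ (hF : JetTendsto (m + 1) l F f x) : JetTendsto m l F f x :=
  ⟨hF.analyticAt, hF.analyticAt_limit, fun k hk ↦ hF.tendsto_iteratedDeriv k (by omega)⟩

lemma JetTendsto.deriv (hF : JetTendsto (m + 1) l F f x) :
    JetTendsto m l (fun i ↦ deriv (F i)) (deriv f) x :=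
  ⟨fun i ↦ (hF.analyticAt i).deriv, hF.analyticAt_limit.deriv, fun k hk ↦ by
    simpa only [iteratedDeriv_succ'] using hF.tendsto_iteratedDeriv (k + 1) (by omega)⟩

lemma JetTendsto.mul (hF : JetTendsto m l F f x) (hG : JetTendsto m l G g x) :
    JetTendsto m l (fun i s ↦ F i s * G i s) (fun s ↦ f s * g s) x := by
  refine ⟨fun i ↦ (hF.analyticAt i).mul (hG.analyticAt i),
    hF.analyticAt_limit.mul hG.analyticAt_limit, fun k hk ↦ ?_⟩
  simp_rw [iteratedDeriv_fun_mul (hF.analyticAt _).contDiffAt (hG.analyticAt _).contDiffAt,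
    iteratedDeriv_fun_mul hF.analyticAt_limit.contDiffAt hG.analyticAt_limit.contDiffAt]
  refine tendsto_finsetSum _ fun i hi ↦ ?_
  have hik := Finset.mem_range_succ_iff.1 hi
  exact ((hF.tendsto_iteratedDeriv i (hik.trans hk)).const_mul _).mul
    (hG.tendsto_iteratedDeriv (k - i) (by omega))

lemma iteratedDeriv_succ_cexp_comp (hf : AnalyticAt ℂ f x) (k : ℕ) :
    iteratedDeriv (k + 1) (fun s ↦ Complex.exp (f s)) x =
      iteratedDeriv k (fun s ↦ deriv f s * Complex.exp (f s)) x := by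
  rw [iteratedDeriv_succ']
  refine Filter.EventuallyEq.iteratedDeriv_eq k ?_
  filter_upwards [hf.eventually_analyticAt] with s hs
  rw [deriv_cexp hs.differentiableAt, mul_comm]

lemma JetTendsto.cexp (hF : JetTendsto m l F f x) :
    JetTendsto m l (fun i s ↦ Complex.exp (F i s)) (fun s ↦ Complex.exp (f s)) x := by
  refine ⟨fun i ↦ (hF.analyticAt i).cexp, hF.analyticAt_limit.cexp, ?_⟩
  induction m with
  | zero =>
    intro k hk
    obtain rfl := Nat.le_zero.1 hk
    simpa using (hF.tendsto_iteratedDeriv 0 le_rfl).cexp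
  | succ m ih =>
    have hexp : JetTendsto m l (fun i s ↦ Complex.exp (F i s)) (fun s ↦ Complex.exp (f s)) x :=
      ⟨fun i ↦ (hF.analyticAt i).cexp, hF.analyticAt_limit.cexp, ih hF.of_succ⟩
    intro k hk
    obtain hk | rfl := Nat.le_succ_iff.1 hk
    · exact hexp.tendsto_iteratedDeriv k hk
    · simp_rw [iteratedDeriv_succ_cexp_comp (hF.analyticAt _),
        iteratedDeriv_succ_cexp_comp hF.analyticAt_limit]
      exact (hF.deriv.mul hexp).tendsto_iteratedDeriv m le_rfl

end JetTendsto

section PrescribedJet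

variable {x : ℂ} {b : ℕ → ℂ} {m k : ℕ}

/-- The polynomial of degree at most `m` whose `k`-th derivative at `x` is `b k` for `k ≤ m`. -/
noncomputable def taylorPoly (x : ℂ) (m : ℕ) (b : ℕ → ℂ) (s : ℂ) : ℂ :=
  ∑ j ∈ Finset.range (m + 1), b j / j.factorial * (s - x) ^ j

lemma analyticAt_taylorPoly (x : ℂ) (m : ℕ) (b : ℕ → ℂ) (s : ℂ) :
    AnalyticAt ℂ (taylorPoly x m b) s := by
  have : Differentiable ℂ (taylorPoly x m b) := by
    unfold taylorPoly
    fun_prop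
  exact this.analyticAt s

lemma iteratedDeriv_sub_pow_self (x : ℂ) (j k : ℕ) :
    iteratedDeriv k (fun s ↦ (s - x) ^ j) x = if j = k then (k.factorial : ℂ) else 0 := by
  rw [iteratedDeriv_comp_sub_const (f := fun s ↦ s ^ j)]
  split_ifs with h
  · simp [h, Nat.descFactorial_self]
  · simp
    omega

lemma iteratedDeriv_taylorPoly (hk : k ≤ m) :
    iteratedDeriv k (taylorPoly x m b) x = b k := by
  unfold taylorPoly
  rw [iteratedDeriv_fun_sum fun i _ ↦ by fun_prop]
  simp_rw [iteratedDeriv_const_mul_field, iteratedDeriv_sub_pow_self]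
  simp [Nat.lt_succ_iff.2 hk, Nat.factorial_ne_zero]

lemma exists_analyticAt_cexp_eventuallyEq {f : ℂ → ℂ} (hf : AnalyticAt ℂ f x) (h0 : f x ≠ 0) :
    ∃ L : ℂ → ℂ, AnalyticAt ℂ L x ∧ (fun s ↦ Complex.exp (L s)) =ᶠ[𝓝 x] f := by
  refine ⟨fun s ↦ Complex.log (f s / f x) + Complex.log (f x), ?_, ?_⟩
  · refine AnalyticAt.add (hf.div_const.clog ?_) analyticAt_const
    simp [h0]
  · filter_upwards [hf.continuousAt.eventually_ne h0] with s hs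
    rw [Complex.exp_add, Complex.exp_log (div_ne_zero hs h0), Complex.exp_log h0,
      div_mul_cancel₀ _ h0]

lemma exists_analyticAt_iteratedDeriv_cexp_eq (x : ℂ) (m : ℕ) (hb : b 0 ≠ 0) :
    ∃ L : ℂ → ℂ, AnalyticAt ℂ L x ∧
      ∀ k ≤ m, iteratedDeriv k (fun s ↦ Complex.exp (L s)) x = b k := by
  have hval : taylorPoly x m b x = b 0 := iteratedDeriv_taylorPoly (Nat.zero_le m)
  obtain ⟨L, hL, hexp⟩ :=
    exists_analyticAt_cexp_eventuallyEq (analyticAt_taylorPoly x m b x) (by rwa [hval])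
  exact ⟨L, hL, fun k hk ↦ (hexp.iteratedDeriv_eq k).trans (iteratedDeriv_taylorPoly hk)⟩

end PrescribedJet

section LogFactor

variable {p : ℕ} {z z' w w' s : ℂ} {x r : ℝ}

lemma one_sub_mem_slitPlane (hw : ‖w‖ < 1) : 1 - w ∈ Complex.slitPlane := by
  have := Complex.re_le_norm w
  exact Or.inl (by simp only [Complex.sub_re, Complex.one_re]; linarith)

lemma norm_log_one_sub_sub_log_one_sub_le (hw : ‖w‖ ≤ 3 / 4) (hw' : ‖w'‖ ≤ 3 / 4) :
    ‖Complex.log (1 - w) - Complex.log (1 - w')‖ ≤ 4 * ‖w - w'‖ := by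
  have hderiv : ∀ u ∈ Metric.closedBall (0 : ℂ) (3 / 4),
      HasDerivAt (fun u ↦ Complex.log (1 - u)) (-1 / (1 - u)) u := fun u hu ↦
    ((hasDerivAt_id u).const_sub 1).clog
      (one_sub_mem_slitPlane ((mem_closedBall_zero_iff.1 hu).trans_lt (by norm_num)))
  refine (convex_closedBall (0 : ℂ) (3 / 4)).norm_image_sub_le_of_norm_hasDerivWithin_le
    (fun u hu ↦ (hderiv u hu).hasDerivWithinAt) (fun u hu ↦ ?_) (by simpa using hw')
    (by simpa using hw)
  have hlower : 1 / 4 ≤ ‖1 - u‖ := by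
    have := norm_sub_norm_le 1 u
    rw [norm_one] at this
    linarith [mem_closedBall_zero_iff.1 hu]
  calc ‖-1 / (1 - u)‖ = ‖1 - u‖⁻¹ := by simp
    _ ≤ (1 / 4)⁻¹ := by gcongr
    _ = 4 := by norm_num

lemma norm_neg_log_one_sub_sub_self_le (hw : ‖w‖ ≤ 3 / 4) :
    ‖-Complex.log (1 - w) - w‖ ≤ 2 * ‖w‖ ^ 2 := by
  have hlog := Complex.norm_log_one_add_sub_self_le (z := -w) (by rw [norm_neg]; linarith)
  have hinv : (1 - ‖-w‖)⁻¹ ≤ 4 := by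
    rw [norm_neg]
    calc (1 - ‖w‖)⁻¹ ≤ (1 / 4)⁻¹ := by
          gcongr
          linarith
      _ = 4 := by norm_num
  calc ‖-Complex.log (1 - w) - w‖ = ‖Complex.log (1 + -w) - -w‖ := by
        rw [← norm_neg, ← sub_eq_add_neg]
        ring_nf
    _ ≤ ‖-w‖ ^ 2 * (1 - ‖-w‖)⁻¹ / 2 := hlog
    _ ≤ ‖-w‖ ^ 2 * 4 / 2 := by gcongr
    _ = 2 * ‖w‖ ^ 2 := by
        rw [norm_neg]
        ring

lemma norm_natCast_cpow_neg (hp : 0 < p) (s : ℂ) : ‖(p : ℂ) ^ (-s)‖ = (p : ℝ) ^ (-s.re) := by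
  rw [Complex.norm_natCast_cpow_of_pos hp, Complex.neg_re]

lemma norm_natCast_cpow_neg_le (hp : 2 ≤ p) (hs : 1 / 2 ≤ s.re) :
    ‖(p : ℂ) ^ (-s)‖ ≤ 3 / 4 := by
  have h2 : (2 : ℝ) ≤ p := by exact_mod_cast hp
  have hsqrt : (4 / 3 : ℝ) ≤ √2 := Real.le_sqrt_of_sq_le (by norm_num)
  calc ‖(p : ℂ) ^ (-s)‖ = (p : ℝ) ^ (-s.re) := norm_natCast_cpow_neg (by omega) s
    _ ≤ (p : ℝ) ^ (-(1 / 2) : ℝ) :=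
        Real.rpow_le_rpow_of_exponent_le (by linarith) (by linarith)
    _ ≤ (2 : ℝ) ^ (-(1 / 2) : ℝ) := Real.rpow_le_rpow_of_nonpos two_pos h2 (by norm_num)
    _ = (√2)⁻¹ := by rw [Real.rpow_neg two_pos.le, ← Real.sqrt_eq_rpow]
    _ ≤ (4 / 3)⁻¹ := by gcongr
    _ = 3 / 4 := by norm_num

/-- The logarithm of the Euler factor `(1 - z * p ^ (-s))⁻¹` at `p`, twisted by `z`. -/
noncomputable def logFactor (p : ℕ) (z s : ℂ) : ℂ := -Complex.log (1 - z * (p : ℂ) ^ (-s))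

lemma norm_mul_natCast_cpow_neg_le (hp : 2 ≤ p) (hs : 1 / 2 ≤ s.re) (hz : ‖z‖ = 1) :
    ‖z * (p : ℂ) ^ (-s)‖ ≤ 3 / 4 := by
  simpa [hz] using norm_natCast_cpow_neg_le hp hs

lemma one_sub_mul_natCast_cpow_neg_mem_slitPlane (hp : 2 ≤ p) (hs : 1 / 2 ≤ s.re)
    (hz : ‖z‖ = 1) : 1 - z * (p : ℂ) ^ (-s) ∈ Complex.slitPlane :=
  one_sub_mem_slitPlane ((norm_mul_natCast_cpow_neg_le hp hs hz).trans_lt (by norm_num))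

lemma exp_logFactor (hp : 2 ≤ p) (hs : 1 / 2 ≤ s.re) (hz : ‖z‖ = 1) :
    Complex.exp (logFactor p z s) = (1 - z * (p : ℂ) ^ (-s))⁻¹ := by
  rw [logFactor, Complex.exp_neg, Complex.exp_log
    (Complex.slitPlane_ne_zero (one_sub_mul_natCast_cpow_neg_mem_slitPlane hp hs hz))]

lemma differentiable_natCast_cpow_neg (hp : p ≠ 0) : Differentiable ℂ fun s : ℂ ↦ (p : ℂ) ^ (-s) :=
  fun _ ↦ differentiableAt_id.neg.const_cpow (Or.inl (Nat.cast_ne_zero.2 hp))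

lemma differentiableAt_logFactor (hp : 2 ≤ p) (hs : 1 / 2 ≤ s.re) (hz : ‖z‖ = 1) :
    DifferentiableAt ℂ (logFactor p z) s :=
  ((((differentiable_natCast_cpow_neg (by omega)) s).const_mul z).const_sub 1 |>.clog
    (one_sub_mul_natCast_cpow_neg_mem_slitPlane hp hs hz)).neg

lemma analyticAt_logFactor (hp : 2 ≤ p) (hs : 1 / 2 < s.re) (hz : ‖z‖ = 1) :
    AnalyticAt ℂ (logFactor p z) s :=
  DifferentiableOn.analyticAt (s := {s : ℂ | 1 / 2 < s.re})
    (fun _ hs ↦ (differentiableAt_logFactor hp (le_of_lt hs) hz).differentiableWithinAt)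
    ((isOpen_lt continuous_const Complex.continuous_re).mem_nhds hs)

lemma abs_re_sub_le_of_mem_closedBall {c : ℂ} (hs : s ∈ Metric.closedBall c r) :
    |s.re - c.re| ≤ r := by
  simpa using (Complex.abs_re_le_norm (s - c)).trans (mem_closedBall_iff_norm.1 hs)

lemma sub_le_re_of_mem_closedBall (hs : s ∈ Metric.closedBall (x : ℂ) r) : x - r ≤ s.re := by
  have := (abs_le.1 (abs_re_sub_le_of_mem_closedBall hs)).1
  rw [Complex.ofReal_re] at this
  linarith

lemma norm_iteratedDeriv_logFactor_sub_le (hp : 2 ≤ p) (hr : 0 < r) (h0 : 1 / 2 < x - r)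
    (hz : ‖z‖ = 1) (hz' : ‖z'‖ = 1) (k : ℕ) :
    ‖iteratedDeriv k (logFactor p z) x - iteratedDeriv k (logFactor p z') x‖ ≤
      k.factorial / r ^ k * (4 * ‖z - z'‖) := by
  have hx : 1 / 2 < (x : ℂ).re := by rw [Complex.ofReal_re]; linarith
  rw [← iteratedDeriv_fun_sub (analyticAt_logFactor hp hx hz).contDiffAt
    (analyticAt_logFactor hp hx hz').contDiffAt]
  have hre : ∀ s ∈ Metric.closedBall (x : ℂ) r, 1 / 2 ≤ s.re := fun s hs ↦
    h0.le.trans (sub_le_re_of_mem_closedBall hs)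
  refine norm_iteratedDeriv_le_of_forall_mem_closedBall hr (fun s hs ↦
    ((differentiableAt_logFactor hp (hre s hs) hz).sub
      (differentiableAt_logFactor hp (hre s hs) hz')).differentiableWithinAt) (fun s hs ↦ ?_) k
  calc ‖logFactor p z s - logFactor p z' s‖
      ≤ 4 * ‖z * (p : ℂ) ^ (-s) - z' * (p : ℂ) ^ (-s)‖ := by
        rw [logFactor, logFactor, neg_sub_neg, norm_sub_rev]
        exact norm_log_one_sub_sub_log_one_sub_le (norm_mul_natCast_cpow_neg_le hp (hre s hs) hz)
          (norm_mul_natCast_cpow_neg_le hp (hre s hs) hz')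
    _ ≤ 4 * ‖z - z'‖ := by
        rw [← sub_mul, norm_mul]
        gcongr
        exact mul_le_of_le_one_right (norm_nonneg _)
          ((norm_natCast_cpow_neg_le hp (hre s hs)).trans (by norm_num))

lemma norm_logFactor_sub_mul_le (hp : 2 ≤ p) (hs : 1 / 2 ≤ s.re) (hz : ‖z‖ = 1) :
    ‖logFactor p z s - z * (p : ℂ) ^ (-s)‖ ≤ 2 * (p : ℝ) ^ (-(2 * s.re)) := by
  refine (norm_neg_log_one_sub_sub_self_le (norm_mul_natCast_cpow_neg_le hp hs hz)).trans_eq ?_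
  rw [norm_mul, hz, one_mul, norm_natCast_cpow_neg (by omega), ← Real.rpow_natCast,
    ← Real.rpow_mul p.cast_nonneg]
  ring_nf

lemma iteratedDeriv_natCast_cpow_neg (hp : p ≠ 0) (k : ℕ) (s : ℂ) :
    iteratedDeriv k (fun s : ℂ ↦ (p : ℂ) ^ (-s)) s = (-Real.log p : ℂ) ^ k * (p : ℂ) ^ (-s) := by
  have hexp : ∀ s : ℂ, (p : ℂ) ^ (-s) = Complex.exp (-Real.log p * s) := fun s ↦ by
    rw [Complex.cpow_def_of_ne_zero (Nat.cast_ne_zero.2 hp), Complex.natCast_log, mul_neg, neg_mul]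
  simp_rw [hexp]
  exact congrFun (iteratedDeriv_cexp_const_mul k _) s

lemma norm_iteratedDeriv_logFactor_sub_mul_le (hp : 2 ≤ p) (hr : 0 < r) (h0 : 1 / 2 < x - r)
    (hz : ‖z‖ = 1) (k : ℕ) :
    ‖iteratedDeriv k (logFactor p z) x
        - z * ((-Real.log p : ℂ) ^ k * (p : ℂ) ^ (-x : ℂ))‖ ≤
      k.factorial / r ^ k * (2 * (p : ℝ) ^ (-(2 * (x - r)))) := by
  have hx : 1 / 2 < (x : ℂ).re := by rw [Complex.ofReal_re]; linarith
  have hdiff : Differentiable ℂ fun s : ℂ ↦ z * (p : ℂ) ^ (-s) :=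
    (differentiable_natCast_cpow_neg (by omega)).const_mul z
  have hre : ∀ s ∈ Metric.closedBall (x : ℂ) r, x - r ≤ s.re := fun s hs ↦
    sub_le_re_of_mem_closedBall hs
  rw [← iteratedDeriv_natCast_cpow_neg (by omega), ← iteratedDeriv_const_mul_field,
    ← iteratedDeriv_fun_sub (analyticAt_logFactor hp hx hz).contDiffAt
      (hdiff.analyticAt _).contDiffAt]
  refine norm_iteratedDeriv_le_of_forall_mem_closedBall hr (fun s hs ↦
    ((differentiableAt_logFactor hp (h0.le.trans (hre s hs)) hz).sub
      (hdiff s)).differentiableWithinAt) (fun s hs ↦ ?_) k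
  refine (norm_logFactor_sub_mul_le hp (h0.le.trans (hre s hs)) hz).trans ?_
  have h1 : (1 : ℝ) ≤ p := by exact_mod_cast (by omega : 1 ≤ p)
  gcongr
  exact hre s hs

end LogFactor

section PrimeVec

variable {m : ℕ} {x : ℝ}

/-- For prime `n`, the vector of the derivatives of order at most `m` of `s ↦ n ^ (-s)` at `x`;
zero if `n` is not prime. -/
noncomputable def primeVec (x : ℝ) (m n : ℕ) : EuclideanSpace ℂ (Fin (m + 1)) :=
  if n.Prime then
    WithLp.toLp 2 fun k : Fin (m + 1) ↦ (-Real.log n : ℂ) ^ (k : ℕ) * (n : ℂ) ^ (-x : ℂ)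
  else 0

lemma primeVec_apply (x : ℝ) (m n : ℕ) (k : Fin (m + 1)) :
    primeVec x m n k =
      if n.Prime then (-Real.log n : ℂ) ^ (k : ℕ) * (n : ℂ) ^ (-x : ℂ) else 0 := by
  unfold primeVec
  split_ifs <;> rfl

lemma summable_log_pow_mul_rpow {y : ℝ} (hy : 1 < y) (j : ℕ) :
    Summable fun n : ℕ ↦ Real.log n ^ j * (n : ℝ) ^ (-y) := by
  have hlog := ((isLittleO_log_rpow_rpow_atTop (j : ℝ) (half_pos (sub_pos.2 hy))).comp_tendsto
    tendsto_natCast_atTop_atTop).bound one_pos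
  refine Summable.of_norm_bounded_eventually_nat (g := fun n : ℕ ↦ (n : ℝ) ^ (-((y + 1) / 2)))
    (Real.summable_nat_rpow.2 (by linarith)) ?_
  filter_upwards [hlog, eventually_ge_atTop 1] with n hn h1
  have hn0 : (0 : ℝ) < n := by exact_mod_cast h1
  simp only [Function.comp_apply, Real.rpow_natCast, one_mul,
    Real.norm_of_nonneg (Real.rpow_nonneg hn0.le ((y - 1) / 2))] at hn
  calc ‖Real.log n ^ j * (n : ℝ) ^ (-y)‖ = ‖Real.log n ^ j‖ * (n : ℝ) ^ (-y) := by
        rw [norm_mul, Real.norm_of_nonneg (Real.rpow_nonneg hn0.le _)]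
    _ ≤ (n : ℝ) ^ ((y - 1) / 2) * (n : ℝ) ^ (-y) := by gcongr
    _ = (n : ℝ) ^ (-((y + 1) / 2)) := by
        rw [← Real.rpow_add hn0]
        ring_nf

lemma summable_norm_primeVec_sq (hx : 1 / 2 < x) (m : ℕ) :
    Summable fun n ↦ ‖primeVec x m n‖ ^ 2 := by
  simp_rw [EuclideanSpace.norm_sq_eq]
  refine summable_sum (f := fun (k : Fin (m + 1)) n ↦ ‖primeVec x m n k‖ ^ 2) fun k _ ↦ ?_
  refine (summable_log_pow_mul_rpow (y := 2 * x) (by linarith) (2 * k)).of_nonneg_of_le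
    (fun n ↦ sq_nonneg _) fun n ↦ ?_
  rw [primeVec_apply]
  split_ifs with hn
  · rw [norm_mul, norm_pow, norm_neg, Complex.norm_real, norm_natCast_cpow_neg hn.pos,
      Complex.ofReal_re, mul_pow, ← Real.rpow_natCast ((n : ℝ) ^ (-x)), ← Real.rpow_mul
      n.cast_nonneg, Real.norm_of_nonneg (Real.log_natCast_nonneg n), ← pow_mul]
    exact le_of_eq (by push_cast; ring_nf)
  · have := Real.log_natCast_nonneg n
    simp only [norm_zero, ne_eq, OfNat.ofNat_ne_zero, not_false_eq_true, zero_pow]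
    positivity

lemma exists_pos_eventually_le_norm_eval {α : Type*} {l : Filter α} {P : Polynomial ℂ}
    (hP : P ≠ 0) {u : α → ℂ} (hu : Tendsto (fun a ↦ ‖u a‖) l atTop) :
    ∃ c > 0, ∀ᶠ a in l, c ≤ ‖P.eval (u a)‖ := by
  obtain hdeg | hdeg := Nat.eq_zero_or_pos P.natDegree
  · obtain ⟨a, rfl⟩ := Polynomial.natDegree_eq_zero.1 hdeg
    exact ⟨‖a‖, norm_pos_iff.2 fun ha ↦ hP (by rw [ha, Polynomial.C_0]), by simp⟩
  · exact ⟨1, one_pos, (P.tendsto_norm_atTop (Polynomial.natDegree_pos_iff_degree_pos.1 hdeg)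
      hu).eventually_ge_atTop 1⟩

lemma exists_polynomial_forall_apply_eq_eval_mul {f : EuclideanSpace ℂ (Fin (m + 1)) →L[ℂ] ℂ}
    (hf : f ≠ 0) :
    ∃ P : Polynomial ℂ, P ≠ 0 ∧ ∀ t w : ℂ,
      f (WithLp.toLp 2 fun k : Fin (m + 1) ↦ t ^ (k : ℕ) * w) = P.eval t * w := by
  have hcoord : ∀ v, f v = ∑ k, v k * f (EuclideanSpace.single k 1) := fun v ↦ by
    conv_lhs => rw [← (EuclideanSpace.basisFun (Fin (m + 1)) ℂ).sum_repr v]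
    simp [map_sum]
  refine ⟨∑ k : Fin (m + 1), Polynomial.monomial (k : ℕ) (f (EuclideanSpace.single k 1)),
    fun h ↦ hf ?_, fun t w ↦ ?_⟩
  · ext v
    have hcoef : ∀ k : Fin (m + 1), f (EuclideanSpace.single k 1) = 0 := fun k ↦ by
      simpa [Polynomial.coeff_monomial, Fin.val_inj] using congrArg (Polynomial.coeff · k) h
    rw [hcoord]
    simp [hcoef]
  · rw [hcoord, Polynomial.eval_finsetSum, Finset.sum_mul]
    refine Finset.sum_congr rfl fun k _ ↦ ?_
    rw [Polynomial.eval_monomial]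
    ring

lemma not_summable_norm_apply_primeVec (hx : x < 1)
    {f : EuclideanSpace ℂ (Fin (m + 1)) →L[ℂ] ℂ} (hf : f ≠ 0) :
    ¬ Summable fun n ↦ ‖f (primeVec x m n)‖ := by
  intro hsum
  obtain ⟨P, hP, heval⟩ := exists_polynomial_forall_apply_eq_eval_mul hf
  have hlog : Tendsto (fun p : Nat.Primes ↦ ‖(-Real.log p : ℂ)‖) cofinite atTop := by
    simp only [norm_neg, Complex.norm_real]
    refine tendsto_norm_atTop_atTop.comp (Real.tendsto_log_atTop.comp
      (tendsto_natCast_atTop_atTop.comp ?_))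
    exact Nat.cofinite_eq_atTop ▸ Nat.Primes.coe_nat_injective.tendsto_cofinite
  obtain ⟨c, hc, hlower⟩ := exists_pos_eventually_le_norm_eval hP hlog
  have hprimes : Summable fun p : Nat.Primes ↦ c⁻¹ * ‖f (primeVec x m p)‖ :=
    (hsum.comp_injective Nat.Primes.coe_nat_injective).mul_left _
  have hrpow : Summable fun p : Nat.Primes ↦ (p : ℝ) ^ (-x) := by
    refine Summable.of_norm_bounded_eventually hprimes ?_
    filter_upwards [hlower] with p hp
    rw [Real.norm_of_nonneg (by positivity), primeVec, if_pos p.2, heval, norm_mul,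
      norm_natCast_cpow_neg p.2.pos, Complex.ofReal_re, le_inv_mul_iff₀ hc]
    gcongr
  rw [Nat.Primes.summable_rpow] at hrpow
  linarith

end PrimeVec

section LogEulerProduct

variable {Q : Finset ℕ} {z z' : ℕ → ℂ} {s : ℂ} {x r τ δ ε : ℝ} {m : ℕ}

/-- The logarithm of the Euler product over `Q` whose factor at `p` is twisted by `z p`. -/
noncomputable def logEulerProduct (Q : Finset ℕ) (z : ℕ → ℂ) (s : ℂ) : ℂ :=
  ∑ p ∈ Q, logFactor p (z p) s

lemma analyticAt_logEulerProduct (hQ : ∀ p ∈ Q, p.Prime) (hz : ∀ p ∈ Q, ‖z p‖ = 1)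
    (hs : 1 / 2 < s.re) : AnalyticAt ℂ (logEulerProduct Q z) s :=
  Finset.analyticAt_fun_sum _ fun p hp ↦ analyticAt_logFactor (hQ p hp).two_le hs (hz p hp)

lemma iteratedDeriv_logEulerProduct (hQ : ∀ p ∈ Q, p.Prime) (hz : ∀ p ∈ Q, ‖z p‖ = 1)
    (hs : 1 / 2 < s.re) (k : ℕ) :
    iteratedDeriv k (logEulerProduct Q z) s = ∑ p ∈ Q, iteratedDeriv k (logFactor p (z p)) s :=
  iteratedDeriv_fun_sum fun p hp ↦
    (analyticAt_logFactor (hQ p hp).two_le hs (hz p hp)).contDiffAt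

lemma norm_iteratedDeriv_logEulerProduct_sub_le (hQ : ∀ p ∈ Q, p.Prime) (hr : 0 < r)
    (h0 : 1 / 2 < x - r) (hz : ∀ p ∈ Q, ‖z p‖ = 1) (hz' : ∀ p ∈ Q, ‖z' p‖ = 1)
    (hδ : ∀ p ∈ Q, ‖z p - z' p‖ ≤ δ) (k : ℕ) :
    ‖iteratedDeriv k (logEulerProduct Q z) x - iteratedDeriv k (logEulerProduct Q z') x‖ ≤
      k.factorial / r ^ k * (4 * (Q.card * δ)) := by
  have hx : 1 / 2 < (x : ℂ).re := by rw [Complex.ofReal_re]; linarith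
  rw [iteratedDeriv_logEulerProduct hQ hz hx, iteratedDeriv_logEulerProduct hQ hz' hx,
    ← Finset.sum_sub_distrib]
  calc _ ≤ ∑ p ∈ Q, k.factorial / r ^ k * (4 * δ) := norm_sum_le_of_le _ fun p hp ↦
        (norm_iteratedDeriv_logFactor_sub_le (hQ p hp).two_le hr h0 (hz p hp) (hz' p hp) k).trans
          (by gcongr; exact hδ p hp)
    _ = _ := by
        rw [Finset.sum_const, nsmul_eq_mul]
        ring

lemma exp_logEulerProduct_phase_mul_deletedZeta (hQ : ∀ p ∈ Q, p.Prime) (hs : 1 / 2 ≤ s.re)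
    (τ : ℝ) :
    Complex.exp (logEulerProduct Q (phase τ) s) * deletedZeta Q (s + τ * Complex.I) =
      riemannZeta (s + τ * Complex.I) := by
  rw [logEulerProduct, Complex.exp_sum, deletedZeta, ← mul_assoc, ← Finset.prod_mul_distrib,
    Finset.prod_eq_one, one_mul]
  intro p hp
  have hphase := norm_phase (hQ p hp).ne_zero τ
  rw [exp_logFactor (hQ p hp).two_le hs hphase, natCast_cpow_neg_add_mul_I (hQ p hp).ne_zero,
    mul_comm ((p : ℂ) ^ (-s))]
  exact inv_mul_cancel₀ (Complex.slitPlane_ne_zero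
    (one_sub_mul_natCast_cpow_neg_mem_slitPlane (hQ p hp).two_le hs hphase))

lemma norm_sum_Ico_iteratedDeriv_logFactor_sub_le (hr : 0 < r) (h0 : 1 / 2 < x - r)
    (hz : ∀ p, ‖z p‖ = 1) (N M : ℕ) (k : Fin (m + 1)) :
    ‖∑ p ∈ Finset.Ico N M with p.Prime, iteratedDeriv k (logFactor p (z p)) x
        - (∑ n ∈ Finset.Ico N M, z n • primeVec x m n) k‖ ≤
      (k : ℕ).factorial / r ^ (k : ℕ) *
        (2 * ∑ n ∈ Finset.Ico N M, (n : ℝ) ^ (-(2 * (x - r)))) := by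
  have hcoord : (∑ n ∈ Finset.Ico N M, z n • primeVec x m n) k =
      ∑ p ∈ Finset.Ico N M with p.Prime,
        z p * ((-Real.log p : ℂ) ^ (k : ℕ) * (p : ℂ) ^ (-x : ℂ)) := by
    simp [primeVec_apply, Finset.sum_filter]
  rw [hcoord, ← Finset.sum_sub_distrib]
  calc _ ≤ ∑ p ∈ Finset.Ico N M with p.Prime,
        (k : ℕ).factorial / r ^ (k : ℕ) * (2 * (p : ℝ) ^ (-(2 * (x - r)))) :=
        norm_sum_le_of_le _ fun p hp ↦ norm_iteratedDeriv_logFactor_sub_mul_le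
          (Finset.mem_filter.1 hp).2.two_le hr h0 (hz p) k
    _ ≤ ∑ p ∈ Finset.Ico N M,
        (k : ℕ).factorial / r ^ (k : ℕ) * (2 * (p : ℝ) ^ (-(2 * (x - r)))) :=
        Finset.sum_le_sum_of_subset_of_nonneg (Finset.filter_subset _ _)
          fun _ _ _ ↦ by positivity
    _ = _ := by rw [← Finset.mul_sum, ← Finset.mul_sum]

lemma iteratedDeriv_logEulerProduct_primesBelow_ite (hx : 1 / 2 < x) (hz : ∀ p, ‖z p‖ = 1)
    {N M : ℕ} (hNM : N ≤ M) (k : ℕ) :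
    iteratedDeriv k (logEulerProduct M.primesBelow fun p ↦ if p < N then 1 else z p) x =
      ∑ p ∈ N.primesBelow, iteratedDeriv k (logFactor p 1) x +
        ∑ p ∈ Finset.Ico N M with p.Prime, iteratedDeriv k (logFactor p (z p)) x := by
  rw [iteratedDeriv_logEulerProduct (fun p ↦ Nat.prime_of_mem_primesBelow)
    (fun p _ ↦ by split_ifs <;> simp [hz]) (by rwa [Complex.ofReal_re])]
  simp only [Nat.primesBelow, Finset.sum_filter, ← Finset.sum_range_add_sum_Ico _ hNM]
  congr 1 <;> refine Finset.sum_congr rfl fun p hp ↦ ?_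
  · rw [if_pos (Finset.mem_range.1 hp)]
  · rw [if_neg (Finset.mem_Ico.1 hp).1.not_gt]

theorem exists_norm_iteratedDeriv_logEulerProduct_sub_le (hr : 0 < r) (h0 : 1 / 2 < x - r)
    (h1 : x < 1) (m : ℕ) (c : ℕ → ℂ) (hε : 0 < ε) (M₀ : ℕ) :
    ∃ M ≥ M₀, ∃ z : ℕ → ℂ, (∀ p, ‖z p‖ = 1) ∧
      ∀ k ≤ m, ‖iteratedDeriv k (logEulerProduct M.primesBelow z) x - c k‖ ≤
        (1 + 2 * (k.factorial / r ^ k)) * ε := by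
  obtain ⟨N₁, htail⟩ := exists_forall_sum_lt
    (Real.summable_nat_rpow.2 (by linarith : -(2 * (x - r)) < -1)) hε
  obtain ⟨N₂, hdense⟩ := exists_norm_eq_one_and_norm_sum_Ico_smul_sub_lt
    (fun f hf ↦ not_summable_norm_apply_primeVec h1 (m := m) hf)
    (summable_norm_primeVec_sq (by linarith) m) hε
  obtain ⟨N, hN₀, hN₁, hN₂⟩ : ∃ N, M₀ ≤ N ∧ N₁ ≤ N ∧ N₂ ≤ N :=
    ⟨max M₀ (max N₁ N₂), by omega, by omega, by omega⟩
  let A : ℕ → ℂ := fun k ↦ ∑ p ∈ N.primesBelow, iteratedDeriv k (logFactor p 1) x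
  obtain ⟨M, hM, z, hz, happrox⟩ :=
    hdense N hN₂ (WithLp.toLp 2 fun k : Fin (m + 1) ↦ c k - A k)
  refine ⟨M, hN₀.trans hM, fun p ↦ if p < N then 1 else z p,
    fun p ↦ by dsimp only; split_ifs <;> simp [hz], fun k hk ↦ ?_⟩
  let V : ℂ := (∑ n ∈ Finset.Ico N M, z n • primeVec x m n) ⟨k, Nat.lt_succ_of_le hk⟩
  let B : ℂ := ∑ p ∈ Finset.Ico N M with p.Prime, iteratedDeriv k (logFactor p (z p)) x
  have hB : ‖B - V‖ ≤ k.factorial / r ^ k * (2 * ε) := by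
    refine (norm_sum_Ico_iteratedDeriv_logFactor_sub_le hr h0 hz N M ⟨k, _⟩).trans ?_
    gcongr
    exact (htail _ fun n hn ↦ hN₁.trans (Finset.mem_Ico.1 hn).1).le
  have hV : ‖V - (c k - A k)‖ ≤ ε :=
    (PiLp.norm_apply_le _ (⟨k, Nat.lt_succ_of_le hk⟩ : Fin (m + 1))).trans happrox.le
  calc ‖iteratedDeriv k (logEulerProduct M.primesBelow fun p ↦ if p < N then 1 else z p) x - c k‖
      = ‖(B - V) + (V - (c k - A k))‖ := by
        rw [iteratedDeriv_logEulerProduct_primesBelow_ite (by linarith) hz hM]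
        congr 1
        ring
    _ ≤ k.factorial / r ^ k * (2 * ε) + ε := norm_add_le_of_le hB hV
    _ = (1 + 2 * (k.factorial / r ^ k)) * ε := by ring

end LogEulerProduct

section JetApproximation

variable {Q : Finset ℕ} {x r ε : ℝ} {m : ℕ} {L : ℂ → ℂ}

lemma analyticAt_deletedZeta_add_mul_I (hQ : ∀ p ∈ Q, p.Prime) {s : ℂ} (hs : s.re < 1) (τ : ℝ) :
    AnalyticAt ℂ (fun s ↦ deletedZeta Q (s + τ * Complex.I)) s := by
  have hne : ∀ s : ℂ, s.re < 1 → s + τ * Complex.I ≠ 1 := fun s hs h ↦ by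
    have := congrArg Complex.re h
    simp only [Complex.add_re, Complex.re_ofReal_mul, Complex.I_re, mul_zero, add_zero,
      Complex.one_re] at this
    exact hs.ne this
  exact DifferentiableOn.analyticAt (s := {s : ℂ | s.re < 1})
    (fun s hs ↦ ((differentiableAt_deletedZeta hQ (hne s hs)).comp s
      (differentiableAt_id.add_const _)).differentiableWithinAt)
    ((isOpen_lt Complex.continuous_re continuous_const).mem_nhds hs)

lemma norm_iteratedDeriv_deletedZeta_sub_le (hQ : ∀ p ∈ Q, p.Prime) (hr : 0 < r)
    (h1 : x + r < 1) (hε : 0 < ε) {τ : ℝ}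
    (h : circleEnergy (fun s ↦ deletedZeta Q s - 1) (x + τ * Complex.I) r ≤ ε ^ 2) (k : ℕ) :
    ‖iteratedDeriv k (fun s ↦ deletedZeta Q (s + τ * Complex.I)) x
        - iteratedDeriv k (fun _ ↦ (1 : ℂ)) (x : ℂ)‖ ≤ k.factorial / r ^ k * ε := by
  have han : AnalyticAt ℂ (fun s ↦ deletedZeta Q (s + τ * Complex.I)) x :=
    analyticAt_deletedZeta_add_mul_I hQ (by rw [Complex.ofReal_re]; linarith) τ
  rw [← iteratedDeriv_fun_sub han.contDiffAt contDiffAt_const]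
  refine norm_iteratedDeriv_le_of_circleEnergy_le hr (fun s hs ↦ ?_) k hε ?_
  · have hre := (abs_le.1 (abs_re_sub_le_of_mem_closedBall hs)).2
    rw [Complex.ofReal_re] at hre
    exact ((analyticAt_deletedZeta_add_mul_I hQ (by linarith) τ).sub
      analyticAt_const).differentiableAt.differentiableWithinAt
  · rw [circleEnergy_add_mul_I] at h
    exact h

theorem exists_norm_iteratedDeriv_sub_le (hr : 0 < r) (h0 : 1 / 2 < x - r) (h1 : x + r < 1)
    (m : ℕ) (c : ℕ → ℂ) (hε : 0 < ε) :
    ∃ (M : ℕ) (τ : ℝ),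
      (∀ k ≤ m, ‖iteratedDeriv k (logEulerProduct M.primesBelow (phase τ)) x - c k‖ ≤
        (1 + 6 * (k.factorial / r ^ k)) * ε) ∧
      ∀ k, ‖iteratedDeriv k (fun s ↦ deletedZeta M.primesBelow (s + τ * Complex.I)) x
        - iteratedDeriv k (fun _ ↦ (1 : ℂ)) (x : ℂ)‖ ≤ k.factorial / r ^ k * ε := by
  obtain ⟨M₀, hphase⟩ := exists_phase_near_and_circleEnergy_lt hr.le h0 h1 (sq_pos_of_pos hε)
  obtain ⟨M, hM, z, hz, hzc⟩ :=
    exists_norm_iteratedDeriv_logEulerProduct_sub_le hr h0 (by linarith) m c hε M₀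
  have hprime : ∀ p ∈ M.primesBelow, p.Prime := fun p ↦ Nat.prime_of_mem_primesBelow
  obtain ⟨τ, hτ, henergy⟩ := hphase M hM z hz (ε / (M.primesBelow.card + 1)) (by positivity)
  refine ⟨M, τ, fun k hk ↦ ?_,
    norm_iteratedDeriv_deletedZeta_sub_le hprime hr h1 hε henergy.le⟩
  have hcard : M.primesBelow.card * (ε / (M.primesBelow.card + 1)) ≤ ε := by
    rw [mul_div_left_comm]
    exact mul_le_of_le_one_right hε.le (div_le_one_of_le₀ (by linarith) (by positivity))
  have hrotate := norm_iteratedDeriv_logEulerProduct_sub_le hprime hr h0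
    (fun p hp ↦ norm_phase (hprime p hp).ne_zero τ) (fun p _ ↦ hz p) (fun p hp ↦ (hτ p hp).le) k
  calc _ ≤ k.factorial / r ^ k * (4 * ε) + (1 + 2 * (k.factorial / r ^ k)) * ε :=
        (norm_sub_le_norm_sub_add_norm_sub _ _ _).trans
          (add_le_add (hrotate.trans (by gcongr)) (hzc k hk))
    _ = (1 + 6 * (k.factorial / r ^ k)) * ε := by ring

lemma tendsto_of_norm_sub_le_mul_one_div {u : ℕ → ℂ} {a : ℂ} {C : ℝ}
    (h : ∀ n, ‖u n - a‖ ≤ C * (1 / (n + 1))) : Tendsto u atTop (𝓝 a) := by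
  refine tendsto_iff_norm_sub_tendsto_zero.2 (squeeze_zero (fun _ ↦ norm_nonneg _) h ?_)
  simpa using tendsto_one_div_add_atTop_nhds_zero_nat.const_mul C

theorem exists_jetTendsto (hx₁ : 1 / 2 < x) (hx₂ : x < 1) (m : ℕ) (hL : AnalyticAt ℂ L x) :
    ∃ (M : ℕ → ℕ) (τ : ℕ → ℝ),
      JetTendsto m atTop (fun n ↦ logEulerProduct (M n).primesBelow (phase (τ n))) L x ∧
      JetTendsto m atTop (fun n s ↦ deletedZeta (M n).primesBelow (s + τ n * Complex.I))
        (fun _ ↦ 1) x := by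
  obtain ⟨r, hr, hr'⟩ : ∃ r > 0, r < min (x - 1 / 2) (1 - x) :=
    exists_between (lt_min (by linarith) (by linarith))
  obtain ⟨h0, h1⟩ := lt_min_iff.1 hr'
  choose M τ hlog hdel using fun n : ℕ ↦ exists_norm_iteratedDeriv_sub_le hr
    (by linarith : 1 / 2 < x - r) (by linarith : x + r < 1) m (fun k ↦ iteratedDeriv k L x)
    (Nat.one_div_pos_of_nat (α := ℝ) (n := n))
  have hprime : ∀ n, ∀ p ∈ (M n).primesBelow, p.Prime := fun n p ↦ Nat.prime_of_mem_primesBelow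
  refine ⟨M, τ, ⟨fun n ↦ ?_, hL, fun k hk ↦ ?_⟩, ⟨fun n ↦ ?_, analyticAt_const, fun k _ ↦ ?_⟩⟩
  · exact analyticAt_logEulerProduct (hprime n)
      (fun p hp ↦ norm_phase (hprime n p hp).ne_zero _) (by rwa [Complex.ofReal_re])
  · exact tendsto_of_norm_sub_le_mul_one_div fun n ↦ hlog n k hk
  · exact analyticAt_deletedZeta_add_mul_I (hprime n) (by rwa [Complex.ofReal_re]) _
  · exact tendsto_of_norm_sub_le_mul_one_div fun n ↦ hdel n k

theorem exists_tendsto_iteratedDeriv_riemannZeta (hx₁ : 1 / 2 < x) (hx₂ : x < 1) (m : ℕ)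
    {b : ℕ → ℂ} (hb : b 0 ≠ 0) :
    ∃ τ : ℕ → ℝ, ∀ k ≤ m, Tendsto
      (fun n ↦ iteratedDeriv k riemannZeta (x + τ n * Complex.I)) atTop (𝓝 (b k)) := by
  obtain ⟨L, hL, hLb⟩ := exists_analyticAt_iteratedDeriv_cexp_eq (x : ℂ) m hb
  obtain ⟨M, τ, hlog, hdel⟩ := exists_jetTendsto hx₁ hx₂ m hL
  have hre : ∀ᶠ s : ℂ in 𝓝 (x : ℂ), 1 / 2 < s.re :=
    (isOpen_lt continuous_const Complex.continuous_re).mem_nhds (by simpa using hx₁)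
  have hzeta : ∀ n, (fun s ↦ Complex.exp (logEulerProduct (M n).primesBelow (phase (τ n)) s) *
      deletedZeta (M n).primesBelow (s + τ n * Complex.I)) =ᶠ[𝓝 (x : ℂ)]
        fun s ↦ riemannZeta (s + τ n * Complex.I) := fun n ↦ by
    filter_upwards [hre] with s hs
    exact exp_logEulerProduct_phase_mul_deletedZeta
      (fun p ↦ Nat.prime_of_mem_primesBelow) hs.le (τ n)
  refine ⟨τ, fun k hk ↦ ?_⟩
  have hjet := (hlog.cexp.mul hdel).tendsto_iteratedDeriv k hk
  simp_rw [(hzeta _).iteratedDeriv_eq, iteratedDeriv_comp_add_const, mul_one, hLb k hk] at hjet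
  exact hjet

end JetApproximation

end Voronin

/-- **Voronin's theorem.** For fixed `1/2 < x < 1` and `m ≥ 0`, the curve
`y ↦ (ζ(x+iy), ζ'(x+iy), …, ζ^{(m)}(x+iy))` has dense image in `ℂ^{m+1}`. -/
theorem voronin_zeta_curve_dense (x : ℝ) (hx₁ : 1 / 2 < x) (hx₂ : x < 1) (m : ℕ) :
    DenseRange (fun y : ℝ => fun i : Fin (m + 1) =>
      iteratedDeriv (i : ℕ) riemannZeta ((x : ℂ) + y * Complex.I)) := by
  have hnonzero : Dense {b : Fin (m + 1) → ℂ | b 0 ≠ 0} :=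
    (dense_compl_singleton (0 : ℂ)).preimage (isOpenMap_eval 0)
  refine dense_closure.1 (hnonzero.mono fun b hb ↦ ?_)
  obtain ⟨τ, hτ⟩ := Voronin.exists_tendsto_iteratedDeriv_riemannZeta hx₁ hx₂ m
    (b := fun k ↦ b (Fin.ofNat (m + 1) k)) (by simpa using hb)
  have hlim : Filter.Tendsto (fun n (i : Fin (m + 1)) ↦
      iteratedDeriv (i : ℕ) riemannZeta (x + τ n * Complex.I)) Filter.atTop (nhds b) :=
    tendsto_pi_nhds.2 fun i ↦ by simpa using hτ i (Nat.lt_succ_iff.1 i.2)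
  exact mem_closure_of_tendsto hlim (Filter.Eventually.of_forall fun n ↦ Set.mem_range_self (τ n))
end

section
/- Let ℓ ≥ 2, n ≥ 1, m ≥ 0 be integers and let P(u₀,…,u_m; v₀,v₁,v₂) be a polynomial with constant complex coefficients such that P(ζ(z), ζ'(z), …, ζ^{(m)}(z); Γ(z), Γ^{(n)}(z), Γ^{(ℓn)}(z)) = 0 for every z ∈ ℂ at which ζ and Γ are analytic. Write P = Σ_{p=0}^{L} P_p, where P_p is the part of P that is homogeneous of total degree p in the variables (v₀,v₁,v₂). Then for each 0 ≤ p ≤ L and all z ∈ ℂ at which ζ and Γ are analytic, P_p(ζ(z), ζ'(z), …, ζ^{(m)}(z); Γ(z), Γ^{(n)}(z), Γ^{(ℓn)}(z)) = 0. -/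
/-!
Divide `Γ^{(k)}` by `Γ`. On a right half-plane the quotients `Γ^{(k)} / Γ`, like the derivatives
of `ζ`, are bounded by powers of `z`, so a relation `P = 0` becomes `∑ p, A p * Γ ^ p = 0`, where
`A p` is the value of `P_p` at these functions of moderate growth. On the positive reals `Γ` beats
every `exp (n x)`, so the leading coefficient decays there faster than every `exp (-n x)`, and by
the Phragmén–Lindelöf principle it vanishes identically. Descending on `p`, all `A p` vanish, and
the identity theorem carries `P_p = 0` from the half-plane to the whole domain of analyticity.
-/

open Asymptotics Complex Filter MeasureTheory Metric Topology
open MvPolynomial (eval weightedHomogeneousComponent)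

/-! ### Analytic functions near `Re z = +∞` -/

/-- The filter on `ℂ` expressing `Re z → +∞`, with no restriction on `Im z`. -/
def atReInfty : Filter ℂ := comap re atTop

theorem atReInfty_hasBasis : atReInfty.HasBasis (fun _ : ℝ ↦ True) fun b ↦ {z | b ≤ z.re} :=
  atTop_basis.comap re

instance atReInfty_neBot : atReInfty.NeBot :=
  atTop_neBot.comap_of_surj re_surjective

theorem eventually_le_re (b : ℝ) : ∀ᶠ z in atReInfty, b ≤ z.re :=
  atReInfty_hasBasis.mem_of_mem (i := b) trivial

theorem tendsto_ofReal_atReInfty : Tendsto ((↑) : ℝ → ℂ) atTop atReInfty :=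
  tendsto_comap_iff.2 tendsto_id

theorem eventually_forall_mem_closedBall {p : ℂ → Prop} (hp : ∀ᶠ z in atReInfty, p z) (r : ℝ) :
    ∀ᶠ z in atReInfty, ∀ u ∈ closedBall z r, p u := by
  obtain ⟨b, -, hb⟩ := atReInfty_hasBasis.eventually_iff.1 hp
  filter_upwards [eventually_le_re (b + r)] with z hz u hu
  have hre : |(u - z).re| ≤ r := (abs_re_le_norm (u - z)).trans (by simpa [dist_eq_norm] using hu)
  rw [sub_re] at hre
  exact hb (show b ≤ u.re by linarith [neg_le_of_abs_le hre])

theorem isBigO_pow_pow_atReInfty {k l : ℕ} (h : k ≤ l) :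
    (fun z : ℂ ↦ z ^ k) =O[atReInfty] fun z ↦ z ^ l := by
  refine .of_bound' ?_
  filter_upwards [eventually_le_re 1] with z hz
  simpa using pow_le_pow_right₀ (hz.trans (re_le_norm z)) h

theorem isBigO_iteratedDeriv_of_norm_sphere_le {E : Type*} [NormedAddCommGroup E]
    [NormedSpace ℂ E] [CompleteSpace E] {f : ℂ → E} {g : ℂ → ℝ}
    (hf : ∀ᶠ z in atReInfty, AnalyticAt ℂ f z)
    (hfg : ∀ᶠ z in atReInfty, ∀ u ∈ sphere z 1, ‖f u‖ ≤ g z) (n : ℕ) :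
    iteratedDeriv n f =O[atReInfty] g := by
  refine .of_bound n.factorial ?_
  filter_upwards [eventually_forall_mem_closedBall hf 1, hfg] with z hfz hgz
  have hd : DiffContOnCl ℂ f (ball z 1) := DifferentiableOn.diffContOnCl fun u hu ↦
    (hfz u (closure_ball_subset_closedBall hu)).differentiableAt.differentiableWithinAt
  calc ‖iteratedDeriv n f z‖ ≤ n.factorial * g z / 1 ^ n :=
        norm_iteratedDeriv_le_of_forall_mem_sphere_norm_le n one_pos hd hgz
    _ ≤ n.factorial * ‖g z‖ := by
        rw [one_pow, div_one]
        gcongr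
        exact Real.le_norm_self _

theorem eqOn_zero_of_eventuallyEq_zero_atReInfty {E : Type*} [NormedAddCommGroup E]
    [NormedSpace ℂ E] {f : ℂ → E} {U : Set ℂ} (hf : AnalyticOnNhd ℂ f U) (hU : IsPreconnected U)
    (hmem : ∀ᶠ z in atReInfty, z ∈ U) (h : f =ᶠ[atReInfty] 0) : Set.EqOn f 0 U := by
  obtain ⟨z, hz, hball⟩ := (hmem.and (eventually_forall_mem_closedBall h 1)).exists
  exact hf.eqOn_zero_of_preconnected_of_eventuallyEq_zero hU hz
    (eventually_of_mem (closedBall_mem_nhds z one_pos) hball)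

theorem analyticAt_iteratedDeriv {𝕜 E : Type*} [NontriviallyNormedField 𝕜] [NormedAddCommGroup E]
    [NormedSpace 𝕜 E] [CompleteSpace E] {f : 𝕜 → E} {z : 𝕜} (hf : AnalyticAt 𝕜 f z) (n : ℕ) :
    AnalyticAt 𝕜 (iteratedDeriv n f) z :=
  iteratedDeriv_eq_iterate (f := f) ▸ hf.iterated_deriv n

theorem analyticOnNhd_eval {𝕜 ι : Type*} [NontriviallyNormedField 𝕜] {v : 𝕜 → ι → 𝕜} {U : Set 𝕜}
    (hv : ∀ i, AnalyticOnNhd 𝕜 (v · i) U) (Q : MvPolynomial ι 𝕜) :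
    AnalyticOnNhd 𝕜 (fun z ↦ eval (v z) Q) U := by
  simpa only [MvPolynomial.aeval_eq_eval] using!
    AnalyticOnNhd.aeval_mvPolynomial (𝕜 := 𝕜) (A := 𝕜) (B := 𝕜) hv Q

/-! ### Functions of moderate growth -/

/-- The algebra of functions of moderate growth: those which are analytic on some right half-plane
and bounded there by a constant multiple of a power of `z`. -/
def moderateGrowth : Subalgebra ℂ (ℂ → ℂ) where
  carrier := {f | (∀ᶠ z in atReInfty, AnalyticAt ℂ f z) ∧
    ∃ k : ℕ, f =O[atReInfty] fun z ↦ z ^ k}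
  mul_mem' := by
    rintro f g ⟨hf, k, hfk⟩ ⟨hg, l, hgl⟩
    refine ⟨(hf.and hg).mono fun z h ↦ h.1.mul h.2, k + l, ?_⟩
    exact (hfk.mul hgl).congr_right fun z ↦ (pow_add z k l).symm
  add_mem' := by
    rintro f g ⟨hf, k, hfk⟩ ⟨hg, l, hgl⟩
    refine ⟨(hf.and hg).mono fun z h ↦ h.1.add h.2, max k l, ?_⟩
    exact (hfk.trans (isBigO_pow_pow_atReInfty (le_max_left k l))).add
      (hgl.trans (isBigO_pow_pow_atReInfty (le_max_right k l)))
  algebraMap_mem' c :=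
    ⟨.of_forall fun _ ↦ analyticAt_const, 0, by
      simpa only [pow_zero] using! isBigO_const_const c (one_ne_zero' ℂ) atReInfty⟩

theorem eval_mem_moderateGrowth {ι : Type*} {x : ι → ℂ → ℂ} (hx : ∀ i, x i ∈ moderateGrowth)
    (Q : MvPolynomial ι ℂ) : (fun z ↦ eval (x · z) Q) ∈ moderateGrowth := by
  induction Q using MvPolynomial.induction_on with
  | C c => simpa only [MvPolynomial.eval_C] using! moderateGrowth.algebraMap_mem c
  | add P Q hP hQ => simpa using! moderateGrowth.add_mem hP hQ
  | mul_X P i hP => simpa using! moderateGrowth.mul_mem hP (hx i)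

theorem iteratedDeriv_mem_moderateGrowth {f : ℂ → ℂ} (hf : f ∈ moderateGrowth) (n : ℕ) :
    iteratedDeriv n f ∈ moderateGrowth := by
  obtain ⟨hf, k, hfk⟩ := hf
  obtain ⟨C, hC, hbound⟩ := hfk.exists_nonneg
  refine ⟨hf.mono fun z hz ↦ analyticAt_iteratedDeriv hz n, k, ?_⟩
  have hsphere : ∀ᶠ z in atReInfty, ∀ u ∈ sphere z 1, ‖f u‖ ≤ C * (2 * ‖z‖) ^ k := by
    filter_upwards [eventually_forall_mem_closedBall hbound.bound 1, eventually_le_re 1]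
      with z hbz hz u hu
    have huz : ‖u‖ ≤ 2 * ‖z‖ := by
      linarith [norm_le_norm_add_norm_sub' u z, mem_sphere_iff_norm.1 hu, re_le_norm z]
    calc ‖f u‖ ≤ C * ‖u ^ k‖ := hbz u (sphere_subset_closedBall hu)
      _ ≤ C * (2 * ‖z‖) ^ k := by rw [norm_pow]; gcongr
  refine (isBigO_iteratedDeriv_of_norm_sphere_le hf hsphere n).trans (.of_bound (C * 2 ^ k) ?_)
  exact .of_forall fun z ↦ by simp [mul_pow, mul_assoc, abs_of_nonneg hC]

theorem isBigO_ofReal_exp_of_mem_moderateGrowth {f : ℂ → ℂ} (hf : f ∈ moderateGrowth) :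
    (fun x : ℝ ↦ f x) =O[atTop] Real.exp := by
  obtain ⟨-, k, hfk⟩ := hf
  refine (hfk.comp_tendsto tendsto_ofReal_atReInfty).trans
    (.trans ?_ (Real.isLittleO_pow_exp_atTop (n := k)).isBigO)
  exact .of_bound' (.of_forall fun x ↦ by simp)

theorem eq_zero_of_norm_le_of_superexponential_decay {E : Type*} [NormedAddCommGroup E]
    [NormedSpace ℂ E] {F : ℂ → E} {C : ℝ} (hd : ∀ z : ℂ, 0 ≤ z.re → DifferentiableAt ℂ F z)
    (hC : ∀ z : ℂ, 0 ≤ z.re → ‖F z‖ ≤ C)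
    (hdecay : SuperpolynomialDecay atTop Real.exp fun x : ℝ ↦ ‖F x‖) {z : ℂ} (hz : 0 ≤ z.re) :
    F z = 0 := by
  have hdiff : DiffContOnCl ℂ F {z | 0 < z.re} := by
    refine DifferentiableOn.diffContOnCl fun z hz ↦ (hd z ?_).differentiableWithinAt
    rwa [closure_setOfPred_lt_re] at hz
  refine PhragmenLindelof.eq_zero_on_right_half_plane_of_superexponential_decay hdiff
    ⟨1, one_lt_two, 0, .of_bound C ?_⟩ hdecay ⟨C, fun x ↦ hC _ (by simp)⟩ hz
  filter_upwards [mem_inf_of_right (mem_principal_self _)] with z hz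
  simpa using hC z (le_of_lt hz)

theorem eventuallyEq_zero_of_superexponential_decay {f : ℂ → ℂ} (hf : f ∈ moderateGrowth)
    (hdecay : SuperpolynomialDecay atTop Real.exp fun x : ℝ ↦ ‖f x‖) : f =ᶠ[atReInfty] 0 := by
  obtain ⟨han, k, hfk⟩ := hf
  obtain ⟨C, hC⟩ := hfk.bound
  obtain ⟨b, hb⟩ := atReInfty_hasBasis.eventually_iff.1 (han.and (hC.and (eventually_le_re 1)))
  replace hb : ∀ z : ℂ, 0 ≤ z.re →
      AnalyticAt ℂ f (z + b) ∧ ‖f (z + b)‖ ≤ C * ‖(z + b) ^ k‖ ∧ 1 ≤ (z + b).re :=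
    fun z hz ↦ hb.2 (by simpa using hz)
  have hone (z : ℂ) (hz : 0 ≤ z.re) : 1 ≤ ‖(z + b) ^ k‖ :=
    norm_pow (z + b) k ▸ one_le_pow₀ ((hb z hz).2.2.trans (re_le_norm _))
  have hne (z : ℂ) (hz : 0 ≤ z.re) : (z + b) ^ k ≠ 0 :=
    norm_pos_iff.1 (one_pos.trans_le (hone z hz))
  let F : ℂ → ℂ := fun z ↦ f (z + b) / (z + b) ^ k
  have hFdiff (z : ℂ) (hz : 0 ≤ z.re) : DifferentiableAt ℂ F z :=
    .div ((hb z hz).1.differentiableAt.comp z (by fun_prop)) (by fun_prop) (hne z hz)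
  have hFbound (z : ℂ) (hz : 0 ≤ z.re) : ‖F z‖ ≤ C := by
    rw [norm_div, div_le_iff₀ (one_pos.trans_le (hone z hz))]
    exact (hb z hz).2.1
  have hFdecay : SuperpolynomialDecay atTop Real.exp fun x : ℝ ↦ ‖F x‖ := fun n ↦ by
    have hb0 : 0 ≤ b := by simpa using zero_le_one.trans (hb 0 le_rfl).2.2
    refine squeeze_zero' (.of_forall fun x ↦ by positivity) ?_
      ((hdecay n).comp (tendsto_atTop_add_const_right atTop b tendsto_id))
    filter_upwards [eventually_ge_atTop 0] with x hx
    have hFx : ‖F x‖ ≤ ‖f (x + b)‖ := by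
      rw [norm_div]
      exact div_le_self (norm_nonneg _) (hone x (by simpa using hx))
    simp only [Function.comp_apply, id, ofReal_add]
    gcongr
    linarith
  filter_upwards [eventually_le_re b] with z hz
  have hzb : 0 ≤ (z - b).re := by simpa using hz
  have hFz := eq_zero_of_norm_le_of_superexponential_decay hFdiff hFbound hFdecay hzb
  have hfz : f (z - b + b) = 0 := (div_eq_zero_iff.1 hFz).resolve_right (hne _ hzb)
  rwa [sub_add_cancel] at hfz

/-! ### Polynomial relations over the functions of moderate growth -/

theorem eval_pow_mul_of_isWeightedHomogeneous {ι R : Type*} [CommSemiring R] {w : ι → ℕ}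
    {Q : MvPolynomial ι R} {p : ℕ} (hQ : MvPolynomial.IsWeightedHomogeneous w Q p) (g : R)
    (x : ι → R) :
    eval (fun i ↦ g ^ w i * x i) Q = eval x Q * g ^ p := by
  simp only [MvPolynomial.eval_eq, Finset.sum_mul, mul_pow, Finset.prod_mul_distrib, ← pow_mul]
  refine Finset.sum_congr rfl fun d hd ↦ ?_
  have hweight : ∑ i ∈ d.support, w i * d i = p := by
    simpa [Finsupp.weight_apply, Finsupp.sum, mul_comm] using hQ (MvPolynomial.mem_support_iff.1 hd)
  rw [Finset.prod_pow_eq_pow_sum, hweight]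
  ring

/-- `G` outgrows every `exp (n x)` along the positive real axis, which makes it transcendental
over the functions of moderate growth. -/
def SuperexponentialOnReals (G : ℂ → ℂ) : Prop :=
  ∀ n : ℕ, (fun x : ℝ ↦ Real.exp x ^ n) =o[atTop] fun x : ℝ ↦ G x

theorem SuperexponentialOnReals.eventually_one_le_norm {G : ℂ → ℂ}
    (hG : SuperexponentialOnReals G) : ∀ᶠ x : ℝ in atTop, 1 ≤ ‖G x‖ := by
  simpa using (hG 0).def one_pos

theorem isLittleO_exp_pow_smul_mul_pow {G : ℂ → ℂ} (hG : SuperexponentialOnReals G)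
    {f : ℂ → ℂ} (hf : f ∈ moderateGrowth) {q N : ℕ}
    (hq : q < N) (n : ℕ) :
    (fun x : ℝ ↦ Real.exp x ^ n • (f x * G x ^ q)) =o[atTop] fun x : ℝ ↦ G x ^ N := by
  have hfG : (fun x : ℝ ↦ Real.exp x ^ n • f x) =o[atTop] fun x : ℝ ↦ G x :=
    ((isBigO_refl (fun x ↦ Real.exp x ^ n) _).smul
      (isBigO_ofReal_exp_of_mem_moderateGrowth hf)).trans_isLittleO (hG (n + 1))
  have hpow : (fun x : ℝ ↦ G x * G x ^ q) =O[atTop] fun x : ℝ ↦ G x ^ N := by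
    refine .of_bound' ?_
    filter_upwards [hG.eventually_one_le_norm] with x hx
    rw [← pow_succ', norm_pow, norm_pow]
    exact pow_le_pow_right₀ hx hq
  exact ((hfG.mul_isBigO (isBigO_refl (fun x : ℝ ↦ G x ^ q) _)).trans_isBigO hpow).congr_left
    fun x ↦ smul_mul_assoc _ _ _

theorem leadingCoeff_eventuallyEq_zero {G : ℂ → ℂ} (hG : SuperexponentialOnReals G)
    {A : ℕ → ℂ → ℂ} {s : Finset ℕ}
    (hA : ∀ q ∈ s, A q ∈ moderateGrowth) {N : ℕ} (hN : A N ∈ moderateGrowth)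
    (hs : ∀ q ∈ s, q < N)
    (h : ∀ᶠ z in atReInfty, A N z * G z ^ N + ∑ q ∈ s, A q z * G z ^ q = 0) :
    A N =ᶠ[atReInfty] 0 := by
  refine eventuallyEq_zero_of_superexponential_decay hN fun n ↦ ?_
  have hlead : (fun x : ℝ ↦ Real.exp x ^ n • A N x * G x ^ N) =o[atTop] fun x : ℝ ↦ G x ^ N := by
    refine (IsLittleO.sum fun q hq ↦
      isLittleO_exp_pow_smul_mul_pow hG (hA q hq) (hs q hq) n).neg_left.congr' ?_ .rfl
    filter_upwards [tendsto_ofReal_atReInfty.eventually h] with x hx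
    rw [smul_mul_assoc, eq_neg_of_add_eq_zero_left hx, smul_neg, Finset.smul_sum, Finset.sum_apply]
  have hGne : ∀ᶠ x : ℝ in atTop, G x ^ N ≠ 0 := hG.eventually_one_le_norm.mono fun x hx ↦
    pow_ne_zero N (norm_pos_iff.1 (one_pos.trans_le hx))
  have hone : (fun x : ℝ ↦ Real.exp x ^ n • A N x) =o[atTop] fun _ ↦ (1 : ℂ) :=
    ((isLittleO_mul_iff_isLittleO_div hGne).1 (hlead.congr_left fun x ↦ mul_comm _ _)).congr' .rfl
      (hGne.mono fun x ↦ div_self)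
  simpa [norm_smul] using! ((isLittleO_one_iff ℂ).1 hone).norm

theorem eventuallyEq_zero_of_sum_mul_pow_eq_zero {G : ℂ → ℂ}
    (hG : SuperexponentialOnReals G) {A : ℕ → ℂ → ℂ} {s : Finset ℕ}
    (hA : ∀ p ∈ s, A p ∈ moderateGrowth)
    (h : ∀ᶠ z in atReInfty, ∑ p ∈ s, A p z * G z ^ p = 0) :
    ∀ p ∈ s, A p =ᶠ[atReInfty] 0 := by
  induction s using Finset.induction_on_max with
  | empty => simp
  | insert N s hs ih =>
    rw [Finset.forall_mem_insert] at hA ⊢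
    simp only [Finset.sum_insert fun hN ↦ (hs N hN).false] at h
    have hN := leadingCoeff_eventuallyEq_zero hG hA.2 hA.1 hs h
    refine ⟨hN, ih hA.2 ?_⟩
    filter_upwards [h, hN] with z hz hNz
    simpa [hNz] using hz

theorem eventually_eval_weightedHomogeneousComponent_eq_zero {G : ℂ → ℂ}
    (hG : SuperexponentialOnReals G) {ι : Type*} {w : ι → ℕ} {x : ι → ℂ → ℂ}
    (hx : ∀ i, x i ∈ moderateGrowth) {P : MvPolynomial ι ℂ}
    (h : ∀ᶠ z in atReInfty, eval (fun i ↦ G z ^ w i * x i z) P = 0) (p : ℕ) :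
    ∀ᶠ z in atReInfty, eval (fun i ↦ G z ^ w i * x i z)
      (weightedHomogeneousComponent w p P) = 0 := by
  let c (p : ℕ) : MvPolynomial ι ℂ := weightedHomogeneousComponent w p P
  change ∀ᶠ z in atReInfty, eval (fun i ↦ G z ^ w i * x i z) (c p) = 0
  have hscale (p : ℕ) (z : ℂ) : eval (fun i ↦ G z ^ w i * x i z) (c p) =
      eval (x · z) (c p) * G z ^ p :=
    eval_pow_mul_of_isWeightedHomogeneous
      (MvPolynomial.weightedHomogeneousComponent_isWeightedHomogeneous p P) _ _
  have hfinite : (Function.support c).Finite :=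
    MvPolynomial.weightedHomogeneousComponent_finsupp P
  have hsum : ∑ p ∈ hfinite.toFinset, c p = P := by
    rw [← finsum_eq_sum_of_support_subset c (by simp)]
    exact MvPolynomial.sum_weightedHomogeneousComponent w P
  by_cases hp : c p = 0
  · simp [hp]
  have hzero := eventuallyEq_zero_of_sum_mul_pow_eq_zero hG
    (A := fun p z ↦ eval (x · z) (c p)) (s := hfinite.toFinset)
    (fun p _ ↦ eval_mem_moderateGrowth hx (c p)) ?_ p (by simpa using! hp)
  · filter_upwards [hzero] with z hz
    rw [hscale, hz, Pi.zero_apply, zero_mul]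
  · filter_upwards [h] with z hz
    simpa only [← hscale, ← map_sum, hsum] using hz

/-! ### The common domain of `ζ` and `Γ` -/

/-- The set of complex numbers at which both `ζ` and `Γ` are analytic: the pole `1` of `ζ` and the
poles `0, -1, -2, …` of `Γ` are removed. -/
def zetaGammaDomain : Set ℂ := {z | z ≠ 1 ∧ ∀ k : ℕ, z ≠ -k}

theorem isPreconnected_zetaGammaDomain : IsPreconnected zetaGammaDomain := by
  have hcompl : zetaGammaDomain = ({1} ∪ Set.range fun k : ℕ ↦ (-k : ℂ))ᶜ := by
    ext z
    simp [zetaGammaDomain, eq_comm]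
  rw [hcompl]
  have hcountable := (Set.countable_singleton (1 : ℂ)).union (Set.countable_range fun k : ℕ ↦ -↑k)
  exact (hcountable.isConnected_compl_of_one_lt_rank (by simp)).isPreconnected

theorem eventually_mem_zetaGammaDomain : ∀ᶠ z in atReInfty, z ∈ zetaGammaDomain := by
  filter_upwards [eventually_le_re 2] with z hz
  refine ⟨?_, fun k ↦ ?_⟩ <;> rintro rfl
  · norm_num at hz
  · simp only [neg_re, natCast_re] at hz
    linarith [k.cast_nonneg (α := ℝ)]

theorem analyticAt_riemannZeta {z : ℂ} (hz : z ≠ 1) : AnalyticAt ℂ riemannZeta z :=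
  analyticAt_iff_eventually_differentiableAt.2 <|
    (eventually_ne_nhds hz).mono fun _ ↦ differentiableAt_riemannZeta

theorem analyticAt_Gamma {z : ℂ} (hz : ∀ k : ℕ, z ≠ -k) : AnalyticAt ℂ Gamma z := by
  simpa using! (differentiable_one_div_Gamma.analyticAt z).fun_inv (inv_ne_zero (Gamma_ne_zero hz))

/-! ### Growth of `ζ` and `Γ` -/

theorem riemannZeta_mem_moderateGrowth : riemannZeta ∈ moderateGrowth := by
  have hsummable : Summable fun j : ℕ ↦ 1 / ((j : ℝ) + 1) ^ 2 := by
    simpa using (summable_nat_add_iff 1).2 (Real.summable_one_div_nat_pow.2 one_lt_two)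
  refine ⟨?_, 0, .of_bound (∑' j : ℕ, 1 / ((j : ℝ) + 1) ^ 2) ?_⟩
  · exact eventually_mem_zetaGammaDomain.mono fun z hz ↦ analyticAt_riemannZeta hz.1
  · filter_upwards [eventually_le_re 2] with z hz
    rw [zeta_eq_tsum_one_div_nat_add_one_cpow (by linarith), pow_zero, norm_one, mul_one]
    refine tsum_of_norm_bounded hsummable.hasSum fun j ↦ ?_
    rw [norm_div, norm_one, ← Nat.cast_add_one, norm_natCast_cpow_of_pos j.succ_pos,
      Nat.cast_add_one, ← Real.rpow_natCast]
    gcongr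
    · simp
    · exact_mod_cast hz

theorem exp_neg_mul_rpow_le_Gamma {R x : ℝ} (hR : 0 < R) (hx : 1 ≤ x) :
    Real.exp (-R) * R ^ (x - 1) ≤ Real.Gamma x := by
  have hint := Real.GammaIntegral_convergent (one_pos.trans_le hx)
  calc Real.exp (-R) * R ^ (x - 1) = ∫ t in Set.Ioi R, Real.exp (-t) * R ^ (x - 1) := by
        rw [integral_mul_const, integral_exp_neg_Ioi]
    _ ≤ ∫ t in Set.Ioi R, Real.exp (-t) * t ^ (x - 1) := by
        refine setIntegral_mono_on ((integrableOn_exp_neg_Ioi R).mul_const _)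
          (hint.mono_set (Set.Ioi_subset_Ioi hR.le)) measurableSet_Ioi fun t ht ↦ ?_
        have hRt : R ≤ t := le_of_lt ht
        gcongr
    _ ≤ ∫ t in Set.Ioi 0, Real.exp (-t) * t ^ (x - 1) := by
        refine setIntegral_mono_set hint ?_ (Set.Ioi_subset_Ioi hR.le).eventuallyLE
        filter_upwards [ae_restrict_mem measurableSet_Ioi] with t ht
        exact mul_nonneg (Real.exp_nonneg _) (Real.rpow_nonneg (le_of_lt ht) _)
    _ = Real.Gamma x := (Real.Gamma_eq_integral (one_pos.trans_le hx)).symm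

theorem exp_pow_isLittleO_Gamma (n : ℕ) :
    (fun x : ℝ ↦ Real.exp x ^ n) =o[atTop] Real.Gamma := by
  have hlt : (fun x : ℝ ↦ Real.exp x ^ n) =o[atTop] fun x ↦ Real.exp x ^ (n + 1) :=
    (isLittleO_pow_pow_atTop_of_lt n.lt_succ_self).comp_tendsto Real.tendsto_exp_atTop
  refine hlt.trans_isBigO (.of_bound (Real.exp (n + 1) * Real.exp (Real.exp (n + 1))) ?_)
  filter_upwards [eventually_ge_atTop 1] with x hx
  have hexp : Real.exp (n + 1) ^ (x - 1) = Real.exp x ^ (n + 1) / Real.exp (n + 1) := by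
    rw [← Real.exp_mul, ← Real.exp_nat_mul, ← Real.exp_sub]
    push_cast
    ring_nf
  -- `R = exp (n + 1)` turns `R ^ x` into `exp x ^ (n + 1)`.
  have hΓ := exp_neg_mul_rpow_le_Gamma (Real.exp_pos (n + 1)) hx
  rw [hexp, Real.exp_neg] at hΓ
  rw [Real.norm_of_nonneg (by positivity)]
  refine .trans (le_of_eq ?_)
    (mul_le_mul_of_nonneg_left (hΓ.trans (Real.le_norm_self _)) (by positivity))
  field_simp

theorem superexponentialOnReals_Gamma : SuperexponentialOnReals Gamma := fun n ↦ by
  simpa only [Gamma_ofReal, isLittleO_ofReal_right] using exp_pow_isLittleO_Gamma n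

theorem norm_betaIntegral_le_one {u v : ℂ} (hu : 1 ≤ u.re) (hv : 1 ≤ v.re) :
    ‖betaIntegral u v‖ ≤ 1 := by
  have hpow {t : ℝ} (ht : t ∈ Set.Icc 0 1) {w : ℂ} (hw : 1 ≤ w.re) :
      ‖(t : ℂ) ^ (w - 1)‖ ≤ 1 := by
    rcases ht.1.eq_or_lt with rfl | ht0
    · by_cases hw1 : w - 1 = 0 <;> simp [hw1]
    · rw [norm_cpow_eq_rpow_re_of_pos ht0]
      exact Real.rpow_le_one ht.1 ht.2 (by simpa using hw)
  have hbound : ∀ t ∈ Set.uIoc (0 : ℝ) 1, ‖(t : ℂ) ^ (u - 1) * (1 - (t : ℂ)) ^ (v - 1)‖ ≤ 1 := by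
    intro t ht
    rw [Set.uIoc_of_le zero_le_one] at ht
    rw [norm_mul, ← ofReal_one, ← ofReal_sub, ofReal_one]
    exact mul_le_one₀ (hpow ⟨ht.1.le, ht.2⟩ hu) (norm_nonneg _)
      (hpow ⟨sub_nonneg.2 ht.2, sub_le_self _ ht.1.le⟩ hv)
  simpa using! intervalIntegral.norm_integral_le_of_norm_le_const hbound

theorem norm_Gamma_mul_Gamma_le {u v : ℂ} (hu : 1 ≤ u.re) (hv : 1 ≤ v.re) :
    ‖Gamma u * Gamma v‖ ≤ ‖Gamma (u + v)‖ := by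
  rw [Gamma_mul_Gamma_eq_betaIntegral (by linarith) (by linarith), norm_mul]
  exact mul_le_of_le_one_right (norm_nonneg _) (norm_betaIntegral_le_one hu hv)

theorem exists_norm_Gamma_le_of_mem_closedBall : ∃ M : ℝ, ∀ z : ℂ, 2 ≤ z.re →
    ∀ u ∈ closedBall z 1, ‖Gamma u‖ ≤ M * ‖z ^ 2 * Gamma z‖ := by
  obtain ⟨M, hM⟩ := (isCompact_closedBall (2 : ℂ) 1).exists_bound_of_continuousOn
    differentiable_one_div_Gamma.continuous.continuousOn
  -- `Γ u * Γ (z + 2 - u) = B (u, z + 2 - u) * Γ (z + 2)`, and `z + 2 - u` stays in a fixed disc.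
  refine ⟨2 * M, fun z hz u hu ↦ ?_⟩
  have hre : |(u - z).re| ≤ 1 := (abs_re_le_norm _).trans (mem_closedBall_iff_norm.1 hu)
  rw [sub_re, abs_le] at hre
  have hv : z + 2 - u ∈ closedBall (2 : ℂ) 1 := by
    rw [mem_closedBall_iff_norm'] at hu
    rw [mem_closedBall_iff_norm]
    simpa [add_sub_right_comm] using hu
  have hM0 : 0 ≤ M := (norm_nonneg _).trans (hM _ hv)
  have hv_re : 1 ≤ (z + 2 - u).re := by rw [sub_re, add_re, re_ofNat]; linarith
  have hz0 : z ≠ 0 := by rintro rfl; norm_num at hz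
  have hz1 : z + 1 ≠ 0 := by
    intro h
    linarith [show z.re + 1 = 0 by simpa using congrArg re h]
  have hshift : Gamma (z + 2) = z * (z + 1) * Gamma z := by
    rw [show z + 2 = z + 1 + 1 by ring, Gamma_add_one _ hz1, Gamma_add_one _ hz0]
    ring
  calc ‖Gamma u‖ = ‖(Gamma (z + 2 - u))⁻¹‖ * ‖Gamma u * Gamma (z + 2 - u)‖ := by
        rw [← norm_mul]
        congr 1
        field_simp [Gamma_ne_zero_of_re_pos (one_pos.trans_le hv_re)]
    _ ≤ M * ‖z * (z + 1) * Gamma z‖ := by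
      have hmul := norm_Gamma_mul_Gamma_le (u := u) (by linarith) hv_re
      rw [add_sub_cancel, hshift] at hmul
      gcongr
      exact hM _ hv
    _ ≤ M * (‖z‖ * (2 * ‖z‖) * ‖Gamma z‖) := by
      have hadd : ‖z + 1‖ ≤ 2 * ‖z‖ := by
        linarith [norm_add_le z 1, norm_one (α := ℂ), re_le_norm z]
      rw [norm_mul, norm_mul]
      gcongr
    _ = 2 * M * ‖z ^ 2 * Gamma z‖ := by rw [norm_mul, norm_pow]; ring

theorem isBigO_iteratedDeriv_Gamma (k : ℕ) :
    iteratedDeriv k Gamma =O[atReInfty] fun z ↦ z ^ 2 * Gamma z := by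
  obtain ⟨M, hM⟩ := exists_norm_Gamma_le_of_mem_closedBall
  refine (isBigO_iteratedDeriv_of_norm_sphere_le
    (eventually_mem_zetaGammaDomain.mono fun _ hz ↦ analyticAt_Gamma hz.2)
    ((eventually_le_re 2).mono fun z hz u hu ↦ hM z hz u (sphere_subset_closedBall hu)) k).trans ?_
  exact (isBigO_refl _ _).norm_left.const_mul_left M

theorem iteratedDeriv_Gamma_div_Gamma_mem_moderateGrowth (k : ℕ) :
    (fun z ↦ iteratedDeriv k Gamma z / Gamma z) ∈ moderateGrowth := by
  refine ⟨?_, 2, ?_⟩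
  · filter_upwards [eventually_mem_zetaGammaDomain] with z hz
    have hΓ := analyticAt_Gamma hz.2
    exact (analyticAt_iteratedDeriv hΓ k).div hΓ (Gamma_ne_zero hz.2)
  · refine ((isBigO_iteratedDeriv_Gamma k).mul (isBigO_refl (fun z ↦ (Gamma z)⁻¹) _)).congr' ?_ ?_
    · simp only [div_eq_mul_inv, EventuallyEq.rfl]
    · filter_upwards [eventually_mem_zetaGammaDomain] with z hz
      exact mul_inv_cancel_right₀ (Gamma_ne_zero hz.2) _

/-! ### Relations between `ζ` and `Γ` -/

/-- The point `(ζ^{(a i)}(z), Γ^{(b j)}(z))`, for families `a` and `b` of orders of derivatives. -/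
noncomputable def zetaGammaDerivs {σ τ : Type*} (a : σ → ℕ) (b : τ → ℕ) (z : ℂ) : σ ⊕ τ → ℂ :=
  Sum.elim (fun i ↦ iteratedDeriv (a i) riemannZeta z) (fun j ↦ iteratedDeriv (b j) Gamma z)

theorem analyticOnNhd_zetaGammaDerivs {σ τ : Type*} (a : σ → ℕ) (b : τ → ℕ) (i : σ ⊕ τ) :
    AnalyticOnNhd ℂ (zetaGammaDerivs a b · i) zetaGammaDomain := by
  rcases i with i | j
  · exact fun z hz ↦ analyticAt_iteratedDeriv (analyticAt_riemannZeta hz.1) (a i)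
  · exact fun z hz ↦ analyticAt_iteratedDeriv (analyticAt_Gamma hz.2) (b j)

theorem exists_zetaGammaDerivs_eq_Gamma_pow_mul {σ τ : Type*} (a : σ → ℕ) (b : τ → ℕ) :
    ∃ x : σ ⊕ τ → ℂ → ℂ, (∀ i, x i ∈ moderateGrowth) ∧ ∀ᶠ z in atReInfty,
      zetaGammaDerivs a b z = fun i ↦ Gamma z ^ Sum.elim (fun _ ↦ 0) (fun _ ↦ 1) i * x i z := by
  refine ⟨Sum.elim (fun i ↦ iteratedDeriv (a i) riemannZeta)
    (fun j z ↦ iteratedDeriv (b j) Gamma z / Gamma z), ?_, ?_⟩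
  · rintro (i | j)
    · exact iteratedDeriv_mem_moderateGrowth riemannZeta_mem_moderateGrowth (a i)
    · exact iteratedDeriv_Gamma_div_Gamma_mem_moderateGrowth (b j)
  · filter_upwards [eventually_mem_zetaGammaDomain] with z hz
    ext (i | j) <;> simp [zetaGammaDerivs, mul_div_cancel₀, Gamma_ne_zero hz.2]

theorem homogeneous_components_vanish_general {σ τ : Type*} (a : σ → ℕ) (b : τ → ℕ)
    (P : MvPolynomial (σ ⊕ τ) ℂ)
    (hP : ∀ z ∈ zetaGammaDomain, eval (zetaGammaDerivs a b z) P = 0) (p : ℕ) :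
    ∀ z ∈ zetaGammaDomain, eval (zetaGammaDerivs a b z)
      (weightedHomogeneousComponent (Sum.elim (fun _ ↦ 0) (fun _ ↦ 1)) p P) = 0 := by
  obtain ⟨x, hx, hvx⟩ := exists_zetaGammaDerivs_eq_Gamma_pow_mul a b
  refine eqOn_zero_of_eventuallyEq_zero_atReInfty
    (analyticOnNhd_eval (analyticOnNhd_zetaGammaDerivs a b) _)
    isPreconnected_zetaGammaDomain eventually_mem_zetaGammaDomain ?_
  have hPx : ∀ᶠ z in atReInfty,
      eval (fun i ↦ Gamma z ^ Sum.elim (fun _ ↦ 0) (fun _ ↦ 1) i * x i z) P = 0 := by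
    filter_upwards [hvx, eventually_mem_zetaGammaDomain] with z hz hzD
    exact hz ▸ hP z hzD
  filter_upwards [hvx, eventually_eval_weightedHomogeneousComponent_eq_zero
    superexponentialOnReals_Gamma hx hPx p] with z hz hzero
  rwa [hz]

/-- **Claim 2.1.** If a polynomial `P(u₀,…,u_m; v₀,v₁,v₂)` with constant complex
coefficients satisfies `P(ζ,…,ζ^{(m)}; Γ, Γ^{(n)}, Γ^{(ℓn)}) ≡ 0` on the domain of
analyticity, then so does each component `P_p` of `P` that is homogeneous of total
degree `p` in the variables `(v₀,v₁,v₂)`. -/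
theorem homogeneous_components_vanish (ℓ m n : ℕ) (hℓ : 2 ≤ ℓ) (hn : 1 ≤ n)
    (P : MvPolynomial (Fin (m + 1) ⊕ Fin 3) ℂ)
    (hP : ∀ z : ℂ, z ≠ 1 → (∀ k : ℕ, z ≠ -(k : ℂ)) →
      MvPolynomial.eval
        (Sum.elim (fun i : Fin (m + 1) => iteratedDeriv (i : ℕ) riemannZeta z)
          (fun j : Fin 3 => iteratedDeriv (![0, n, ℓ * n] j) Complex.Gamma z)) P = 0) :
    ∀ p : ℕ, ∀ z : ℂ, z ≠ 1 → (∀ k : ℕ, z ≠ -(k : ℂ)) →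
      MvPolynomial.eval
        (Sum.elim (fun i : Fin (m + 1) => iteratedDeriv (i : ℕ) riemannZeta z)
          (fun j : Fin 3 => iteratedDeriv (![0, n, ℓ * n] j) Complex.Gamma z))
        (MvPolynomial.weightedHomogeneousComponent
          (Sum.elim (fun _ : Fin (m + 1) => (0 : ℕ)) (fun _ : Fin 3 => (1 : ℕ))) p P) = 0 :=
  fun p z hz hzk ↦ homogeneous_components_vanish_general (fun i : Fin (m + 1) ↦ (i : ℕ)) _ P
    (fun z hz ↦ hP z hz.1 hz.2) p z ⟨hz, hzk⟩
end
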